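/- Let N > 4 and 0 < m ≤ (N-4)/(N-2). Fix k > 0 and let B = B_k be the Barenblatt solution with extinction time T. Let u be a solution of the fast diffusion equation on ℝ^N × (0,T) with initial value u₀ satisfying: u₀(x) ≤ B(x,0) for all x, and |u₀(x) - B(x,0)| ≤ f(x) for all x, where f ∈ L¹(ℝ^N) is positive and radially symmetric. Assume also that u satisfies the Aronson–Bénilan inequality ∂ₜu ≤ u/((1-m)t) on (0,T). Then the rescaled solution ũ(·,τ) converges, as τ → ∞, uniformly on ℝ^N, to the rescaled Barenblatt profile B̃_k; in particular u has the same vanishing time T as B, i.e. u(x,t) → 0 as t → T⁻ for each x. -/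

import Mathlib

/-!
The proof compares `u` with the Barenblatt solution `B` through the two differences `w = B - u` and
`v = B^m - u^m`. They satisfy `w_t = Δv`, both are nonnegative by the comparison principle
(`comparison`, proved with a barrier blowing up at the boundary of large balls), and `v` is
comparable to `w / P` with `P = B^{1-m}`: one has `m w ≤ P v ≤ w`. So `w` solves a linear diffusion
equation whose coefficient is known only up to the factor `m`.

*Mass decay.* The integral of `w` over balls is bounded, uniformly in the radius and locally
uniformly in time (`mass_step`, `mass_bound`), so `w` can be tested against decaying weights. Use
the logarithmic radius `s = log (1 + |x|² / D(t))`, where `D(t) = k (T - t)^{2γ}`, and the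
logarithmic time `ℓ` remaining until a given `t₁ < T`. The explicit weight `gf s ℓ` is a
supersolution of the dual equation for every admissible ratio `v / w`; this is where
`m ≤ (N - 4) / (N - 2)` enters, through `c_ge`. Since the weight is of order one on
`|x| ≤ R (T - t₁)^γ` at `t = t₁` and at most `(1 + ℓ)^{-1/16}` throughout, the mass of `w` in these
self-similar balls tends to zero (`weighted`, `decay`).

*Pointwise decay.* The Aronson–Bénilan inequality, together with the equation for `B`, gives
`Δv ≥ -C (T - t)^{β-1}` (`lapl_lower`). The mean value inequality for functions with Laplacian
bounded below (`mean_value`) then turns the mass decay into uniform decay of `(T - t)^{-β} w` on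
`|x| ≤ R (T - t)^γ` (`pointwise`). Outside that ball `0 < ũ ≤ B̃`, and `B̃` is small there
(`BbTil_small`), so the convergence is uniform on all of space. Finally `0 < u ≤ B ≤ C (T - t)^β`
shows that `u` vanishes at time `T`.
-/

open MeasureTheory Real Filter Topology RealInnerProductSpace

noncomputable section

abbrev Euc (N : ℕ) := EuclideanSpace ℝ (Fin N)

/-- Laplacian: trace of the second derivative. -/
def lapl {N : ℕ} (f : Euc N → ℝ) (x : Euc N) : ℝ :=
  ∑ i : Fin N, iteratedFDeriv ℝ 2 f x ![EuclideanSpace.single i 1, EuclideanSpace.single i 1]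

/-- The constant C* = 2m(N-2-mN)/(1-m). -/
def Cst (N : ℕ) (m : ℝ) : ℝ := 2 * m * ((N : ℝ) - 2 - m * N) / (1 - m)

/-- β = N/(N-2-Nm). -/
def betaC (N : ℕ) (m : ℝ) : ℝ := (N : ℝ) / ((N : ℝ) - 2 - N * m)

/-- γ = -β/N. -/
def gammaC (N : ℕ) (m : ℝ) : ℝ := -betaC N m / N

/-- Barenblatt solution with extinction time T. -/
def Bb (N : ℕ) (m T k : ℝ) (x : Euc N) (t : ℝ) : ℝ :=
  (Cst N m * (T - t) / (k * (T - t) ^ (2 * gammaC N m) + ‖x‖ ^ 2)) ^ (1 / (1 - m))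

/-- Rescaled Barenblatt profile. -/
def BbTil (N : ℕ) (m k : ℝ) (x : Euc N) : ℝ :=
  (Cst N m / (k + ‖x‖ ^ 2)) ^ (1 / (1 - m))

/-- u is a solution of the fast diffusion equation on ℝ^N × (0,T) with initial value u₀. -/
def IsFDESol (N : ℕ) (m T : ℝ) (u : Euc N → ℝ → ℝ) (u₀ : Euc N → ℝ) : Prop :=
  (∀ x : Euc N, ∀ t ∈ Set.Ioo (0:ℝ) T, 0 < u x t) ∧
  ContDiffOn ℝ (⊤ : ℕ∞) (fun p : Euc N × ℝ => u p.1 p.2) (Set.univ ×ˢ Set.Ioo (0:ℝ) T) ∧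
  ContinuousOn (fun p : Euc N × ℝ => u p.1 p.2) (Set.univ ×ˢ Set.Ico (0:ℝ) T) ∧
  (∀ x, u x 0 = u₀ x) ∧
  (∀ x : Euc N, ∀ t ∈ Set.Ioo (0:ℝ) T,
    deriv (fun s => u x s) t = lapl (fun y => u y t ^ m) x)

/-- Rescaled solution ũ(x,τ) = (T-t)^(-β) u(x (T-t)^γ, t), τ = -log(T-t). -/
def rescaleSol (N : ℕ) (m T : ℝ) (u : Euc N → ℝ → ℝ) (x : Euc N) (τ : ℝ) : ℝ :=
  Real.exp (betaC N m * τ) * u (Real.exp (-gammaC N m * τ) • x) (T - Real.exp (-τ))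

/-- f is radially symmetric. -/
def IsRadial {N : ℕ} (f : Euc N → ℝ) : Prop := ∀ x y : Euc N, ‖x‖ = ‖y‖ → f x = f y

/-! ### Radial functions and the Laplacian -/

lemma lapl_eq_laplacian {N : ℕ} (f : Euc N → ℝ) (x : Euc N) :
    lapl f x = Laplacian.laplacian f x := by
  rw [InnerProductSpace.laplacian_eq_iteratedFDeriv_orthonormalBasis f
    (EuclideanSpace.basisFun (Fin N) ℝ)]
  simp [lapl]

lemma lapl_sub {N : ℕ} {f g : Euc N → ℝ} {x : Euc N} (hf : ContDiffAt ℝ 2 f x)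
    (hg : ContDiffAt ℝ 2 g x) : lapl (fun y => f y - g y) x = lapl f x - lapl g x := by
  simp only [lapl_eq_laplacian]
  exact hf.laplacian_sub hg

/-- The Laplacian as a sum of iterated coordinate derivatives. -/
lemma lapl_eq_sum_fderiv {N : ℕ} {f : Euc N → ℝ} {x : Euc N} (hf : ContDiffAt ℝ 2 f x) :
    lapl f x = ∑ i : Fin N, fderiv ℝ (fun y => fderiv ℝ f y (EuclideanSpace.single i 1)) x
      (EuclideanSpace.single i 1) := by
  have hd : DifferentiableAt ℝ (fderiv ℝ f) x :=
    (hf.fderiv_right (m := 1) (by norm_num)).differentiableAt (by norm_num)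
  refine Finset.sum_congr rfl fun i _ => ?_
  rw [iteratedFDeriv_two_apply, fderiv_clm_apply hd (by fun_prop)]
  simp

lemma hasFDerivAt_radial {N : ℕ} {Φ : ℝ → ℝ} {a : ℝ} {x : Euc N}
    (h : HasDerivAt Φ a (‖x‖ ^ 2)) :
    HasFDerivAt (fun y : Euc N => Φ (‖y‖ ^ 2)) ((2 * a) • innerSL ℝ x) x := by
  have e : (2 * a) • innerSL ℝ x = a • ((2 : ℕ) • innerSL ℝ x) := by
    ext v; simp; ring
  rw [e]
  exact h.comp_hasFDerivAt x (hasStrictFDerivAt_norm_sq x).hasFDerivAt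

lemma eventually_normSq {N : ℕ} {x : Euc N} {p : ℝ → Prop} (h : ∀ᶠ ρ in 𝓝 (‖x‖ ^ 2), p ρ) :
    ∀ᶠ y : Euc N in 𝓝 x, p (‖y‖ ^ 2) :=
  (Continuous.tendsto (by fun_prop : Continuous fun y : Euc N => ‖y‖ ^ 2) x).eventually h

/-- First partial derivatives of a radial function. -/
lemma fderiv_radial_apply {N : ℕ} {Φ : ℝ → ℝ} {a : ℝ} {x : Euc N} (i : Fin N)
    (h : HasDerivAt Φ a (‖x‖ ^ 2)) :
    fderiv ℝ (fun y : Euc N => Φ (‖y‖ ^ 2)) x (EuclideanSpace.single i 1) = 2 * a * x i := by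
  rw [(hasFDerivAt_radial h).fderiv]
  simp [EuclideanSpace.inner_single_right]

lemma hasFDerivAt_radial_coord {N : ℕ} {Φ' : ℝ → ℝ} {b : ℝ} {x : Euc N} (i : Fin N)
    (h : HasDerivAt Φ' b (‖x‖ ^ 2)) :
    ∃ L : Euc N →L[ℝ] ℝ, HasFDerivAt (fun y : Euc N => 2 * Φ' (‖y‖ ^ 2) * y i) L x ∧
      L (EuclideanSpace.single i 1) = 4 * b * x i ^ 2 + 2 * Φ' (‖x‖ ^ 2) := by
  have h1 := hasFDerivAt_radial h
  have h2 : HasFDerivAt (fun y : Euc N => y i) (EuclideanSpace.proj i : Euc N →L[ℝ] ℝ) x :=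
    (EuclideanSpace.proj i : Euc N →L[ℝ] ℝ).hasFDerivAt
  refine ⟨_, (h1.const_mul 2).mul h2, ?_⟩
  simp [EuclideanSpace.inner_single_right]
  ring

lemma differentiableAt_fderiv_radial {N : ℕ} {Φ Φ' : ℝ → ℝ} {b : ℝ} {x : Euc N}
    (h1 : ∀ᶠ ρ in 𝓝 (‖x‖ ^ 2), HasDerivAt Φ (Φ' ρ) ρ) (h2 : HasDerivAt Φ' b (‖x‖ ^ 2)) :
    DifferentiableAt ℝ (fderiv ℝ (fun y : Euc N => Φ (‖y‖ ^ 2))) x := by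
  have he : fderiv ℝ (fun y : Euc N => Φ (‖y‖ ^ 2)) =ᶠ[𝓝 x]
      fun y => (2 * Φ' (‖y‖ ^ 2)) • innerSL ℝ y := by
    filter_upwards [eventually_normSq h1] with y hy
    exact (hasFDerivAt_radial hy).fderiv
  rw [he.differentiableAt_iff]
  have := (hasFDerivAt_radial h2).differentiableAt
  exact (this.const_mul 2).smul (innerSL ℝ).differentiableAt

/-- The Laplacian of the radial function `x ↦ Φ (|x|²)`, with first and second derivatives of `Φ`
at `|x|²` equal to `Φ' (|x|²)` and `b`. -/
lemma lapl_radial {N : ℕ} {Φ Φ' : ℝ → ℝ} {b : ℝ} {x : Euc N}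
    (h1 : ∀ᶠ ρ in 𝓝 (‖x‖ ^ 2), HasDerivAt Φ (Φ' ρ) ρ) (h2 : HasDerivAt Φ' b (‖x‖ ^ 2)) :
    lapl (fun y : Euc N => Φ (‖y‖ ^ 2)) x = 4 * ‖x‖ ^ 2 * b + 2 * N * Φ' (‖x‖ ^ 2) := by
  have hd := differentiableAt_fderiv_radial h1 h2
  have : ∀ i : Fin N, iteratedFDeriv ℝ 2 (fun y : Euc N => Φ (‖y‖ ^ 2)) x
      ![EuclideanSpace.single i 1, EuclideanSpace.single i 1]
      = 4 * b * x i ^ 2 + 2 * Φ' (‖x‖ ^ 2) := by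
    intro i
    obtain ⟨L, hL, hL'⟩ := hasFDerivAt_radial_coord i h2
    rw [iteratedFDeriv_two_apply, ← hL']
    have h3 : HasFDerivAt (fun y => fderiv ℝ (fun y : Euc N => Φ (‖y‖ ^ 2)) y
        (EuclideanSpace.single i 1)) L x := by
      refine hL.congr_of_eventuallyEq ?_
      filter_upwards [eventually_normSq h1] with y hy
      exact fderiv_radial_apply i hy
    rw [← h3.fderiv, fderiv_clm_apply hd (by fun_prop)]
    simp
  unfold lapl
  rw [Finset.sum_congr rfl fun i _ => this i, Finset.sum_add_distrib, ← Finset.mul_sum,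
    EuclideanSpace.norm_sq_eq]
  simp
  ring

/-- One-variable second-order condition at a local maximum. -/
lemma deriv_deriv_nonpos_of_isLocalMax {f : ℝ → ℝ} {a : ℝ} (h : IsLocalMax f a)
    (hc : ContinuousAt f a) : deriv (deriv f) a ≤ 0 := by
  by_contra! hpos
  have hmin := isLocalMin_of_deriv_deriv_pos hpos h.deriv_eq_zero hc
  have heq : f =ᶠ[𝓝 a] fun _ => f a := by
    filter_upwards [h, hmin] with y h1 h2 using le_antisymm h1 h2
  have h2 : deriv f =ᶠ[𝓝 a] deriv (fun _ => f a) := heq.deriv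
  rw [h2.deriv_eq] at hpos
  simp at hpos

lemma lapl_nonpos_of_isLocalMax {N : ℕ} {f : Euc N → ℝ} {x : Euc N}
    (hf : ContDiffAt ℝ 2 f x) (h : IsLocalMax f x) : lapl f x ≤ 0 := by
  rw [lapl_eq_sum_fderiv hf]
  refine Finset.sum_nonpos fun i _ => ?_
  set e : Euc N := EuclideanSpace.single i 1
  have hl : ∀ s : ℝ, HasDerivAt (fun s : ℝ => x + s • e) e s := fun s => by
    simpa using ((hasDerivAt_id s).smul_const e).const_add x
  have hcont : Continuous fun s : ℝ => x + s • e := by fun_prop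
  have ht : Tendsto (fun s : ℝ => x + s • e) (𝓝 0) (𝓝 x) := by
    simpa using hcont.tendsto 0
  have hd1 : ∀ᶠ y in 𝓝 x, DifferentiableAt ℝ f y := by
    filter_upwards [hf.eventually (by simp)] with y hy using hy.differentiableAt (by norm_num)
  have hd : DifferentiableAt ℝ (fderiv ℝ f) x :=
    (hf.fderiv_right (m := 1) (by norm_num)).differentiableAt (by norm_num)
  have hd2 : DifferentiableAt ℝ (fun y => fderiv ℝ f y e) x := hd.clm_apply (by fun_prop)
  have e1 : deriv (fun s : ℝ => f (x + s • e)) =ᶠ[𝓝 0] fun s => fderiv ℝ f (x + s • e) e := by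
    filter_upwards [ht.eventually hd1] with s hs
    exact (hs.hasFDerivAt.comp_hasDerivAt s (hl s)).deriv
  have e2 : deriv (fun s : ℝ => fderiv ℝ f (x + s • e) e) 0
      = fderiv ℝ (fun y => fderiv ℝ f y e) x e := by
    have hd2' : HasFDerivAt (fun y => fderiv ℝ f y e) (fderiv ℝ (fun y => fderiv ℝ f y e) x)
      (x + (0 : ℝ) • e) := by simpa using hd2.hasFDerivAt
    exact (hd2'.comp_hasDerivAt 0 (hl 0)).deriv
  rw [← e2, ← e1.deriv_eq]
  refine deriv_deriv_nonpos_of_isLocalMax ?_ ?_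
  · have := ht.eventually h
    simpa [IsLocalMax, IsMaxFilter] using this
  · have h1 : ContinuousAt f (x + (0 : ℝ) • e) := by simpa using hf.continuousAt
    exact ContinuousAt.comp h1 hcont.continuousAt

lemma deriv_nonneg_of_left_le {f : ℝ → ℝ} {a d : ℝ} (hf : HasDerivAt f d a)
    (h : ∀ᶠ s in 𝓝[<] a, f s ≤ f a) : 0 ≤ d := by
  have h1 : Tendsto (slope f a) (𝓝[<] a) (𝓝 d) :=
    (hasDerivAt_iff_tendsto_slope.1 hf).mono_left (nhdsWithin_mono _ fun x hx => ne_of_lt hx)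
  refine ge_of_tendsto h1 ?_
  filter_upwards [h, self_mem_nhdsWithin] with s hs hs'
  rw [slope_def_field]
  exact div_nonneg_of_nonpos (by linarith) (by simpa using le_of_lt hs')

/-- A profile vanishing beyond `R` has vanishing derivative there. -/
lemma radial_vanish_deriv {Φ Φ' : ℝ → ℝ} {R ρ : ℝ} (hR : ∀ r > R, Φ r = 0) (hρ : R < ρ)
    (h : HasDerivAt Φ (Φ' ρ) ρ) : Φ' ρ = 0 := by
  have : Φ =ᶠ[𝓝 ρ] fun _ => 0 := by
    filter_upwards [Ioi_mem_nhds hρ] with r hr using hR r hr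
  rw [← h.deriv, this.deriv_eq]; simp

lemma hasCompactSupport_of_normSq {N : ℕ} {f : Euc N → ℝ} {R : ℝ}
    (h : ∀ x, R < ‖x‖ ^ 2 → f x = 0) : HasCompactSupport f := by
  refine HasCompactSupport.intro (isCompact_closedBall (0 : Euc N) √R) fun x hx => h x ?_
  simp only [Metric.mem_closedBall, dist_zero_right, not_le] at hx
  exact Real.lt_sq_of_sqrt_lt hx

/-- Green's second identity against a compactly supported radial function. -/
lemma green_radial {N : ℕ} {Φ Φ' Φ'' : ℝ → ℝ} {R δ : ℝ} (hδ : 0 < δ)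
    (h1 : ∀ ρ > -δ, HasDerivAt Φ (Φ' ρ) ρ) (h2 : ∀ ρ > -δ, HasDerivAt Φ' (Φ'' ρ) ρ)
    (h3 : ContinuousOn Φ'' (Set.Ioi (-δ))) (hR : ∀ ρ > R, Φ ρ = 0) (hR0 : 0 ≤ R)
    {v : Euc N → ℝ} (hv : ContDiff ℝ 2 v) :
    ∫ x : Euc N, Φ (‖x‖ ^ 2) * lapl v x =
      ∫ x : Euc N, (4 * ‖x‖ ^ 2 * Φ'' (‖x‖ ^ 2) + 2 * N * Φ' (‖x‖ ^ 2)) * v x := by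
  have hpos : ∀ x : Euc N, -δ < ‖x‖ ^ 2 := fun x => by nlinarith [sq_nonneg ‖x‖]
  have hR1 : ∀ ρ > R, Φ' ρ = 0 := fun ρ hρ => radial_vanish_deriv hR hρ (h1 ρ (by linarith))
  have hR2 : ∀ ρ > R, Φ'' ρ = 0 := fun ρ hρ => radial_vanish_deriv hR1 hρ (h2 ρ (by linarith))
  have hn : Continuous fun x : Euc N => ‖x‖ ^ 2 := by fun_prop
  have c0 : Continuous fun x : Euc N => Φ (‖x‖ ^ 2) :=
    ContinuousOn.comp_continuous (fun ρ hρ => (h1 ρ hρ).continuousAt.continuousWithinAt) hn hpos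
  have c1 : Continuous fun x : Euc N => Φ' (‖x‖ ^ 2) :=
    ContinuousOn.comp_continuous (fun ρ hρ => (h2 ρ hρ).continuousAt.continuousWithinAt) hn hpos
  have c2 : Continuous fun x : Euc N => Φ'' (‖x‖ ^ 2) := h3.comp_continuous hn hpos
  have hco : ∀ i : Fin N, Continuous fun x : Euc N => x i := fun i =>
    (EuclideanSpace.proj i : Euc N →L[ℝ] ℝ).continuous
  -- first and second directional derivatives of `v`
  have hv1 : ∀ i : Fin N, ContDiff ℝ 1
      (fun y => fderiv ℝ v y (EuclideanSpace.single i 1)) := fun i =>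
    (hv.fderiv_right (m := 1) (by norm_num)).clm_apply contDiff_const
  have hv2 : ∀ i : Fin N, Continuous (fun y => fderiv ℝ
      (fun y => fderiv ℝ v y (EuclideanSpace.single i 1)) y (EuclideanSpace.single i 1)) := fun i =>
    ((hv1 i).continuous_fderiv (by norm_num)).clm_apply continuous_const
  have hvc := hv.continuous
  -- integrability of continuous functions with compact support
  have hint : ∀ f : Euc N → ℝ, Continuous f → (∀ x, R < ‖x‖ ^ 2 → f x = 0) →
      Integrable f volume := fun f hf h =>
    hf.integrable_of_hasCompactSupport (hasCompactSupport_of_normSq h)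
  have key : ∀ i : Fin N, ∫ x : Euc N, Φ (‖x‖ ^ 2) * fderiv ℝ
      (fun y => fderiv ℝ v y (EuclideanSpace.single i 1)) x (EuclideanSpace.single i 1)
      = ∫ x : Euc N, (4 * Φ'' (‖x‖ ^ 2) * x i ^ 2 + 2 * Φ' (‖x‖ ^ 2)) * v x := by
    intro i
    have f1 : ∀ x : Euc N, fderiv ℝ (fun y : Euc N => Φ (‖y‖ ^ 2)) x (EuclideanSpace.single i 1)
        = 2 * Φ' (‖x‖ ^ 2) * x i := fun x => fderiv_radial_apply i (h1 _ (hpos x))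
    have f2 : ∀ x : Euc N, fderiv ℝ (fun y : Euc N => 2 * Φ' (‖y‖ ^ 2) * y i) x
        (EuclideanSpace.single i 1) = 4 * Φ'' (‖x‖ ^ 2) * x i ^ 2 + 2 * Φ' (‖x‖ ^ 2) := fun x => by
      obtain ⟨L, hL, hL'⟩ := hasFDerivAt_radial_coord i (h2 _ (hpos x))
      rw [hL.fderiv, hL']
    have d2 : ∀ x : Euc N, DifferentiableAt ℝ (fun y : Euc N => 2 * Φ' (‖y‖ ^ 2) * y i) x :=
      fun x => by
        obtain ⟨L, hL, hL'⟩ := hasFDerivAt_radial_coord i (h2 _ (hpos x))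
        exact hL.differentiableAt
    have hc1 := (hv1 i).continuous
    have hc2 := hv2 i
    have hci := hco i
    rw [integral_mul_fderiv_eq_neg_fderiv_mul_of_integrable (μ := volume)]
    · simp_rw [f1]
      rw [integral_mul_fderiv_eq_neg_fderiv_mul_of_integrable (μ := volume)]
      · simp_rw [f2]; simp
      · simp_rw [f2]
        exact hint _ ((((continuous_const.mul c2).mul (hci.pow 2)).add (continuous_const.mul c1)).mul hvc) fun x hx => by simp [hR1 _ hx, hR2 _ hx]
      · exact hint _ (((continuous_const.mul c1).mul hci).mul hc1) fun x hx => by simp [hR1 _ hx]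
      · exact hint _ (((continuous_const.mul c1).mul hci).mul hvc) fun x hx => by simp [hR1 _ hx]
      · exact fun x _ => d2 x
      · exact fun x _ => hv.differentiable (by norm_num) x
    · simp_rw [f1]
      exact hint _ (((continuous_const.mul c1).mul hci).mul hc1) fun x hx => by simp [hR1 _ hx]
    · exact hint _ (c0.mul hc2) fun x hx => by simp [hR _ hx]
    · exact hint _ (c0.mul hc1) fun x hx => by simp [hR _ hx]
    · exact fun x _ => (hasFDerivAt_radial (h1 _ (hpos x))).differentiableAt
    · exact fun x _ => (hv1 i).differentiable (by norm_num) x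
  calc ∫ x : Euc N, Φ (‖x‖ ^ 2) * lapl v x
      = ∫ x : Euc N, ∑ i : Fin N, Φ (‖x‖ ^ 2) * fderiv ℝ
        (fun y => fderiv ℝ v y (EuclideanSpace.single i 1)) x (EuclideanSpace.single i 1) := by
        congr 1; ext x; rw [lapl_eq_sum_fderiv hv.contDiffAt, Finset.mul_sum]
    _ = ∑ i : Fin N, ∫ x : Euc N, (4 * Φ'' (‖x‖ ^ 2) * x i ^ 2 + 2 * Φ' (‖x‖ ^ 2)) * v x := by
        rw [integral_finsetSum]
        · exact Finset.sum_congr rfl fun i _ => key i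
        · intro i _
          have hc2 := hv2 i
          exact hint _ (c0.mul hc2) fun x hx => by simp [hR _ hx]
    _ = _ := by
        rw [← integral_finsetSum]
        · congr 1; ext x
          rw [← Finset.sum_mul, Finset.sum_add_distrib, ← Finset.mul_sum,
            EuclideanSpace.norm_sq_eq]
          simp only [Real.norm_eq_abs, sq_abs, Finset.sum_const, Finset.card_univ,
            Fintype.card_fin, nsmul_eq_mul]
          ring
        · intro i _
          have hci := hco i
          exact hint _ ((((continuous_const.mul c2).mul (hci.pow 2)).add (continuous_const.mul c1)).mul hvc) fun x hx => by simp [hR1 _ hx, hR2 _ hx]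

/-! ### Integral derivatives, cutoffs and the mean value inequality -/

/-- Differentiation under the integral sign for integrands supported in a fixed compact set. -/
lemma hasDerivAt_integral_compact {N : ℕ} {F F' : ℝ → Euc N → ℝ} {a b : ℝ} {K : Set (Euc N)}
    (hK : IsCompact K) (hsupp : ∀ t ∈ Set.Ioo a b, ∀ x ∉ K, F t x = 0)
    (hF : ∀ t ∈ Set.Ioo a b, Continuous (F t))
    (hF' : ContinuousOn (fun p : ℝ × Euc N => F' p.1 p.2) (Set.Ioo a b ×ˢ Set.univ))
    (hd : ∀ t ∈ Set.Ioo a b, ∀ x, HasDerivAt (fun s => F s x) (F' t x) t)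
    {t : ℝ} (ht : t ∈ Set.Ioo a b) :
    HasDerivAt (fun s => ∫ x, F s x) (∫ x, F' t x) t := by
  have hsupp' : ∀ s ∈ Set.Ioo a b, ∀ x ∉ K, F' s x = 0 := by
    intro s hs x hx
    have : (fun r => F r x) =ᶠ[𝓝 s] fun _ => 0 := by
      filter_upwards [Ioo_mem_nhds hs.1 hs.2] with r hr using hsupp r hr x hx
    rw [← (hd s hs x).deriv, this.deriv_eq]; simp
  obtain ⟨c, hac, hct⟩ := exists_between ht.1
  obtain ⟨d, htd, hdb⟩ := exists_between ht.2
  have hsub : Set.Icc c d ⊆ Set.Ioo a b := fun s hs => ⟨hac.trans_le hs.1, hs.2.trans_lt hdb⟩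
  have hcomp : IsCompact (Set.Icc c d ×ˢ K) := isCompact_Icc.prod hK
  obtain ⟨C, hC⟩ := hcomp.exists_bound_of_continuousOn
    (hF'.mono (Set.prod_mono hsub (Set.subset_univ _)))
  have hslice : Continuous (F' t) := by
    refine hF'.comp_continuous (f := fun x => (t, x)) (by fun_prop) fun x => ⟨ht, trivial⟩
  refine (hasDerivAt_integral_of_dominated_loc_of_deriv_le
    (bound := K.indicator fun _ => C) (Icc_mem_nhds hct htd) ?_ ?_ ?_ ?_ ?_ ?_).2
  · filter_upwards [Ioo_mem_nhds ht.1 ht.2] with s hs using (hF s hs).aestronglyMeasurable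
  · exact (hF t ht).integrable_of_hasCompactSupport (HasCompactSupport.intro hK (hsupp t ht))
  · exact hslice.aestronglyMeasurable
  · refine Eventually.of_forall fun x s hs => ?_
    by_cases hx : x ∈ K
    · simpa [Set.indicator_of_mem hx] using hC (s, x) ⟨hs, hx⟩
    · simp [Set.indicator_of_notMem hx, hsupp' s (hsub hs) x hx]
  · exact (integrable_indicator_iff hK.measurableSet).2
      (integrableOn_const (hs := hK.measure_lt_top.ne))
  · exact Eventually.of_forall fun x s hs => hd s (hsub hs) x

/-- The `C^{n-1}` cutoff `(1 - s)₊ⁿ`. -/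
def cutPow (n : ℕ) (s : ℝ) : ℝ := (max 0 (1 - s)) ^ n

lemma cutPow_nonneg (n : ℕ) (s : ℝ) : 0 ≤ cutPow n s := pow_nonneg (le_max_left _ _) _

lemma cutPow_le_one (n : ℕ) {s : ℝ} (hs : 0 ≤ s) : cutPow n s ≤ 1 :=
  pow_le_one₀ (le_max_left _ _) (max_le zero_le_one (by linarith))

lemma cutPow_eq_zero {n : ℕ} (hn : n ≠ 0) {s : ℝ} (hs : 1 ≤ s) : cutPow n s = 0 := by
  rw [cutPow, max_eq_left (by linarith), zero_pow hn]

lemma cutPow_of_le {n : ℕ} {s : ℝ} (hs : s ≤ 1) : cutPow n s = (1 - s) ^ n := by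
  rw [cutPow, max_eq_right (by linarith)]

lemma continuous_cutPow (n : ℕ) : Continuous (cutPow n) := by unfold cutPow; fun_prop

lemma hasDerivAt_cutPow (n : ℕ) (s : ℝ) :
    HasDerivAt (cutPow (n + 2)) (-(n + 2) * cutPow (n + 1) s) s := by
  have hl : HasDerivAt (fun s : ℝ => (1 - s) ^ (n + 2)) (-(n + 2) * (1 - s) ^ (n + 1)) s := by
    have := ((hasDerivAt_id' s).const_sub 1).fun_pow (n + 2)
    refine this.congr_deriv ?_
    push_cast
    ring
  rcases lt_trichotomy s 1 with h | h | h
  · rw [cutPow_of_le h.le]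
    refine hl.congr_of_eventuallyEq ?_
    filter_upwards [Iio_mem_nhds h] with r hr using cutPow_of_le (le_of_lt hr)
  · subst h
    have e0 : cutPow (n + 1) 1 = 0 := cutPow_eq_zero (by omega) le_rfl
    have e1 : cutPow (n + 2) 1 = 0 := cutPow_eq_zero (by omega) le_rfl
    rw [e0, mul_zero]
    simp only [sub_self, ne_eq, Nat.add_eq_zero_iff, one_ne_zero, and_false, not_false_eq_true,
      zero_pow, mul_zero] at hl
    rw [← hasDerivWithinAt_univ, ← Set.Iic_union_Ici (a := (1 : ℝ))]
    refine HasDerivWithinAt.union ?_ ?_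
    · exact hl.hasDerivWithinAt.congr (fun r hr => cutPow_of_le hr) (by simp [e1])
    · exact (hasDerivWithinAt_const (1 : ℝ) (Set.Ici 1) (0 : ℝ)).congr
        (fun r hr => cutPow_eq_zero (by omega) hr) e1
  · rw [cutPow_eq_zero (by omega) h.le, mul_zero]
    refine (hasDerivAt_const s (0 : ℝ)).congr_of_eventuallyEq ?_
    filter_upwards [Ioi_mem_nhds h] with r hr using cutPow_eq_zero (by omega) (le_of_lt hr)

lemma sum_coord_smul {N : ℕ} (z : Euc N) :
    ∑ i : Fin N, z i • (EuclideanSpace.single i 1 : Euc N) = z := by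
  have := (EuclideanSpace.basisFun (Fin N) ℝ).sum_repr z
  simpa using this

/-- Mean value inequality: if `Δv ≥ -κ` then `v x₀` is at most a weighted average of `v` around
`x₀`, up to an error of order `κ μ²` where `μ` is the radius. -/
lemma mean_value {N : ℕ} {v : Euc N → ℝ} (hv : ContDiff ℝ 2 v) {κ : ℝ}
    (hκ : ∀ x, -κ ≤ lapl v x) (x₀ : Euc N) {μ : ℝ} (hμ : 0 ≤ μ) :
    v x₀ * ∫ z : Euc N, cutPow 3 (‖z‖ ^ 2) ≤ (∫ z : Euc N, cutPow 3 (‖z‖ ^ 2) * v (x₀ + μ • z))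
      + μ ^ 2 * κ / 16 * ∫ z : Euc N, cutPow 4 (‖z‖ ^ 2) := by
  have hn : Continuous fun x : Euc N => ‖x‖ ^ 2 := by fun_prop
  have k3 : Continuous fun z : Euc N => cutPow 3 (‖z‖ ^ 2) := (continuous_cutPow 3).comp hn
  have k4 : Continuous fun z : Euc N => cutPow 4 (‖z‖ ^ 2) := (continuous_cutPow 4).comp hn
  have z3 : ∀ z : Euc N, 1 < ‖z‖ ^ 2 → cutPow 3 (‖z‖ ^ 2) = 0 := fun z hz =>
    cutPow_eq_zero (by norm_num) hz.le
  have z4 : ∀ z : Euc N, 1 < ‖z‖ ^ 2 → cutPow 4 (‖z‖ ^ 2) = 0 := fun z hz =>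
    cutPow_eq_zero (by norm_num) hz.le
  have hco : ∀ i : Fin N, Continuous fun x : Euc N => x i := fun i =>
    (EuclideanSpace.proj i : Euc N →L[ℝ] ℝ).continuous
  have hint : ∀ f : Euc N → ℝ, Continuous f → (∀ x, 1 < ‖x‖ ^ 2 → f x = 0) →
      Integrable f volume := fun f hf h =>
    hf.integrable_of_hasCompactSupport (hasCompactSupport_of_normSq h)
  have hv1 : ∀ i : Fin N, ContDiff ℝ 1
      (fun y => fderiv ℝ v y (EuclideanSpace.single i 1)) := fun i =>
    (hv.fderiv_right (m := 1) (by norm_num)).clm_apply contDiff_const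
  have hv2 : ∀ i : Fin N, Continuous (fun y => fderiv ℝ
      (fun y => fderiv ℝ v y (EuclideanSpace.single i 1)) y (EuclideanSpace.single i 1)) := fun i =>
    ((hv1 i).continuous_fderiv (by norm_num)).clm_apply continuous_const
  have hDv : Continuous (fderiv ℝ v) := hv.continuous_fderiv (by norm_num)
  have hvc := hv.continuous
  have haff : ∀ r : ℝ, Continuous fun z : Euc N => x₀ + r • z := fun r => by fun_prop
  -- derivative of the average with respect to the radius
  have hM : ∀ r : ℝ, HasDerivAt (fun r => ∫ z : Euc N, cutPow 3 (‖z‖ ^ 2) * v (x₀ + r • z))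
      (∫ z : Euc N, cutPow 3 (‖z‖ ^ 2) * fderiv ℝ v (x₀ + r • z) z) r := by
    intro r
    refine hasDerivAt_integral_compact (a := r - 1) (b := r + 1)
      (F := fun r z => cutPow 3 (‖z‖ ^ 2) * v (x₀ + r • z))
      (F' := fun r z => cutPow 3 (‖z‖ ^ 2) * fderiv ℝ v (x₀ + r • z) z)
      (isCompact_closedBall (0 : Euc N) 1) ?_ ?_ ?_ ?_ ⟨by linarith, by linarith⟩
    · intro t _ z hz
      simp only [Metric.mem_closedBall, dist_zero_right, not_le] at hz
      simp [z3 z (by nlinarith)]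
    · exact fun t _ => k3.mul (hvc.comp (haff t))
    · refine Continuous.continuousOn ?_
      refine (k3.comp continuous_snd).mul ?_
      exact (hDv.comp (by fun_prop : Continuous fun p : ℝ × Euc N => x₀ + p.1 • p.2)).clm_apply
        continuous_snd
    · intro t _ z
      have h1 : HasDerivAt (fun s : ℝ => x₀ + s • z) z t := by
        simpa using ((hasDerivAt_id t).smul_const z).const_add x₀
      exact (((hv.differentiable (by norm_num)) _).hasFDerivAt.comp_hasDerivAt t h1).const_mul _
  -- integration by parts
  have hparts : ∀ r : ℝ, ∫ z : Euc N, cutPow 3 (‖z‖ ^ 2) * fderiv ℝ v (x₀ + r • z) z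
      = r / 8 * ∫ z : Euc N, cutPow 4 (‖z‖ ^ 2) * lapl v (x₀ + r • z) := by
    intro r
    have hi : ∀ i : Fin N, ∫ z : Euc N, cutPow 3 (‖z‖ ^ 2) * (z i *
          fderiv ℝ v (x₀ + r • z) (EuclideanSpace.single i 1))
        = ∫ z : Euc N, r / 8 * (cutPow 4 (‖z‖ ^ 2) * fderiv ℝ (fun y => fderiv ℝ v y
          (EuclideanSpace.single i 1)) (x₀ + r • z) (EuclideanSpace.single i 1)) := by
      intro i
      have f1 : ∀ z : Euc N, fderiv ℝ (fun y : Euc N => cutPow 4 (‖y‖ ^ 2)) z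
          (EuclideanSpace.single i 1) = -8 * (cutPow 3 (‖z‖ ^ 2) * z i) := fun z => by
        rw [fderiv_radial_apply i (hasDerivAt_cutPow 2 _)]; push_cast; ring
      have g1 : ∀ z : Euc N, HasFDerivAt
          (fun z => fderiv ℝ v (x₀ + r • z) (EuclideanSpace.single i 1))
          (r • fderiv ℝ (fun y => fderiv ℝ v y (EuclideanSpace.single i 1)) (x₀ + r • z)) z := by
        intro z
        have h1 : HasFDerivAt (fun z : Euc N => x₀ + r • z)
            (r • ContinuousLinearMap.id ℝ (Euc N)) z :=
          ((hasFDerivAt_id z).const_smul r).const_add x₀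
        have h2 := ((((hv1 i).differentiable (by norm_num)) (x₀ + r • z)).hasFDerivAt).comp z h1
        have e : r • fderiv ℝ (fun y => fderiv ℝ v y (EuclideanSpace.single i 1)) (x₀ + r • z)
          = (fderiv ℝ (fun y => fderiv ℝ v y (EuclideanSpace.single i 1)) (x₀ + r • z)).comp
            (r • ContinuousLinearMap.id ℝ (Euc N)) := by ext; simp
        rw [e]; exact h2
      have c1 : Continuous fun z => fderiv ℝ v (x₀ + r • z) (EuclideanSpace.single i 1) :=
        (hv1 i).continuous.comp (haff r)
      have c2 : Continuous fun z => fderiv ℝ (fun y => fderiv ℝ v y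
          (EuclideanSpace.single i 1)) (x₀ + r • z) (EuclideanSpace.single i 1) :=
        (hv2 i).comp (haff r)
      have := integral_mul_fderiv_eq_neg_fderiv_mul_of_integrable (μ := (volume : Measure (Euc N)))
        (f := fun y : Euc N => cutPow 4 (‖y‖ ^ 2))
        (g := fun z => fderiv ℝ v (x₀ + r • z) (EuclideanSpace.single i 1))
        (v := EuclideanSpace.single i 1) ?_ ?_ ?_ ?_ ?_
      · simp_rw [f1, (g1 _).fderiv] at this
        rw [integral_const_mul]
        have e1 : ∀ z : Euc N, cutPow 4 (‖z‖ ^ 2) * (r • fderiv ℝ (fun y => fderiv ℝ v y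
          (EuclideanSpace.single i 1)) (x₀ + r • z)) (EuclideanSpace.single i 1)
          = r * (cutPow 4 (‖z‖ ^ 2) * fderiv ℝ (fun y => fderiv ℝ v y
          (EuclideanSpace.single i 1)) (x₀ + r • z) (EuclideanSpace.single i 1)) := fun z => by
          simp; ring
        have e2 : ∀ z : Euc N, -8 * (cutPow 3 (‖z‖ ^ 2) * z i) * fderiv ℝ v (x₀ + r • z)
          (EuclideanSpace.single i 1) = -8 * (cutPow 3 (‖z‖ ^ 2) * (z i * fderiv ℝ v (x₀ + r • z)
          (EuclideanSpace.single i 1))) := fun z => by ring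
        simp_rw [e1, e2] at this
        rw [integral_const_mul, integral_const_mul] at this
        linarith
      · simp_rw [f1]
        exact hint _ ((continuous_const.mul (k3.mul (hco i))).mul c1) fun z hz => by
          simp [z3 z hz]
      · simp_rw [(g1 _).fderiv]
        exact hint _ (k4.mul (continuous_const.mul c2)) fun z hz => by simp [z4 z hz]
      · exact hint _ (k4.mul c1) fun z hz => by simp [z4 z hz]
      · exact fun z _ => (hasFDerivAt_radial (hasDerivAt_cutPow 2 _)).differentiableAt
      · exact fun z _ => (g1 z).differentiableAt
    calc ∫ z : Euc N, cutPow 3 (‖z‖ ^ 2) * fderiv ℝ v (x₀ + r • z) z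
        = ∫ z : Euc N, ∑ i : Fin N, cutPow 3 (‖z‖ ^ 2) * (z i *
          fderiv ℝ v (x₀ + r • z) (EuclideanSpace.single i 1)) := by
          congr 1; ext z
          rw [← Finset.mul_sum]
          congr 1
          conv_lhs => rw [← sum_coord_smul z]
          rw [map_sum, sum_coord_smul z]
          simp
      _ = ∑ i : Fin N, ∫ z : Euc N, r / 8 * (cutPow 4 (‖z‖ ^ 2) * fderiv ℝ (fun y => fderiv ℝ v y
          (EuclideanSpace.single i 1)) (x₀ + r • z) (EuclideanSpace.single i 1)) := by
          rw [integral_finsetSum]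
          · exact Finset.sum_congr rfl fun i _ => hi i
          · intro i _
            exact hint _ (k3.mul ((hco i).mul ((hv1 i).continuous.comp (haff r))))
              fun z hz => by simp [z3 z hz]
      _ = _ := by
          rw [← integral_finsetSum, ← integral_const_mul]
          · congr 1; ext z
            rw [lapl_eq_sum_fderiv hv.contDiffAt, Finset.mul_sum, Finset.mul_sum]
          · intro i _
            exact hint _ (continuous_const.mul (k4.mul ((hv2 i).comp (haff r))))
              fun z hz => by simp [z4 z hz]
  have hlc : Continuous (lapl v) := by
    have : lapl v = fun x => ∑ i : Fin N, fderiv ℝ (fun y => fderiv ℝ v y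
        (EuclideanSpace.single i 1)) x (EuclideanSpace.single i 1) := by
      ext x; exact lapl_eq_sum_fderiv hv.contDiffAt
    rw [this]
    exact continuous_finsetSum _ fun i _ => hv2 i
  have i4 : Integrable (fun z : Euc N => cutPow 4 (‖z‖ ^ 2)) := hint _ k4 z4
  have hlow : ∀ r : ℝ, -κ * ∫ z : Euc N, cutPow 4 (‖z‖ ^ 2) ≤
      ∫ z : Euc N, cutPow 4 (‖z‖ ^ 2) * lapl v (x₀ + r • z) := by
    intro r
    rw [← integral_const_mul]
    refine integral_mono (i4.const_mul _) (hint _ (k4.mul (hlc.comp (haff r)))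
      fun z hz => by simp [z4 z hz]) fun z => ?_
    have := mul_le_mul_of_nonneg_left (hκ (x₀ + r • z)) (cutPow_nonneg 4 (‖z‖ ^ 2))
    simp only; linarith
  set A := ∫ z : Euc N, cutPow 4 (‖z‖ ^ 2) with hA
  set M := fun r : ℝ => ∫ z : Euc N, cutPow 3 (‖z‖ ^ 2) * v (x₀ + r • z) with hMdef
  have hmono : MonotoneOn (fun r => M r + r ^ 2 * κ / 16 * A) (Set.Ici 0) := by
    have hder : ∀ r : ℝ, HasDerivAt (fun r => M r + r ^ 2 * κ / 16 * A)
        (r / 8 * (∫ z : Euc N, cutPow 4 (‖z‖ ^ 2) * lapl v (x₀ + r • z))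
          + r * κ / 8 * A) r := by
      intro r
      have h1 := hM r
      rw [hparts r] at h1
      have h2 : HasDerivAt (fun r : ℝ => r ^ 2 * κ / 16 * A) (r * κ / 8 * A) r := by
        have := (((hasDerivAt_pow 2 r).mul_const κ).div_const 16).mul_const A
        exact this.congr_deriv (by push_cast; ring)
      exact h1.add h2
    refine monotoneOn_of_deriv_nonneg (convex_Ici 0)
      (fun r _ => (hder r).continuousAt.continuousWithinAt)
      (fun r _ => (hder r).differentiableAt.differentiableWithinAt) fun r hr => ?_
    rw [(hder r).deriv]
    simp only [interior_Ici, Set.mem_Ioi] at hr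
    nlinarith [hlow r]
  have h01 := hmono (Set.mem_Ici.2 le_rfl) (Set.mem_Ici.2 hμ) hμ
  have e0 : M 0 = v x₀ * ∫ z : Euc N, cutPow 3 (‖z‖ ^ 2) := by
    simp only [hMdef, zero_smul, add_zero]
    rw [integral_mul_const, mul_comm]
  simp only [e0] at h01
  linarith

/-! ### The Barenblatt solution -/

/-- The standing assumptions on the dimension, the exponent and the Barenblatt parameter. -/
structure Adm (N : ℕ) (m k : ℝ) : Prop where
  hN : 4 < N
  hm0 : 0 < m
  hmu : m ≤ ((N : ℝ) - 4) / ((N : ℝ) - 2)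
  hk : 0 < k

/-- The exponent `a = -γ = β / N = 1 / (N - 2 - N m)`. -/
def aC (N : ℕ) (m : ℝ) : ℝ := 1 / ((N : ℝ) - 2 - N * m)

/-- The time-dependent part `k (T - t)^{2γ}` of the denominator of the Barenblatt solution. -/
def Dd (N : ℕ) (m T k t : ℝ) : ℝ := k * (T - t) ^ (2 * gammaC N m)

/-- The base `C* (T - t) / (k (T - t)^{2γ} + ρ)`, so that `B ^ (1 - m)` is `Pp` at `ρ = |x|²`. -/
def Pp (N : ℕ) (m T k ρ t : ℝ) : ℝ := Cst N m * (T - t) / (Dd N m T k t + ρ)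

namespace Adm

variable {N : ℕ} {m T k t : ℝ}

lemma hN' (h : Adm N m k) : (5 : ℝ) ≤ N := by
  have := h.hN
  exact_mod_cast this

lemma hm_mul (h : Adm N m k) : m * ((N : ℝ) - 2) ≤ N - 4 := by
  have h1 := h.hmu
  have := h.hN'
  rwa [le_div_iff₀ (by linarith)] at h1

lemma one_sub_pos (h : Adm N m k) : 0 < 1 - m := by
  have h1 := h.hm_mul
  have := h.hN'
  by_contra hc
  nlinarith

lemma p_pos (h : Adm N m k) : 0 < (N : ℝ) - 2 - N * m := by
  have h1 := h.hm_mul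
  have h5 := h.hN'
  have h2 := h.one_sub_pos
  nlinarith

lemma a_pos (h : Adm N m k) : 0 < aC N m := one_div_pos.2 h.p_pos

lemma C_pos (h : Adm N m k) : 0 < Cst N m := by
  have h1 := h.p_pos
  have h2 := h.one_sub_pos
  have h3 := h.hm0
  unfold Cst
  have : (N : ℝ) - 2 - m * N = N - 2 - N * m := by ring
  rw [this]
  positivity

lemma gamma_eq (h : Adm N m k) : gammaC N m = -aC N m := by
  have h1 := h.p_pos
  have h5 := h.hN'
  unfold gammaC betaC aC
  field_simp

lemma beta_eq (_h : Adm N m k) : betaC N m = N * aC N m := by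
  unfold betaC aC
  ring

/-- The mass-scaling relation between the exponents. -/
lemma scal (h : Adm N m k) : 1 + 2 * aC N m = (1 - m) * betaC N m := by
  have h1 := h.p_pos
  unfold betaC aC
  field_simp
  ring

lemma C_eq (h : Adm N m k) : Cst N m * aC N m = 2 * (m / (1 - m)) := by
  have h1 := h.p_pos
  have h2 := h.one_sub_pos
  unfold Cst aC
  rw [show (N : ℝ) - 2 - m * N = N - 2 - N * m by ring, mul_one_div, div_div, mul_assoc 2 m,
    mul_div_assoc, mul_div_mul_right _ _ h1.ne']

/-- This is the place where the upper bound `m ≤ (N - 4) / (N - 2)` is used. -/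
lemma c_ge (h : Adm N m k) : aC N m ≤ m / Cst N m * (N - 2) := by
  have h1 := h.p_pos
  have h2 := h.one_sub_pos
  have h3 := h.hm0
  have h4 := h.hm_mul
  have h5 := h.hN'
  have : m / Cst N m = (1 - m) / (2 * ((N : ℝ) - 2 - N * m)) := by
    unfold Cst
    rw [show (N : ℝ) - 2 - m * N = N - 2 - N * m by ring]
    field_simp
  rw [this]
  unfold aC
  rw [div_mul_eq_mul_div, div_le_div_iff₀ h1 (by linarith)]
  nlinarith

lemma D_pos (h : Adm N m k) (ht : t < T) : 0 < Dd N m T k t :=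
  mul_pos h.hk (rpow_pos_of_pos (by linarith) _)

lemma P_pos (h : Adm N m k) (ht : t < T) {ρ : ℝ} (hρ : -Dd N m T k t < ρ) :
    0 < Pp N m T k ρ t :=
  div_pos (mul_pos h.C_pos (by linarith)) (by linarith)

lemma D_hasDerivAt (h : Adm N m k) (ht : t < T) :
    HasDerivAt (Dd N m T k) (2 * aC N m * Dd N m T k t / (T - t)) t := by
  have h0 : 0 < T - t := by linarith
  have h1 : HasDerivAt (fun s : ℝ => T - s) (-1) t := by
    simpa using (hasDerivAt_id' t).const_sub T
  have h2 := (h1.rpow_const (p := 2 * gammaC N m) (Or.inl h0.ne')).const_mul k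
  refine h2.congr_deriv ?_
  rw [rpow_sub_one h0.ne', h.gamma_eq]
  unfold Dd
  rw [h.gamma_eq]
  ring

lemma Bb_eq (x : Euc N) (t : ℝ) : Bb N m T k x t = Pp N m T k (‖x‖ ^ 2) t ^ (1 / (1 - m)) := rfl

lemma P_pos' (h : Adm N m k) (ht : t < T) (x : Euc N) : 0 < Pp N m T k (‖x‖ ^ 2) t :=
  h.P_pos ht (by have := h.D_pos ht; nlinarith [sq_nonneg ‖x‖])

lemma B_pos (h : Adm N m k) (ht : t < T) (x : Euc N) : 0 < Bb N m T k x t :=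
  rpow_pos_of_pos (h.P_pos' ht x) _

lemma B_pow (h : Adm N m k) (ht : t < T) (x : Euc N) :
    Bb N m T k x t ^ m = Pp N m T k (‖x‖ ^ 2) t ^ (m / (1 - m)) := by
  rw [Bb_eq, ← rpow_mul (h.P_pos' ht x).le]
  congr 1
  ring

lemma B_pow_one_sub (h : Adm N m k) (ht : t < T) (x : Euc N) :
    Bb N m T k x t ^ (1 - m) = Pp N m T k (‖x‖ ^ 2) t := by
  have h2 := h.one_sub_pos
  rw [Bb_eq, ← rpow_mul (h.P_pos' ht x).le, one_div, inv_mul_cancel₀ h2.ne', rpow_one]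

lemma B_pow_sub_one (h : Adm N m k) (ht : t < T) (x : Euc N) :
    Bb N m T k x t ^ (m - 1) = (Pp N m T k (‖x‖ ^ 2) t)⁻¹ := by
  rw [← h.B_pow_one_sub ht x, ← rpow_neg (h.B_pos ht x).le]
  congr 1
  ring

/-- The time derivative of the Barenblatt solution. -/
def _root_.Bt (N : ℕ) (m T k : ℝ) (x : Euc N) (t : ℝ) : ℝ :=
  -(1 / (1 - m)) * Bb N m T k x t / (T - t) *
    (1 + 2 * aC N m * (Dd N m T k t / (Dd N m T k t + ‖x‖ ^ 2)))

lemma B_hasDerivAt (h : Adm N m k) (ht : t < T) (x : Euc N) :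
    HasDerivAt (fun s => Bb N m T k x s) (Bt N m T k x t) t := by
  have h0 : 0 < T - t := by linarith
  have hD := h.D_pos ht
  have hP := h.P_pos' ht x
  have hDx : 0 < Dd N m T k t + ‖x‖ ^ 2 := by positivity
  have h1 : HasDerivAt (fun s : ℝ => Cst N m * (T - s)) (-Cst N m) t := by
    simpa using ((hasDerivAt_id' t).const_sub T).const_mul (Cst N m)
  have h2 : HasDerivAt (fun s => Pp N m T k (‖x‖ ^ 2) s) _ t :=
    h1.div ((h.D_hasDerivAt ht).add_const (‖x‖ ^ 2)) hDx.ne'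
  have h3 := h2.rpow_const (p := 1 / (1 - m)) (Or.inl hP.ne')
  refine h3.congr_deriv ?_
  rw [rpow_sub_one hP.ne', ← Bb_eq, Bt]
  have hC := h.C_pos
  have h2 := h.one_sub_pos
  unfold Pp
  field_simp
  ring

lemma Bt_nonpos (h : Adm N m k) (ht : t < T) (x : Euc N) : Bt N m T k x t ≤ 0 := by
  have h0 : 0 < T - t := by linarith
  have hD := h.D_pos ht
  have hB := h.B_pos ht x
  have ha := h.a_pos
  have h2 := h.one_sub_pos
  have : 0 ≤ (1 / (1 - m)) * Bb N m T k x t / (T - t) *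
    (1 + 2 * aC N m * (Dd N m T k t / (Dd N m T k t + ‖x‖ ^ 2))) := by positivity
  have e : Bt N m T k x t = -((1 / (1 - m)) * Bb N m T k x t / (T - t) *
    (1 + 2 * aC N m * (Dd N m T k t / (Dd N m T k t + ‖x‖ ^ 2)))) := by unfold Bt; ring
  linarith

lemma Bt_ge (h : Adm N m k) (ht : t < T) (x : Euc N) :
    -(betaC N m * Bb N m T k x t / (T - t)) ≤ Bt N m T k x t := by
  have h0 : 0 < T - t := by linarith
  have hD := h.D_pos ht
  have hB := h.B_pos ht x
  have ha := h.a_pos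
  have h2 := h.one_sub_pos
  have h3 : Dd N m T k t / (Dd N m T k t + ‖x‖ ^ 2) ≤ 1 :=
    (div_le_one (by positivity)).2 (by nlinarith [sq_nonneg ‖x‖])
  have h4 : betaC N m = (1 / (1 - m)) * (1 + 2 * aC N m) := by
    rw [h.scal]; field_simp
  have h5 : (1 / (1 - m)) * Bb N m T k x t / (T - t) *
      (1 + 2 * aC N m * (Dd N m T k t / (Dd N m T k t + ‖x‖ ^ 2))) ≤
      (1 / (1 - m)) * Bb N m T k x t / (T - t) * (1 + 2 * aC N m) := by
    have := mul_le_mul_of_nonneg_left h3 (by positivity : 0 ≤ 2 * aC N m)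
    refine mul_le_mul_of_nonneg_left ?_ (by positivity)
    linarith
  have e : Bt N m T k x t = -((1 / (1 - m)) * Bb N m T k x t / (T - t) *
    (1 + 2 * aC N m * (Dd N m T k t / (Dd N m T k t + ‖x‖ ^ 2)))) := by unfold Bt; ring
  rw [e, h4]
  have e2 : 1 / (1 - m) * (1 + 2 * aC N m) * Bb N m T k x t / (T - t) =
    (1 / (1 - m)) * Bb N m T k x t / (T - t) * (1 + 2 * aC N m) := by ring
  linarith

/-- The Barenblatt solution solves the fast diffusion equation. -/
lemma lapl_B (h : Adm N m k) (ht : t < T) (x : Euc N) :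
    lapl (fun y => Bb N m T k y t ^ m) x = Bt N m T k x t := by
  have h0 : 0 < T - t := by linarith
  have hD := h.D_pos ht
  have hm := h.hm0
  have h2 := h.one_sub_pos
  have hC := h.C_pos
  set μ := m / (1 - m) with hμ
  set D := Dd N m T k t with hDdef
  have e : (fun y : Euc N => Bb N m T k y t ^ m) = fun y => Pp N m T k (‖y‖ ^ 2) t ^ μ := by
    funext y
    exact h.B_pow ht y
  have hd : ∀ ρ : ℝ, -D < ρ → HasDerivAt (fun ρ => Pp N m T k ρ t ^ μ)
      (-μ * (Pp N m T k ρ t ^ μ / (D + ρ))) ρ := by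
    intro ρ hρ
    have hP := h.P_pos ht hρ
    have hDρ : D + ρ ≠ 0 := by linarith
    have h3 : HasDerivAt (fun ρ => Pp N m T k ρ t) _ ρ :=
      (hasDerivAt_const ρ (Cst N m * (T - t))).div ((hasDerivAt_id' ρ).const_add D) hDρ
    refine (h3.rpow_const (p := μ) (Or.inl hP.ne')).congr_deriv ?_
    rw [rpow_sub_one hP.ne']
    unfold Pp at *
    rw [← hDdef] at *
    field_simp
    ring
  have hx : -D < ‖x‖ ^ 2 := by nlinarith [sq_nonneg ‖x‖]
  have hDx : 0 < D + ‖x‖ ^ 2 := by linarith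
  have h2' := ((hd _ hx).div ((hasDerivAt_id' _).const_add D) hDx.ne').const_mul (-μ)
  rw [e, lapl_radial ((eventually_gt_nhds hx).mono hd) h2', Bt, Bb_eq]
  have hP := h.P_pos' ht x
  have e1 : Pp N m T k (‖x‖ ^ 2) t ^ (1 / (1 - m)) =
      Pp N m T k (‖x‖ ^ 2) t ^ μ * Pp N m T k (‖x‖ ^ 2) t := by
    rw [show 1 / (1 - m) = μ + 1 by rw [hμ]; field_simp; ring, rpow_add_one hP.ne']
  have e2 : Pp N m T k (‖x‖ ^ 2) t = Cst N m * (T - t) / (D + ‖x‖ ^ 2) := rfl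
  rw [e1]
  generalize Pp N m T k (‖x‖ ^ 2) t ^ μ = Φ
  rw [e2]
  have h1 := h.p_pos
  have e3 : (N : ℝ) = (1 / (1 - m)) * (1 / aC N m + 2) := by
    unfold aC; field_simp; ring
  have e4 : Cst N m = 2 * μ / aC N m := by
    rw [eq_div_iff h.a_pos.ne', h.C_eq]
  have ha := h.a_pos
  have e5 : 1 - m = 1 / (μ + 1) := by rw [hμ]; field_simp; ring
  have hμ0 : 0 < μ := by positivity
  rw [e3, e4, e5, ← hDdef]
  clear_value μ D
  generalize ‖x‖ ^ 2 = ρ at *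
  field_simp
  ring

lemma D_cont (h : Adm N m k) : ContinuousOn (Dd N m T k) (Set.Iio T) := fun _ ht =>
  (h.D_hasDerivAt ht).continuousAt.continuousWithinAt

lemma D_contDiffOn : ContDiffOn ℝ 2 (Dd N m T k) (Set.Iio T) := by
  unfold Dd
  refine contDiffOn_const.mul (ContDiffOn.rpow_const_of_ne (by fun_prop) fun t ht => ?_)
  simp only [Set.mem_Iio] at ht
  linarith

lemma B_contDiffOn (h : Adm N m k) :
    ContDiffOn ℝ 2 (fun p : Euc N × ℝ => Bb N m T k p.1 p.2) (Set.univ ×ˢ Set.Iio T) := by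
  have hD : ContDiffOn ℝ 2 (fun p : Euc N × ℝ => Dd N m T k p.2) (Set.univ ×ˢ Set.Iio T) :=
    D_contDiffOn.comp contDiffOn_snd fun p hp => hp.2
  have hn : ContDiff ℝ 2 (fun p : Euc N × ℝ => ‖p.1‖ ^ 2) := contDiff_fst.norm_sq ℝ
  refine ContDiffOn.rpow_const_of_ne (ContDiffOn.div (by fun_prop) (hD.add hn.contDiffOn)
    fun p hp => ?_) fun p hp => (h.P_pos' hp.2 p.1).ne'
  have := h.D_pos (show p.2 < T from hp.2)
  positivity

lemma Bt_contOn (h : Adm N m k) :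
    ContinuousOn (fun p : Euc N × ℝ => Bt N m T k p.1 p.2) (Set.univ ×ˢ Set.Iio T) := by
  have hD : ContinuousOn (fun p : Euc N × ℝ => Dd N m T k p.2) (Set.univ ×ˢ Set.Iio T) :=
    h.D_cont.comp continuousOn_snd fun p hp => hp.2
  have hn : ContinuousOn (fun p : Euc N × ℝ => ‖p.1‖ ^ 2) (Set.univ ×ˢ Set.Iio T) := by fun_prop
  unfold Bt
  refine ((h.B_contDiffOn.continuousOn.const_mul _).div (by fun_prop) ?_).mul
    (continuousOn_const.add (continuousOn_const.mul (hD.div (hD.add hn) ?_)))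
  · intro p hp
    have : p.2 < T := hp.2
    linarith
  · intro p hp
    have := h.D_pos (show p.2 < T from hp.2)
    positivity

lemma B_contDiff (h : Adm N m k) (ht : t < T) :
    ContDiff ℝ 2 (fun y : Euc N => Bb N m T k y t) := by
  have := h.B_contDiffOn (T := T).comp (s := Set.univ) (f := fun y : Euc N => (y, t))
    (by fun_prop) fun y _ => ⟨trivial, ht⟩
  exact contDiffOn_univ.1 this

lemma Bm_contDiff (h : Adm N m k) (ht : t < T) :
    ContDiff ℝ 2 (fun y : Euc N => Bb N m T k y t ^ m) :=
  (h.B_contDiff ht).rpow_const_of_ne fun y => (h.B_pos ht y).ne'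

/-- The spatial maximum of the Barenblatt solution is a constant times `(T - t)^β`. -/
lemma B_le (h : Adm N m k) (ht : t < T) (x : Euc N) :
    Bb N m T k x t ≤ (Cst N m / k) ^ (1 / (1 - m)) * (T - t) ^ betaC N m := by
  have h0 : 0 < T - t := by linarith
  have h2 := h.one_sub_pos
  have hC := h.C_pos
  have hk := h.hk
  have e : (Cst N m / k) ^ (1 / (1 - m)) * (T - t) ^ betaC N m =
      (Cst N m * (T - t) / Dd N m T k t) ^ (1 / (1 - m)) := by
    have : Cst N m * (T - t) / Dd N m T k t = Cst N m / k * (T - t) ^ (1 + 2 * aC N m) := by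
      unfold Dd
      rw [h.gamma_eq, show 1 + 2 * aC N m = 1 - 2 * (-aC N m) by ring, rpow_sub h0, rpow_one]
      have := rpow_pos_of_pos h0 (2 * -aC N m)
      field_simp
    rw [this, mul_rpow (by positivity) (by positivity), ← rpow_mul h0.le, h.scal]
    congr 2
    field_simp
  rw [e, Bb_eq]
  have hD := h.D_pos ht
  refine rpow_le_rpow (h.P_pos' ht x).le ?_ (by positivity)
  unfold Pp
  gcongr
  nlinarith [sq_nonneg ‖x‖]

/-- Self-similarity of the Barenblatt solution. -/
lemma B_rescale (h : Adm N m k) (ht : t < T) (y : Euc N) :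
    Bb N m T k ((T - t) ^ (-aC N m) • y) t = (T - t) ^ betaC N m * BbTil N m k y := by
  have h0 : 0 < T - t := by linarith
  have h2 := h.one_sub_pos
  have hC := h.C_pos
  have hk := h.hk
  rw [Bb, BbTil, show betaC N m = (1 + 2 * aC N m) * (1 / (1 - m)) by rw [h.scal]; field_simp,
    rpow_mul (x := T - t) (y := 1 + 2 * aC N m) h0.le, ← mul_rpow (by positivity) (by positivity)]
  congr 1
  rw [norm_smul, norm_of_nonneg (by positivity), mul_pow, ← rpow_natCast ((T - t) ^ (-aC N m)),
    ← rpow_mul h0.le, h.gamma_eq, show 1 + 2 * aC N m = 1 - 2 * (-aC N m) by ring, rpow_sub h0,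
    rpow_one]
  push_cast
  rw [show -aC N m * 2 = 2 * -aC N m by ring]
  have := rpow_pos_of_pos h0 (2 * -aC N m)
  have : 0 < k + ‖y‖ ^ 2 := by positivity
  field_simp

end Adm

/-! ### Regularity of solutions and comparison with the Barenblatt solution -/

namespace IsFDESol

variable {N : ℕ} {m T k t : ℝ} {u : Euc N → ℝ → ℝ} {u₀ : Euc N → ℝ}

lemma pos (hs : IsFDESol N m T u u₀) (ht : t ∈ Set.Ioo 0 T) (x : Euc N) : 0 < u x t :=
  hs.1 x t ht

lemma contDiff (hs : IsFDESol N m T u u₀) (ht : t ∈ Set.Ioo 0 T) :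
    ContDiff ℝ 2 (fun y => u y t) := by
  have := hs.2.1.comp (s := Set.univ) (f := fun y : Euc N => (y, t))
    (by fun_prop) fun y _ => ⟨trivial, ht⟩
  exact (contDiffOn_univ.1 this).of_le (WithTop.coe_le_coe.2 (le_top : (2 : ℕ∞) ≤ ⊤))

lemma contDiff_pow (hs : IsFDESol N m T u u₀) (ht : t ∈ Set.Ioo 0 T) :
    ContDiff ℝ 2 (fun y => u y t ^ m) :=
  (hs.contDiff ht).rpow_const_of_ne fun y => (hs.pos ht y).ne'

lemma isOpen_dom : IsOpen ((Set.univ : Set (Euc N)) ×ˢ Set.Ioo (0 : ℝ) T) :=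
  isOpen_univ.prod isOpen_Ioo

/-- The time derivative is the partial derivative of the jointly smooth map. -/
lemma hasDerivAt_fderiv (hs : IsFDESol N m T u u₀) (ht : t ∈ Set.Ioo 0 T) (x : Euc N) :
    HasDerivAt (fun s => u x s)
      (fderiv ℝ (fun p : Euc N × ℝ => u p.1 p.2) (x, t) (0, 1)) t := by
  have hd : HasFDerivAt (fun p : Euc N × ℝ => u p.1 p.2) _ (x, t) :=
    ((hs.2.1.contDiffAt (isOpen_dom.mem_nhds ⟨trivial, ht⟩)).differentiableAt
      (by simp)).hasFDerivAt
  have hl : HasDerivAt (fun s : ℝ => (x, s)) ((0 : Euc N), (1 : ℝ)) t :=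
    (hasDerivAt_const t x).prodMk (hasDerivAt_id' t)
  exact hd.comp_hasDerivAt t hl

lemma hasDerivAt (hs : IsFDESol N m T u u₀) (ht : t ∈ Set.Ioo 0 T) (x : Euc N) :
    HasDerivAt (fun s => u x s) (lapl (fun y => u y t ^ m) x) t := by
  rw [← hs.2.2.2.2 x t ht]
  exact (hs.hasDerivAt_fderiv ht x).differentiableAt.hasDerivAt

lemma contOn_lapl (hs : IsFDESol N m T u u₀) :
    ContinuousOn (fun p : Euc N × ℝ => lapl (fun y => u y p.2 ^ m) p.1)
      (Set.univ ×ˢ Set.Ioo 0 T) := by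
  have h1 := hs.2.1.continuousOn_fderiv_of_isOpen isOpen_dom (by simp)
  have h2 : ContinuousOn (fun p : Euc N × ℝ =>
      fderiv ℝ (fun p : Euc N × ℝ => u p.1 p.2) p (0, 1)) (Set.univ ×ˢ Set.Ioo 0 T) :=
    h1.clm_apply continuousOn_const
  refine h2.congr fun p hp => ?_
  exact (hs.hasDerivAt hp.2 p.1).unique (hs.hasDerivAt_fderiv hp.2 p.1)

lemma contOn (hs : IsFDESol N m T u u₀) :
    ContinuousOn (fun p : Euc N × ℝ => u p.1 p.2) (Set.univ ×ˢ Set.Ico 0 T) := hs.2.2.1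

lemma nonneg (hs : IsFDESol N m T u u₀) (ht : t ∈ Set.Ico 0 T) (x : Euc N) : 0 ≤ u x t := by
  rcases ht.1.eq_or_lt with h0 | h0
  · subst h0
    have hT : 0 < T := ht.2
    have hc : ContinuousOn (fun s => u x s) (Set.Ico 0 T) :=
      hs.contOn.comp (f := fun s : ℝ => (x, s)) (by fun_prop) fun s hs => ⟨trivial, hs⟩
    have h1 : Tendsto (fun s => u x s) (𝓝[>] 0) (𝓝 (u x 0)) :=
      (hc 0 ht).mono_left (nhdsWithin_le_of_mem
        (mem_of_superset (Ioo_mem_nhdsGT hT) Set.Ioo_subset_Ico_self))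
    refine ge_of_tendsto h1 ?_
    filter_upwards [Ioo_mem_nhdsGT hT] with s h's
    exact (hs.pos h's x).le
  · exact (hs.pos ⟨h0, ht.2⟩ x).le

end IsFDESol

/-- The spatial profile `(R - |x|² / R)^{-2μ}` of the barrier blows up on the sphere of radius `R`;
its Laplacian is controlled by a power of the profile itself, with constants independent of `R`. -/
lemma lapl_barrier {N : ℕ} {R E μ : ℝ} (hR : 0 < R) (hE : 0 ≤ E) (hμ : 0 < μ) {x : Euc N}
    (hx : ‖x‖ < R) :
    lapl (fun y : Euc N => E * (R - ‖y‖ ^ 2 / R) ^ (-(2 * μ))) x ≤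
      (8 * μ * (2 * μ + 1) + 4 * N * μ) * (E * (R - ‖x‖ ^ 2 / R) ^ (-(2 * μ))) *
        (R - ‖x‖ ^ 2 / R) ^ (-2 : ℝ) := by
  have hx2 : ‖x‖ ^ 2 < R ^ 2 := by
    have := norm_nonneg x
    nlinarith
  have hY : ∀ ρ : ℝ, ρ < R ^ 2 → 0 < R - ρ / R := by
    intro ρ hρ
    have : ρ / R < R := by rw [div_lt_iff₀ hR]; nlinarith
    linarith
  have hd : ∀ (q : ℝ) (ρ : ℝ), ρ < R ^ 2 → HasDerivAt (fun ρ => (R - ρ / R) ^ q)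
      (-q / R * (R - ρ / R) ^ (q - 1)) ρ := by
    intro q ρ hρ
    have h1 : HasDerivAt (fun ρ : ℝ => R - ρ / R) (-(1 / R)) ρ :=
      ((hasDerivAt_id' ρ).div_const R).const_sub R
    refine (h1.rpow_const (p := q) (Or.inl (hY ρ hρ).ne')).congr_deriv ?_
    ring
  have h1 : ∀ ρ < R ^ 2, HasDerivAt (fun ρ => E * (R - ρ / R) ^ (-(2 * μ)))
      (E * (-(-(2 * μ)) / R * (R - ρ / R) ^ (-(2 * μ) - 1))) ρ := fun ρ hρ =>
    (hd _ ρ hρ).const_mul E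
  have h2 := ((hd (-(2 * μ) - 1) _ hx2).const_mul (-(-(2 * μ)) / R)).const_mul E
  rw [lapl_radial ((eventually_lt_nhds hx2).mono h1) h2]
  have hy := hY _ hx2
  set y := R - ‖x‖ ^ 2 / R with hydef
  have hyR : y ≤ R := by
    have : 0 ≤ ‖x‖ ^ 2 / R := by positivity
    linarith
  rw [show -(2 * μ) - 1 - 1 = -(2 * μ) + -2 by ring, rpow_add hy, rpow_sub_one hy.ne',
    rpow_neg hy.le 2, rpow_two]
  have hq := rpow_pos_of_pos hy (-(2 * μ))
  set q := y ^ (-(2 * μ))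
  have e : 4 * ‖x‖ ^ 2 * (E * (-(-(2 * μ)) / R * (-(-(2 * μ) - 1) / R * (q * (y ^ 2)⁻¹)))) +
      2 * N * (E * (-(-(2 * μ)) / R * (q / y))) =
      (E * q) * (8 * μ * (2 * μ + 1) * ((‖x‖ ^ 2 / R ^ 2) * (y ^ 2)⁻¹)
        + 4 * N * μ * (y / R * (y ^ 2)⁻¹)) := by
    field_simp
    ring
  rw [e]
  have i1 : ‖x‖ ^ 2 / R ^ 2 ≤ 1 := (div_le_one (by positivity)).2 hx2.le
  have i2 : y / R ≤ 1 := (div_le_one hR).2 hyR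
  have e2 : (8 * μ * (2 * μ + 1) + 4 * N * μ) * (E * q) * (y ^ 2)⁻¹ = (E * q) *
      (8 * μ * (2 * μ + 1) * (1 * (y ^ 2)⁻¹) + 4 * N * μ * (1 * (y ^ 2)⁻¹)) := by ring
  rw [e2]
  gcongr

lemma one_sub_rpow_neg_le {P s : ℝ} (hP : 0 < P) (hs : 0 ≤ s) : 1 - P ^ (-s) ≤ s * (P - 1) := by
  rw [rpow_def_of_pos hP]
  have h1 := Real.add_one_le_exp (log P * -s)
  have h2 := mul_le_mul_of_nonneg_left (log_le_sub_one_of_pos hP) hs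
  linarith

/-- The algebraic heart of the comparison argument: at a first touching point `U = b + Q` of the
powers `U = u^m`, `b = B^m` and the barrier, the two differential inequalities there are
contradictory as soon as the growth rate `lam` of the barrier is large. -/
lemma touch_false {m μ u B Q ut bt C0 K1 lam : ℝ} (hm0 : 0 < m) (hm1 : m < 1)
    (hμ : μ = m / (1 - m)) (hu : 0 < u) (hB : 0 < B) (hQ : 0 < Q)
    (he : u ^ m = B ^ m + Q) (hx : ut ≤ bt + C0 * Q * Q ^ (1 / μ))
    (ht : m * B ^ (m - 1) * bt + lam * Q ≤ m * u ^ (m - 1) * ut)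
    (hC0 : 0 ≤ C0) (hbt : -(K1 * B) ≤ bt) (hK1 : 0 ≤ K1)
    (hlam : m * C0 + m * K1 / μ < lam) : False := by
  have h1m : 0 < 1 - m := by linarith
  have hμ0 : 0 < μ := by rw [hμ]; positivity
  have hpow : ∀ z : ℝ, 0 < z → z ^ (m - 1) = (z ^ m) ^ (-(1 / μ)) := by
    intro z hz
    rw [← rpow_mul hz.le]
    congr 1
    rw [hμ]
    field_simp
    ring
  have hBm : 0 < B ^ m := rpow_pos_of_pos hB _
  have hum : 0 < u ^ m := rpow_pos_of_pos hu _
  have hu1 : 0 < u ^ (m - 1) := rpow_pos_of_pos hu _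
  have hB1 : 0 < B ^ (m - 1) := rpow_pos_of_pos hB _
  have i1 : u ^ (m - 1) ≤ Q ^ (-(1 / μ)) := by
    rw [hpow u hu]
    exact rpow_le_rpow_of_nonpos hQ (by linarith) (by rw [neg_nonpos]; positivity)
  have i1' : u ^ (m - 1) * (C0 * Q * Q ^ (1 / μ)) ≤ C0 * Q := by
    have hq := rpow_pos_of_pos hQ (1 / μ)
    have := mul_le_mul_of_nonneg_right i1 (by positivity : 0 ≤ C0 * Q * Q ^ (1 / μ))
    rw [rpow_neg hQ.le] at this
    calc _ ≤ _ := this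
      _ = C0 * Q := by field_simp
  have i2 : (B ^ (m - 1) - u ^ (m - 1)) * B ≤ 1 / μ * Q := by
    have hP : 0 < u ^ m / B ^ m := by positivity
    have j1 := one_sub_rpow_neg_le (s := 1 / μ) hP (by positivity)
    rw [div_rpow hum.le hBm.le, ← hpow u hu, ← hpow B hB, he] at j1
    have eB : B ^ m = B ^ (m - 1) * B := by
      rw [rpow_sub_one hB.ne']; field_simp
    have j2 := mul_le_mul_of_nonneg_right j1 hBm.le
    have e1 : (1 - u ^ (m - 1) / B ^ (m - 1)) * B ^ m = (B ^ (m - 1) - u ^ (m - 1)) * B := by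
      rw [eB]; field_simp
    have e2 : 1 / μ * ((B ^ m + Q) / B ^ m - 1) * B ^ m = 1 / μ * Q := by
      field_simp; ring
    rw [e1, e2] at j2
    exact j2
  have i0 : u ^ (m - 1) ≤ B ^ (m - 1) := by
    rw [hpow u hu, hpow B hB]
    exact rpow_le_rpow_of_nonpos hBm (by linarith) (by rw [neg_nonpos]; positivity)
  have i3 : (B ^ (m - 1) - u ^ (m - 1)) * (-bt) ≤ K1 * (1 / μ * Q) := by
    calc _ ≤ (B ^ (m - 1) - u ^ (m - 1)) * (K1 * B) :=
          mul_le_mul_of_nonneg_left (by linarith) (by linarith)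
      _ = K1 * ((B ^ (m - 1) - u ^ (m - 1)) * B) := by ring
      _ ≤ _ := mul_le_mul_of_nonneg_left i2 hK1
  have i4 := mul_le_mul_of_nonneg_left hx hu1.le
  have i5 : lam * Q ≤ m * (K1 * (1 / μ * Q) + C0 * Q) := by
    have := mul_le_mul_of_nonneg_left (add_le_add i3 i1') hm0.le
    nlinarith
  have i6 := mul_lt_mul_of_pos_right hlam hQ
  have e : m * (K1 * (1 / μ * Q) + C0 * Q) = (m * C0 + m * K1 / μ) * Q := by field_simp; ring
  linarith

/-- Comparison with the Barenblatt solution plus a barrier on a ball. -/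
lemma comparison_ball {N : ℕ} {m T k : ℝ} (h : Adm N m k) {u : Euc N → ℝ → ℝ} {u₀ : Euc N → ℝ}
    (hs : IsFDESol N m T u u₀) (hupper : ∀ x, u₀ x ≤ Bb N m T k x 0) {t₁ : ℝ}
    (ht₁ : t₁ ∈ Set.Ico 0 T) : ∃ lam : ℝ, ∀ R > 0, ∀ x : Euc N, ‖x‖ < R → ∀ t ∈ Set.Icc 0 t₁,
      u x t ^ m ≤ Bb N m T k x t ^ m
        + exp (lam * t) * (R - ‖x‖ ^ 2 / R) ^ (-(2 * (m / (1 - m)))) := by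
  have hm0 := h.hm0
  have h1m := h.one_sub_pos
  have hT1 : 0 < T - t₁ := by linarith [ht₁.2]
  have hβ : 0 < betaC N m := by
    have := h.a_pos; have := h.hN'; rw [h.beta_eq]; positivity
  set μ := m / (1 - m) with hμ
  have hμ0 : 0 < μ := by positivity
  set C0 := 8 * μ * (2 * μ + 1) + 4 * N * μ with hC0
  have hC00 : 0 ≤ C0 := by positivity
  set K1 := betaC N m / (T - t₁) with hK1
  have hK10 : 0 ≤ K1 := by positivity
  set lam := m * C0 + m * K1 / μ + 1 with hlam
  have hlam0 : 0 ≤ lam := by positivity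
  refine ⟨lam, fun R hR => ?_⟩
  set F : Euc N × ℝ → ℝ := fun p =>
    (u p.1 p.2 ^ m - Bb N m T k p.1 p.2 ^ m) * (R - ‖p.1‖ ^ 2 / R) ^ (2 * μ)
      - exp (lam * p.2) with hF
  set S := Metric.closedBall (0 : Euc N) R ×ˢ Set.Icc 0 t₁ with hS
  have hlt : ∀ {s}, s ∈ Set.Icc 0 t₁ → s < T := fun hs => lt_of_le_of_lt hs.2 ht₁.2
  have hSc : IsCompact S := (isCompact_closedBall _ _).prod isCompact_Icc
  have hFc : ContinuousOn F S := by
    have c1 : ContinuousOn (fun p : Euc N × ℝ => u p.1 p.2 ^ m) S :=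
      (hs.contOn.mono fun p hp => ⟨trivial, hp.2.1, hlt hp.2⟩).rpow_const fun p hp => Or.inr hm0.le
    have c2 : ContinuousOn (fun p : Euc N × ℝ => Bb N m T k p.1 p.2 ^ m) S :=
      (h.B_contDiffOn.continuousOn.mono fun p hp => ⟨trivial, hlt hp.2⟩).rpow_const
        fun p hp => Or.inr hm0.le
    have c3 : ContinuousOn (fun p : Euc N × ℝ => (R - ‖p.1‖ ^ 2 / R) ^ (2 * μ)) S :=
      ContinuousOn.rpow_const (by fun_prop) fun p hp => Or.inr (by positivity)
    exact ((c1.sub c2).mul c3).sub (by fun_prop)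
  have hY : ∀ x : Euc N, ‖x‖ < R → 0 < R - ‖x‖ ^ 2 / R := by
    intro x hx
    have : ‖x‖ ^ 2 / R < R := by
      rw [div_lt_iff₀ hR]; nlinarith [norm_nonneg x]
    linarith
  have hQe : ∀ x : Euc N, ‖x‖ < R → ∀ t, F (x, t) = (R - ‖x‖ ^ 2 / R) ^ (2 * μ) *
      (u x t ^ m - Bb N m T k x t ^ m - exp (lam * t) * (R - ‖x‖ ^ 2 / R) ^ (-(2 * μ))) := by
    intro x hx t
    have := rpow_pos_of_pos (hY x hx) (2 * μ)
    rw [rpow_neg (hY x hx).le]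
    simp only [hF]
    generalize (R - ‖x‖ ^ 2 / R) ^ (2 * μ) = w at *
    field_simp
  -- the claim is negativity of `F`
  suffices hneg : ∀ p ∈ S, F p < 0 by
    intro x hx t ht
    have h1 := hneg (x, t) ⟨by simpa using hx.le, ht⟩
    rw [hQe x hx t] at h1
    have h2 := rpow_pos_of_pos (hY x hx) (2 * μ)
    have := (pos_iff_neg_of_mul_neg h1).1 h2
    linarith
  by_contra! hne
  obtain ⟨p, hpS, hp0⟩ := hne
  set Z := S ∩ F ⁻¹' Set.Ici 0 with hZ
  have hZc : IsCompact Z :=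
    hSc.of_isClosed_subset (hFc.preimage_isClosed_of_isClosed hSc.isClosed isClosed_Ici)
      Set.inter_subset_left
  -- the first touching time
  obtain ⟨⟨x, t⟩, ⟨⟨hxS, htS⟩, hZ0⟩, hmin⟩ :=
    hZc.exists_isMinOn ⟨p, hpS, hp0⟩ (continuous_snd.continuousOn)
  simp only [Set.mem_preimage, Set.mem_Ici] at hZ0
  have hbefore : ∀ y : Euc N, ‖y‖ ≤ R → ∀ s ∈ Set.Ico 0 t, F (y, s) < 0 := by
    intro y hy s hs
    by_contra! hc
    have : t ≤ s := hmin (a := (y, s))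
      ⟨⟨by simpa using hy, hs.1, hs.2.le.trans htS.2⟩, hc⟩
    exact absurd hs.2 (not_lt.2 this)
  have hxR : ‖x‖ < R := by
    refine lt_of_le_of_ne (by simpa using hxS) fun hc => ?_
    have : F (x, t) = -exp (lam * t) := by
      simp only [hF, hc]
      rw [show R - R ^ 2 / R = 0 by field_simp; ring, zero_rpow (by positivity)]
      ring
    have := exp_pos (lam * t)
    linarith
  have ht0 : 0 < t := by
    refine lt_of_le_of_ne htS.1 fun hc => ?_
    have h1 : u x 0 ^ m ≤ Bb N m T k x 0 ^ m := by
      refine rpow_le_rpow (hs.nonneg ⟨le_rfl, ht₁.1.trans_lt ht₁.2⟩ x) ?_ hm0.le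
      rw [hs.2.2.2.1]; exact hupper x
    have h2 : F (x, t) < 0 := by
      rw [← hc, hQe x hxR]
      have h3 := rpow_pos_of_pos (hY x hxR) (2 * μ)
      have h4 := rpow_pos_of_pos (hY x hxR) (-(2 * μ))
      have h5 := exp_pos (lam * 0)
      have := mul_pos h5 h4
      nlinarith
    linarith
  have htT : t < T := hlt htS
  have htI : t ∈ Set.Ioo 0 T := ⟨ht0, htT⟩
  have hat : ∀ y : Euc N, ‖y‖ ≤ R → F (y, t) ≤ 0 := by
    intro y hy
    have hc : ContinuousWithinAt (fun s => F (y, s)) (Set.Icc 0 t₁) t :=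
      (hFc.comp (f := fun s : ℝ => (y, s)) (by fun_prop) fun s hs => ⟨by simpa using hy, hs⟩) t htS
    have h1 : Tendsto (fun s => F (y, s)) (𝓝[<] t) (𝓝 (F (y, t))) :=
      hc.mono_left (nhdsWithin_le_of_mem (mem_of_superset (Ioo_mem_nhdsLT ht0)
        fun s hs => ⟨hs.1.le, hs.2.le.trans htS.2⟩))
    refine le_of_tendsto h1 ?_
    filter_upwards [Ioo_mem_nhdsLT ht0] with s h's
    exact (hbefore y hy s ⟨h's.1.le, h's.2⟩).le
  set E := exp (lam * t) with hE
  have hE1 : 1 ≤ E := one_le_exp (by positivity)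
  have hy0 := hY x hxR
  have hqp := rpow_pos_of_pos hy0 (-(2 * μ))
  set Q := E * (R - ‖x‖ ^ 2 / R) ^ (-(2 * μ)) with hQ
  have hQ0 : 0 < Q := by positivity
  have hle : ∀ y : Euc N, ‖y‖ < R → ∀ s, F (y, s) ≤ 0 →
      u y s ^ m - Bb N m T k y s ^ m - exp (lam * s) * (R - ‖y‖ ^ 2 / R) ^ (-(2 * μ)) ≤ 0 := by
    intro y hy s hys
    rw [hQe y hy s] at hys
    by_contra! hc
    have := mul_pos (rpow_pos_of_pos (hY y hy) (2 * μ)) hc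
    linarith
  have heq : u x t ^ m - Bb N m T k x t ^ m - Q = 0 := by
    refine le_antisymm (hle x hxR t (hat x hxR.le)) ?_
    rw [hQe x hxR t] at hZ0
    exact nonneg_of_mul_nonneg_right hZ0 (rpow_pos_of_pos hy0 (2 * μ))
  -- spatial inequality: the difference of the two sides has a local maximum at `x`
  have hsp : lapl (fun y => u y t ^ m) x ≤ Bt N m T k x t + C0 * Q * Q ^ (1 / μ) := by
    have cB := (h.Bm_contDiff htT).contDiffAt (x := x)
    have cu := (hs.contDiff_pow htI).contDiffAt (x := x)
    have cQ : ContDiffAt ℝ 2 (fun y : Euc N => E * (R - ‖y‖ ^ 2 / R) ^ (-(2 * μ))) x := by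
      refine contDiffAt_const.mul (ContDiffAt.rpow_const_of_ne ?_ hy0.ne')
      exact contDiffAt_const.sub ((contDiff_norm_sq ℝ).contDiffAt.div_const R)
    have hmax : IsLocalMax (fun y => u y t ^ m - Bb N m T k y t ^ m
        - E * (R - ‖y‖ ^ 2 / R) ^ (-(2 * μ))) x := by
      have : ∀ᶠ y in 𝓝 x, ‖y‖ < R := continuous_norm.continuousAt.eventually_lt_const hxR
      filter_upwards [this] with y hy
      rw [heq]
      exact hle y hy t (hat y hy.le)
    have h1 := lapl_nonpos_of_isLocalMax ((cu.sub cB).sub cQ) hmax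
    rw [lapl_sub (cu.sub cB) cQ, lapl_sub cu cB, h.lapl_B htT] at h1
    have h2 := lapl_barrier hR (zero_le_one.trans hE1) hμ0 hxR
    have h3 : (R - ‖x‖ ^ 2 / R) ^ (-2 : ℝ) ≤ Q ^ (1 / μ) := by
      have : (R - ‖x‖ ^ 2 / R) ^ (-2 : ℝ) = ((R - ‖x‖ ^ 2 / R) ^ (-(2 * μ))) ^ (1 / μ) := by
        rw [← rpow_mul hy0.le]; congr 1; field_simp
      rw [this]
      refine rpow_le_rpow hqp.le ?_ (by positivity)
      rw [hQ]
      nlinarith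
    have h4 := mul_le_mul_of_nonneg_left h3 (by positivity : 0 ≤ C0 * Q)
    linarith
  -- inequality for the time derivative from the left
  have htm : m * Bb N m T k x t ^ (m - 1) * Bt N m T k x t + lam * Q ≤
      m * u x t ^ (m - 1) * lapl (fun y => u y t ^ m) x := by
    have d1 := (hs.hasDerivAt htI x).rpow_const (p := m) (Or.inl (hs.pos htI x).ne')
    have d2 := (h.B_hasDerivAt htT x).rpow_const (p := m) (Or.inl (h.B_pos htT x).ne')
    have d3 : HasDerivAt (fun s => exp (lam * s) * (R - ‖x‖ ^ 2 / R) ^ (-(2 * μ)))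
        (exp (lam * t) * (lam * 1) * (R - ‖x‖ ^ 2 / R) ^ (-(2 * μ))) t :=
      (((hasDerivAt_id' t).const_mul lam).exp).mul_const _
    have := deriv_nonneg_of_left_le ((d1.sub d2).sub d3) (by
      filter_upwards [Ioo_mem_nhdsLT ht0] with s h's
      have e : u x t ^ m - Bb N m T k x t ^ m -
        exp (lam * t) * (R - ‖x‖ ^ 2 / R) ^ (-(2 * μ)) = 0 := heq
      simp only [Pi.sub_apply]
      rw [e]
      exact hle x hxR s (hbefore x hxR.le s ⟨h's.1.le, h's.2⟩).le)
    rw [← hE] at this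
    have e : E * (lam * 1) * (R - ‖x‖ ^ 2 / R) ^ (-(2 * μ)) = lam * Q := by rw [hQ]; ring
    rw [e] at this
    linarith
  have hBt : -(K1 * Bb N m T k x t) ≤ Bt N m T k x t := by
    refine le_trans ?_ (h.Bt_ge htT x)
    rw [neg_le_neg_iff, hK1, div_mul_eq_mul_div]
    have hB := h.B_pos htT x
    exact div_le_div_of_nonneg_left (by positivity) hT1 (by linarith [htS.2])
  exact touch_false (lam := lam) hm0 (by linarith) hμ (hs.pos htI x) (h.B_pos htT x) hQ0
    (by linarith) hsp htm hC00 hBt hK10 (by rw [hlam]; linarith)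

/-- Comparison principle: a solution that starts below the Barenblatt solution stays below it. -/
lemma comparison {N : ℕ} {m T k : ℝ} (h : Adm N m k) {u : Euc N → ℝ → ℝ} {u₀ : Euc N → ℝ}
    (hs : IsFDESol N m T u u₀) (hupper : ∀ x, u₀ x ≤ Bb N m T k x 0) {t : ℝ}
    (ht : t ∈ Set.Ico 0 T) (x : Euc N) : u x t ≤ Bb N m T k x t := by
  have hm0 := h.hm0
  have h1m := h.one_sub_pos
  obtain ⟨lam, hl⟩ := comparison_ball h hs hupper ht
  have hlim : Tendsto (fun R : ℝ => R - ‖x‖ ^ 2 / R) atTop atTop := by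
    have : Tendsto (fun R : ℝ => ‖x‖ ^ 2 / R) atTop (𝓝 0) := tendsto_const_nhds.div_atTop tendsto_id
    simpa [sub_eq_add_neg] using tendsto_id.atTop_add this.neg
  have h1 : Tendsto (fun R : ℝ => Bb N m T k x t ^ m
        + exp (lam * t) * (R - ‖x‖ ^ 2 / R) ^ (-(2 * (m / (1 - m))))) atTop
      (𝓝 (Bb N m T k x t ^ m + exp (lam * t) * 0)) :=
    (((tendsto_rpow_neg_atTop (by positivity)).comp hlim).const_mul _).const_add _
  have h2 : u x t ^ m ≤ Bb N m T k x t ^ m + exp (lam * t) * 0 := by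
    refine ge_of_tendsto h1 ?_
    filter_upwards [eventually_gt_atTop ‖x‖, eventually_gt_atTop 0] with R hR hR0
    exact hl R hR0 x hR t ⟨ht.1, le_rfl⟩
  rw [mul_zero, add_zero] at h2
  exact (rpow_le_rpow_iff (hs.nonneg ht x) (h.B_pos ht.2 x).le hm0).1 h2

/-! ### Weighted integrals of the difference of two solutions -/

/-- The properties of `w = B - u` and `v = B^m - u^m` used below: `w_t = Δv`, and `v` is comparable
to `B^{m-1} w = w / P`. -/
structure DiffPair (N : ℕ) (m T k : ℝ) (w v : Euc N → ℝ → ℝ) : Prop where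
  adm : Adm N m k
  w_nonneg : ∀ t ∈ Set.Ico 0 T, ∀ x, 0 ≤ w x t
  w_cont : ContinuousOn (fun p : Euc N × ℝ => w p.1 p.2) (Set.univ ×ˢ Set.Ico 0 T)
  w_der : ∀ t ∈ Set.Ioo 0 T, ∀ x, HasDerivAt (fun s => w x s) (lapl (fun y => v y t) x) t
  lap_cont : ContinuousOn (fun p : Euc N × ℝ => lapl (fun y => v y p.2) p.1)
    (Set.univ ×ˢ Set.Ioo 0 T)
  v_smooth : ∀ t ∈ Set.Ioo 0 T, ContDiff ℝ 2 fun y => v y t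
  v_lower : ∀ t ∈ Set.Ico 0 T, ∀ x, m * w x t ≤ Pp N m T k (‖x‖ ^ 2) t * v x t
  v_upper : ∀ t ∈ Set.Ico 0 T, ∀ x, Pp N m T k (‖x‖ ^ 2) t * v x t ≤ w x t
  w_le : ∀ t ∈ Set.Ico 0 T, ∀ x, w x t ≤ Bb N m T k x t

/-- The difference of the Barenblatt solution and a solution below it forms a `DiffPair`. -/
lemma diffPair_of_sol {N : ℕ} {m T k : ℝ} (h : Adm N m k) {u : Euc N → ℝ → ℝ} {u₀ : Euc N → ℝ}
    (hs : IsFDESol N m T u u₀) (hupper : ∀ x, u₀ x ≤ Bb N m T k x 0) :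
    DiffPair N m T k (fun x t => Bb N m T k x t - u x t)
      (fun x t => Bb N m T k x t ^ m - u x t ^ m) := by
  have hsub : (Set.univ : Set (Euc N)) ×ˢ Set.Ico 0 T ⊆ Set.univ ×ˢ Set.Iio T :=
    Set.prod_mono_right fun t ht => ht.2
  have hsub' : (Set.univ : Set (Euc N)) ×ˢ Set.Ioo 0 T ⊆ Set.univ ×ˢ Set.Iio T :=
    Set.prod_mono_right fun t ht => ht.2
  have hlap : ∀ t ∈ Set.Ioo 0 T, ∀ x, lapl (fun y => Bb N m T k y t ^ m - u y t ^ m) x =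
      Bt N m T k x t - lapl (fun y => u y t ^ m) x := by
    intro t ht x
    rw [lapl_sub (h.Bm_contDiff ht.2).contDiffAt (hs.contDiff_pow ht).contDiffAt, h.lapl_B ht.2]
  have hm0 := h.hm0
  have h1m := h.one_sub_pos
  -- the two-sided comparison of `v` and `B^{m-1} w`, in terms of the ratio `z = u / B`
  have hz : ∀ t ∈ Set.Ico 0 T, ∀ x, ∃ z, 0 ≤ z ∧ z ≤ 1 ∧ u x t = z * Bb N m T k x t ∧
      Pp N m T k (‖x‖ ^ 2) t * (Bb N m T k x t ^ m - u x t ^ m) = (1 - z ^ m) * Bb N m T k x t := by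
    intro t ht x
    have hB := h.B_pos ht.2 x
    have hu := hs.nonneg ht x
    refine ⟨u x t / Bb N m T k x t, by positivity,
      (div_le_one hB).2 (comparison h hs hupper ht x), by field_simp, ?_⟩
    rw [← h.B_pow_one_sub ht.2, div_rpow hu hB.le, rpow_sub hB, rpow_one]
    have := rpow_pos_of_pos hB m
    field_simp
  refine ⟨h, fun t ht x => sub_nonneg.2 (comparison h hs hupper ht x), ?_, ?_, ?_, ?_, ?_, ?_, ?_⟩
  · exact (h.B_contDiffOn.continuousOn.mono hsub).sub hs.contOn
  · intro t ht x
    rw [hlap t ht x]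
    exact (h.B_hasDerivAt ht.2 x).sub (hs.hasDerivAt ht x)
  · refine ((h.Bt_contOn.mono hsub').sub hs.contOn_lapl).congr fun p hp => ?_
    exact hlap p.2 hp.2 p.1
  · exact fun t ht => (h.Bm_contDiff ht.2).sub (hs.contDiff_pow ht)
  · intro t ht x
    obtain ⟨z, hz0, hz1, hu, hv⟩ := hz t ht x
    rw [hv, hu]
    have := rpow_one_add_le_one_add_mul_self (s := z - 1) (p := m) (by linarith) hm0.le
      (by linarith)
    rw [add_sub_cancel] at this
    have hB := h.B_pos ht.2 x
    nlinarith
  · intro t ht x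
    obtain ⟨z, hz0, hz1, hu, hv⟩ := hz t ht x
    rw [hv, hu]
    have := rpow_le_rpow_of_exponent_ge' hz0 hz1 hm0.le (by linarith : m ≤ 1)
    rw [rpow_one] at this
    have hB := h.B_pos ht.2 x
    nlinarith
  · exact fun t ht x => by have := hs.nonneg ht x; linarith

namespace DiffPair

variable {N : ℕ} {m T k : ℝ} {w v : Euc N → ℝ → ℝ}

lemma v_nonneg (d : DiffPair N m T k w v) {t : ℝ} (ht : t ∈ Set.Ico 0 T) (x : Euc N) :
    0 ≤ v x t := by
  have h1 := d.v_lower t ht x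
  have h2 := d.w_nonneg t ht x
  have h3 := d.adm.P_pos' ht.2 x
  have h4 := d.adm.hm0
  by_contra! hc
  nlinarith [mul_neg_of_pos_of_neg h3 hc, mul_nonneg h4.le h2]

lemma w_cont_at (d : DiffPair N m T k w v) {t : ℝ} (ht : t ∈ Set.Ico 0 T) :
    Continuous fun x => w x t :=
  d.w_cont.comp_continuous (f := fun x : Euc N => (x, t)) (by fun_prop) fun _ => ⟨trivial, ht⟩

lemma intOn (d : DiffPair N m T k w v) {t : ℝ} (ht : t ∈ Set.Ico 0 T) (x : Euc N) (R : ℝ) :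
    IntegrableOn (fun x => w x t) (Metric.closedBall x R) :=
  (d.w_cont_at ht).continuousOn.integrableOn_compact (isCompact_closedBall _ _)

/-- The mass of the difference in a centred ball. -/
def mass (w : Euc N → ℝ → ℝ) (R t : ℝ) : ℝ := ∫ x in Metric.closedBall 0 R, w x t

/-- Evolution of a weighted integral `∫ Φ(|x|²,t) w` with a compactly supported radial weight: after
two integrations by parts the time derivative is `∫ (Φ_t w + ΔΦ v)`; a pointwise bound of this
integrand by `c w` is integrated in time. -/
lemma key (d : DiffPair N m T k w v) {Φ Φ1 Φ2 Φt : ℝ → ℝ → ℝ} {p Pf : ℝ → ℝ} {R c t₁ : ℝ}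
    (hR : 0 < R) (hc : 0 ≤ c) (ht₁ : t₁ ∈ Set.Ico 0 T)
    (hΦ : ∀ t ∈ Set.Ioo 0 t₁, ∃ δ > 0, (∀ ρ > -δ, HasDerivAt (fun ρ => Φ ρ t) (Φ1 ρ t) ρ) ∧
      (∀ ρ > -δ, HasDerivAt (fun ρ => Φ1 ρ t) (Φ2 ρ t) ρ) ∧
      ContinuousOn (fun ρ => Φ2 ρ t) (Set.Ioi (-δ)))
    (hΦt : ∀ t ∈ Set.Ioo 0 t₁, ∀ ρ ≥ 0, HasDerivAt (fun s => Φ ρ s) (Φt ρ t) t)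
    (hΦc : ContinuousOn (fun q : ℝ × ℝ => Φ q.1 q.2) (Set.Ici 0 ×ˢ Set.Icc 0 t₁))
    (hΦtc : ContinuousOn (fun q : ℝ × ℝ => Φt q.1 q.2) (Set.Ici 0 ×ˢ Set.Ioo 0 t₁))
    (hsupp : ∀ t, ∀ ρ > R ^ 2, Φ ρ t = 0)
    (hle : ∀ t ∈ Set.Ioo 0 t₁, ∀ x : Euc N, ‖x‖ ≤ R → Φt (‖x‖ ^ 2) t * w x t +
      (4 * ‖x‖ ^ 2 * Φ2 (‖x‖ ^ 2) t + 2 * N * Φ1 (‖x‖ ^ 2) t) * v x t ≤ c * w x t)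
    (hp : ∀ t ∈ Set.Ioo 0 t₁, mass w R t ≤ p t) (hPc : ContinuousOn Pf (Set.Icc 0 t₁))
    (hPd : ∀ t ∈ Set.Ioo 0 t₁, HasDerivAt Pf (p t) t) {t : ℝ} (ht : t ∈ Set.Icc 0 t₁) :
    ∫ x, Φ (‖x‖ ^ 2) t * w x t ≤ (∫ x, Φ (‖x‖ ^ 2) 0 * w x 0) + c * (Pf t - Pf 0) := by
  have hn : Continuous fun x : Euc N => ‖x‖ ^ 2 := by fun_prop
  have hI : ∀ {s}, s ∈ Set.Icc 0 t₁ → s ∈ Set.Ico 0 T := fun hs => ⟨hs.1, hs.2.trans_lt ht₁.2⟩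
  have hO : ∀ {s}, s ∈ Set.Ioo 0 t₁ → s ∈ Set.Ioo 0 T := fun hs => ⟨hs.1, hs.2.trans ht₁.2⟩
  have hO' : ∀ {s}, s ∈ Set.Ioo 0 t₁ → s ∈ Set.Icc 0 t₁ := fun hs => ⟨hs.1.le, hs.2.le⟩
  have hsq : ∀ x : Euc N, x ∉ Metric.closedBall (0 : Euc N) R → R ^ 2 < ‖x‖ ^ 2 := by
    intro x hx
    simp only [Metric.mem_closedBall, dist_zero_right, not_le] at hx
    nlinarith
  have hsuppt : ∀ s ∈ Set.Ioo 0 t₁, ∀ ρ > R ^ 2, Φt ρ s = 0 := by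
    intro s hs ρ hρ
    have h1 : (fun s => Φ ρ s) = fun _ => 0 := funext fun s => hsupp s ρ hρ
    have h2 := hΦt s hs ρ (by nlinarith [sq_nonneg R, hρ.lt])
    rw [h1] at h2
    exact h2.unique (hasDerivAt_const _ _)
  have hcompact : ∀ g : Euc N → ℝ, Continuous g → (∀ x, R ^ 2 < ‖x‖ ^ 2 → g x = 0) →
      Integrable g := fun g hg h0 =>
    hg.integrable_of_hasCompactSupport (hasCompactSupport_of_normSq h0)
  set H : ℝ → ℝ := fun s => ∫ x, Φ (‖x‖ ^ 2) s * w x s with hH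
  have hHc : ContinuousOn H (Set.Icc 0 t₁) := by
    refine continuousOn_integral_of_compact_support
      (f := fun s (x : Euc N) => Φ (‖x‖ ^ 2) s * w x s)
      (isCompact_closedBall (0 : Euc N) R) ?_ ?_
    · refine ContinuousOn.mul ?_ ?_
      · exact hΦc.comp (f := fun q : ℝ × Euc N => (‖q.2‖ ^ 2, q.1)) (by fun_prop)
          fun q hq => ⟨Set.mem_Ici.2 (sq_nonneg _), hq.1⟩
      · exact d.w_cont.comp (f := fun q : ℝ × Euc N => (q.2, q.1)) (by fun_prop)
          fun q hq => ⟨trivial, hI hq.1⟩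
    · intro s x hs hx
      rw [hsupp s _ (hsq x hx), zero_mul]
  have hHd : ∀ s ∈ Set.Ioo 0 t₁, HasDerivAt H
      (∫ x, (Φt (‖x‖ ^ 2) s * w x s + Φ (‖x‖ ^ 2) s * lapl (fun y => v y s) x)) s := by
    intro s hs
    refine hasDerivAt_integral_compact (F := fun s (x : Euc N) => Φ (‖x‖ ^ 2) s * w x s)
      (F' := fun s (x : Euc N) => Φt (‖x‖ ^ 2) s * w x s +
        Φ (‖x‖ ^ 2) s * lapl (fun y => v y s) x)
      (isCompact_closedBall (0 : Euc N) R) ?_ ?_ ?_ ?_ hs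
    · intro s hs x hx
      rw [hsupp s _ (hsq x hx), zero_mul]
    · intro s hs
      refine Continuous.mul ?_ (d.w_cont_at (hI (hO' hs)))
      exact hΦc.comp_continuous (f := fun x : Euc N => (‖x‖ ^ 2, s)) (by fun_prop)
        fun x => ⟨Set.mem_Ici.2 (sq_nonneg _), hO' hs⟩
    · refine ContinuousOn.add (ContinuousOn.mul ?_ ?_) (ContinuousOn.mul ?_ ?_)
      · exact hΦtc.comp (f := fun q : ℝ × Euc N => (‖q.2‖ ^ 2, q.1)) (by fun_prop)
          fun q hq => ⟨Set.mem_Ici.2 (sq_nonneg _), hq.1⟩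
      · exact d.w_cont.comp (f := fun q : ℝ × Euc N => (q.2, q.1)) (by fun_prop)
          fun q hq => ⟨trivial, hI (hO' hq.1)⟩
      · exact hΦc.comp (f := fun q : ℝ × Euc N => (‖q.2‖ ^ 2, q.1)) (by fun_prop)
          fun q hq => ⟨Set.mem_Ici.2 (sq_nonneg _), hO' hq.1⟩
      · exact d.lap_cont.comp (f := fun q : ℝ × Euc N => (q.2, q.1)) (by fun_prop)
          fun q hq => ⟨trivial, hO hq.1⟩
    · exact fun s hs x => (hΦt s hs _ (sq_nonneg _)).mul (d.w_der s (hO hs) x)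
  have hHle : ∀ s ∈ Set.Ioo 0 t₁,
      ∫ x, (Φt (‖x‖ ^ 2) s * w x s + Φ (‖x‖ ^ 2) s * lapl (fun y => v y s) x) ≤ c * p s := by
    intro s hs
    obtain ⟨δ, hδ, e1, e2, e3⟩ := hΦ s hs
    have hpos : ∀ x : Euc N, -δ < ‖x‖ ^ 2 := fun x => by nlinarith [sq_nonneg ‖x‖]
    have c0 : Continuous fun x : Euc N => Φ (‖x‖ ^ 2) s :=
      hΦc.comp_continuous (f := fun x : Euc N => (‖x‖ ^ 2, s)) (by fun_prop)
        fun x => ⟨Set.mem_Ici.2 (sq_nonneg _), hO' hs⟩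
    have ct : Continuous fun x : Euc N => Φt (‖x‖ ^ 2) s :=
      hΦtc.comp_continuous (f := fun x : Euc N => (‖x‖ ^ 2, s)) (by fun_prop)
        fun x => ⟨Set.mem_Ici.2 (sq_nonneg _), hs⟩
    have c1 : Continuous fun x : Euc N => Φ1 (‖x‖ ^ 2) s :=
      ContinuousOn.comp_continuous (g := fun ρ => Φ1 ρ s)
        (fun ρ hρ => (e2 ρ hρ).continuousAt.continuousWithinAt) hn hpos
    have c2 : Continuous fun x : Euc N => Φ2 (‖x‖ ^ 2) s := e3.comp_continuous hn hpos
    have z1 : ∀ ρ > R ^ 2, Φ1 ρ s = 0 := fun ρ hρ =>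
      radial_vanish_deriv (Φ := fun ρ => Φ ρ s) (Φ' := fun ρ => Φ1 ρ s) (hsupp s) hρ (e1 ρ (by nlinarith [hρ.lt]))
    have z2 : ∀ ρ > R ^ 2, Φ2 ρ s = 0 := fun ρ hρ =>
      radial_vanish_deriv (Φ := fun ρ => Φ1 ρ s) (Φ' := fun ρ => Φ2 ρ s) z1 hρ (e2 ρ (by nlinarith [hρ.lt]))
    have cv : Continuous fun x => v x s := (d.v_smooth s (hO hs)).continuous
    have cw := d.w_cont_at (hI (hO' hs))
    have cl : Continuous fun x => lapl (fun y => v y s) x :=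
      d.lap_cont.comp_continuous (f := fun x : Euc N => (x, s)) (by fun_prop)
        fun x => ⟨trivial, hO hs⟩
    have i1 := hcompact (fun x => Φt (‖x‖ ^ 2) s * w x s) (ct.mul cw)
      fun x hx => by rw [hsuppt s hs _ hx, zero_mul]
    have i2 := hcompact (fun x => Φ (‖x‖ ^ 2) s * lapl (fun y => v y s) x) (c0.mul cl)
      fun x hx => by rw [hsupp s _ hx, zero_mul]
    have cL : Continuous fun x : Euc N =>
        (4 * ‖x‖ ^ 2 * Φ2 (‖x‖ ^ 2) s + 2 * N * Φ1 (‖x‖ ^ 2) s) * v x s :=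
      ((((continuous_const.mul hn).mul c2)).add (continuous_const.mul c1)).mul cv
    have zL : ∀ x : Euc N, R ^ 2 < ‖x‖ ^ 2 →
        (4 * ‖x‖ ^ 2 * Φ2 (‖x‖ ^ 2) s + 2 * N * Φ1 (‖x‖ ^ 2) s) * v x s = 0 := fun x hx => by
      rw [z1 _ hx, z2 _ hx]; ring
    have i3 := hcompact _ cL zL
    rw [integral_add i1 i2,
      green_radial hδ e1 e2 e3 (hsupp s) (sq_nonneg R) (d.v_smooth s (hO hs)),
      ← integral_add i1 i3,
      ← setIntegral_eq_integral_of_forall_compl_eq_zero (s := Metric.closedBall (0 : Euc N) R)]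
    · calc _ ≤ ∫ x in Metric.closedBall 0 R, c * w x s := by
            refine setIntegral_mono_on (i1.add i3).integrableOn
              ((d.intOn (hI (hO' hs)) 0 R).const_mul c) measurableSet_closedBall fun x hx => ?_
            exact hle s hs x (by simpa using hx)
        _ = c * mass w R s := integral_const_mul _ _
        _ ≤ c * p s := mul_le_mul_of_nonneg_left (hp s hs) hc
    · intro x hx
      rw [hsuppt s hs _ (hsq x hx), zL x (hsq x hx)]
      ring
  have hanti : AntitoneOn (fun s => H s - c * Pf s) (Set.Icc 0 t₁) := by
    have hdd : ∀ s ∈ Set.Ioo 0 t₁, HasDerivAt (fun s => H s - c * Pf s) _ s := fun s hs =>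
      (hHd s hs).sub ((hPd s hs).const_mul c)
    refine antitoneOn_of_deriv_nonpos (convex_Icc _ _) (hHc.sub (hPc.const_smul c)) ?_ ?_
    · rw [interior_Icc]
      exact fun s hs => (hdd s hs).differentiableAt.differentiableWithinAt
    · rw [interior_Icc]
      intro s hs
      rw [(hdd s hs).deriv]
      linarith [hHle s hs]
  have := hanti ⟨le_rfl, ht.1.trans ht.2⟩ ht ht.1
  simp only [hH] at this
  linarith

end DiffPair

/-! ### The difference is integrable, locally uniformly in time -/

lemma Adm.D_mono {N : ℕ} {m T k s t : ℝ} (h : Adm N m k) (hst : s ≤ t) (ht : t < T) :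
    Dd N m T k s ≤ Dd N m T k t := by
  unfold Dd
  have := h.a_pos
  refine mul_le_mul_of_nonneg_left (rpow_le_rpow_of_nonpos (by linarith) (by linarith) ?_) h.hk.le
  rw [h.gamma_eq]; linarith

namespace DiffPair

variable {N : ℕ} {m T k : ℝ} {w v : Euc N → ℝ → ℝ}

/-- A constant with `v ≤ M (1 + |x|²) w` on the time interval `[0, t₁]`. -/
def growth (N : ℕ) (m T k t₁ : ℝ) : ℝ := (Dd N m T k t₁ + 1) / (Cst N m * (T - t₁))

lemma growth_pos (h : Adm N m k) {t₁ : ℝ} (ht₁ : t₁ < T) : 0 < growth N m T k t₁ := by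
  have := h.D_pos ht₁
  have := h.C_pos
  exact div_pos (by linarith) (mul_pos this (by linarith))

lemma v_eq (d : DiffPair N m T k w v) {t : ℝ} (ht : t ∈ Set.Ico 0 T) (x : Euc N) :
    v x t ≤ (Dd N m T k t + ‖x‖ ^ 2) / (Cst N m * (T - t)) * w x t := by
  have h1 := d.v_upper t ht x
  have hP := d.adm.P_pos' ht.2 x
  have e : (Dd N m T k t + ‖x‖ ^ 2) / (Cst N m * (T - t)) = (Pp N m T k (‖x‖ ^ 2) t)⁻¹ := by
    unfold Pp; rw [inv_div]
  rw [e, inv_mul_eq_div, le_div_iff₀ hP]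
  linarith

lemma v_le (d : DiffPair N m T k w v) {t t₁ : ℝ} (ht : t ∈ Set.Icc 0 t₁) (ht₁ : t₁ < T)
    (x : Euc N) : v x t ≤ growth N m T k t₁ * (1 + ‖x‖ ^ 2) * w x t := by
  have htI : t ∈ Set.Ico 0 T := ⟨ht.1, ht.2.trans_lt ht₁⟩
  refine (d.v_eq htI x).trans (mul_le_mul_of_nonneg_right ?_ (d.w_nonneg t htI x))
  have hC := d.adm.C_pos
  have hD := d.adm.D_pos ht₁
  have h1 : 0 < T - t₁ := by linarith
  have h2 := d.adm.D_mono ht.2 ht₁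
  unfold growth
  rw [div_mul_eq_mul_div]
  refine div_le_div₀ (by positivity) ?_ (by positivity) ?_
  · nlinarith [sq_nonneg ‖x‖, mul_nonneg hD.le (sq_nonneg ‖x‖)]
  · exact mul_le_mul_of_nonneg_left (by linarith [ht.2]) hC.le

lemma hasDerivAt_cutPow_div (n : ℕ) (r ρ : ℝ) : HasDerivAt (fun ρ => cutPow (n + 2) (ρ / r))
    (-(n + 2) / r * cutPow (n + 1) (ρ / r)) ρ := by
  have := (hasDerivAt_cutPow n (ρ / r)).comp ρ ((hasDerivAt_id' ρ).div_const r)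
  exact this.congr_deriv (by ring)

/-- One step of the iteration: the mass in a ball is controlled by the initial mass and the time
integral of the mass in the ball of twice the radius. -/
lemma mass_step (d : DiffPair N m T k w v) {f : Euc N → ℝ} (hf : Integrable f)
    (hwf : ∀ x, w x 0 ≤ f x) {t₁ : ℝ} (ht₁ : t₁ ∈ Set.Ico 0 T) {R : ℝ} (hR : 1 ≤ R) {p Pf : ℝ → ℝ}
    (hp : ∀ t ∈ Set.Ioo 0 t₁, mass w (2 * R) t ≤ p t)
    (hPd : ∀ t, HasDerivAt Pf (p t) t) {t : ℝ} (ht : t ∈ Set.Icc 0 t₁) :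
    mass w R t ≤ 4 * (∫ x, f x) + 4 * (96 * growth N m T k t₁) * (Pf t - Pf 0) := by
  have hG := growth_pos d.adm ht₁.2
  have hI : ∀ {s}, s ∈ Set.Icc 0 t₁ → s ∈ Set.Ico 0 T := fun hs => ⟨hs.1, hs.2.trans_lt ht₁.2⟩
  set r : ℝ := (2 * R) ^ 2 with hr
  have hr4 : 4 ≤ r := by nlinarith
  have hζc : ∀ n, Continuous fun ρ : ℝ => cutPow n (ρ / r) := fun n =>
    (continuous_cutPow n).comp (by fun_prop)
  have hx : ∀ x : Euc N, 0 ≤ ‖x‖ ^ 2 / r := fun x => by positivity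
  have hsupp : ∀ ρ > r, cutPow 4 (ρ / r) = 0 := fun ρ hρ =>
    cutPow_eq_zero (by norm_num) ((one_le_div (by linarith)).2 hρ.le)
  have h1 := d.key (Φ := fun ρ _ => cutPow 4 (ρ / r))
    (Φ1 := fun ρ _ => -4 / r * cutPow 3 (ρ / r))
    (Φ2 := fun ρ _ => -4 / r * (-3 / r * cutPow 2 (ρ / r))) (Φt := fun _ _ => 0)
    (R := 2 * R) (c := 96 * growth N m T k t₁) (t₁ := t₁) (p := p) (Pf := Pf) (t := t)
    (by linarith) (by positivity) ht₁ ?_ ?_ ?_ ?_ ?_ ?_ hp ?_ (fun t _ => hPd t) ht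
  · have hcw : ∀ s ∈ Set.Icc 0 t₁, Integrable fun x : Euc N => cutPow 4 (‖x‖ ^ 2 / r) * w x s :=
      fun s hs => Continuous.integrable_of_hasCompactSupport
        (((hζc 4).comp (by fun_prop : Continuous fun x : Euc N => ‖x‖ ^ 2)).mul
          (d.w_cont_at (hI hs)))
        (hasCompactSupport_of_normSq (R := r) fun x hx => by rw [hsupp _ hx, zero_mul])
    have h2 : ∫ x : Euc N, cutPow 4 (‖x‖ ^ 2 / r) * w x 0 ≤ ∫ x, f x := by
      refine integral_mono (hcw 0 ⟨le_rfl, ht₁.1⟩) hf fun x => ?_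
      have i1 := cutPow_le_one (n := 4) (hx x)
      have i2 := d.w_nonneg 0 (hI ⟨le_rfl, ht₁.1⟩) x
      have := hwf x
      simp only
      nlinarith
    have h3 : mass w R t ≤ ∫ x : Euc N, 4 * (cutPow 4 (‖x‖ ^ 2 / r) * w x t) := by
      have hi := (hcw t ht).const_mul 4
      refine le_trans ?_ (setIntegral_le_integral (s := Metric.closedBall 0 R) hi
        (ae_of_all _ fun x => ?_))
      · refine setIntegral_mono_on (d.intOn (hI ht) 0 R) hi.integrableOn
          measurableSet_closedBall fun x hxR => ?_
        simp only [Metric.mem_closedBall, dist_zero_right] at hxR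
        have hle : ‖x‖ ^ 2 / r ≤ 1 / 4 := by
          rw [div_le_iff₀ (by linarith), hr]
          nlinarith [norm_nonneg x]
        have i2 := d.w_nonneg t (hI ht) x
        have i3 : (3 / 4 : ℝ) ^ 4 ≤ cutPow 4 (‖x‖ ^ 2 / r) := by
          rw [cutPow_of_le (by linarith)]
          exact pow_le_pow_left₀ (by norm_num) (by linarith) 4
        have i4 : (1 : ℝ) / 4 ≤ cutPow 4 (‖x‖ ^ 2 / r) := le_trans (by norm_num) i3
        nlinarith
      · have i1 := cutPow_nonneg 4 (‖x‖ ^ 2 / r)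
        have i2 := d.w_nonneg t (hI ht) x
        simp only [Pi.zero_apply]
        positivity
    rw [integral_const_mul] at h3
    linarith
  · intro s _
    refine ⟨1, one_pos, fun ρ _ => ?_, fun ρ _ => ?_, ?_⟩
    · exact (hasDerivAt_cutPow_div 2 r ρ).congr_deriv (by norm_num)
    · exact ((hasDerivAt_cutPow_div 1 r ρ).const_mul (-4 / r)).congr_deriv (by norm_num)
    · exact (continuous_const.mul (continuous_const.mul (hζc 2))).continuousOn
  · exact fun s _ ρ _ => hasDerivAt_const _ _
  · exact ((hζc 4).comp continuous_fst).continuousOn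
  · exact continuousOn_const
  · exact fun _ ρ hρ => hsupp ρ hρ
  · intro s hs x hxR
    have hs' : s ∈ Set.Icc 0 t₁ := ⟨hs.1.le, hs.2.le⟩
    have hv0 := d.v_nonneg (hI hs') x
    have hv := d.v_le hs' ht₁.2 x
    have hw := d.w_nonneg s (hI hs') x
    have hxr : ‖x‖ ^ 2 ≤ r := by rw [hr]; nlinarith [norm_nonneg x]
    have i1 := cutPow_le_one (n := 2) (hx x)
    have i2 := cutPow_nonneg 3 (‖x‖ ^ 2 / r)
    have i3 : 4 * ‖x‖ ^ 2 * (-4 / r * (-3 / r * cutPow 2 (‖x‖ ^ 2 / r))) +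
        2 * N * (-4 / r * cutPow 3 (‖x‖ ^ 2 / r)) ≤ 48 / r := by
      have e1 : 4 * ‖x‖ ^ 2 * (-4 / r * (-3 / r * cutPow 2 (‖x‖ ^ 2 / r))) =
        48 / r * (‖x‖ ^ 2 / r * cutPow 2 (‖x‖ ^ 2 / r)) := by ring
      have e2 : 2 * N * (-4 / r * cutPow 3 (‖x‖ ^ 2 / r)) =
        -(8 * N / r * cutPow 3 (‖x‖ ^ 2 / r)) := by ring
      have j1 : ‖x‖ ^ 2 / r * cutPow 2 (‖x‖ ^ 2 / r) ≤ 1 * 1 :=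
        mul_le_mul ((div_le_one (by linarith)).2 hxr) i1 (cutPow_nonneg _ _) one_pos.le
      have j2 : 0 ≤ 8 * N / r * cutPow 3 (‖x‖ ^ 2 / r) := by positivity
      have j3 := mul_le_mul_of_nonneg_left j1 (by positivity : 0 ≤ 48 / r)
      rw [e1, e2]
      linarith
    have i4 := mul_le_mul_of_nonneg_right i3 hv0
    have i5 : 48 / r * v x s ≤ 48 / r * (growth N m T k t₁ * (2 * r) * w x s) := by
      refine mul_le_mul_of_nonneg_left (hv.trans ?_) (by positivity)
      gcongr
      linarith
    have e : 48 / r * (growth N m T k t₁ * (2 * r) * w x s) = 96 * growth N m T k t₁ * w x s := by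
      field_simp; ring
    linarith
  · exact fun s _ => (hPd s).continuousAt.continuousWithinAt

/-- The mass of the difference in arbitrary balls is bounded, uniformly on compact time
intervals: iterating `mass_step` beats the polynomial a priori bound by a factorial. -/
lemma mass_bound (d : DiffPair N m T k w v) {f : Euc N → ℝ} (hf : Integrable f)
    (hwf : ∀ x, w x 0 ≤ f x) {t₁ : ℝ} (ht₁ : t₁ ∈ Set.Ico 0 T) :
    ∃ S, ∀ R ≥ 1, ∀ t ∈ Set.Icc 0 t₁, mass w R t ≤ S := by
  have hG := growth_pos d.adm ht₁.2
  have hI : ∀ {s}, s ∈ Set.Icc 0 t₁ → s ∈ Set.Ico 0 T := fun hs => ⟨hs.1, hs.2.trans_lt ht₁.2⟩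
  set F := ∫ x, f x with hF
  have hF0 : 0 ≤ F := integral_nonneg fun x =>
    (d.w_nonneg 0 (hI ⟨le_rfl, ht₁.1⟩) x).trans (hwf x)
  set c := 4 * (96 * growth N m T k t₁) with hc
  have hc0 : 0 < c := by positivity
  set Bmax := (Cst N m / k) ^ (1 / (1 - m)) * T ^ betaC N m with hB
  set K := Bmax * volume.real (Metric.ball (0 : Euc N) 1) with hK
  have hβ : 0 < betaC N m := by
    have := d.adm.a_pos; have := d.adm.hN'; rw [d.adm.beta_eq]; positivity
  have hwB : ∀ t ∈ Set.Icc 0 t₁, ∀ x, w x t ≤ Bmax := by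
    intro t ht x
    refine (d.w_le t (hI ht) x).trans ((d.adm.B_le (hI ht).2 x).trans ?_)
    have := (hI ht).2
    have hC := d.adm.C_pos
    have hk := d.adm.hk
    refine mul_le_mul_of_nonneg_left
      (rpow_le_rpow (by linarith) (by linarith [ht.1]) hβ.le) (by positivity)
  have main : ∀ j : ℕ, ∀ R ≥ 1, ∀ t ∈ Set.Icc 0 t₁, mass w R t ≤
      4 * F * exp (c * t) + (c * t) ^ j / j.factorial * (K * (2 ^ j * R) ^ N) := by
    intro j
    induction j with
    | zero =>
      intro R hR t ht
      have h1 : mass w R t ≤ K * R ^ N := by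
        calc mass w R t ≤ ∫ x in Metric.closedBall (0 : Euc N) R, Bmax :=
              setIntegral_mono_on (d.intOn (hI ht) 0 R)
                (continuousOn_const.integrableOn_compact (isCompact_closedBall _ _))
                measurableSet_closedBall fun x _ => hwB t ht x
          _ = K * R ^ N := by
              rw [setIntegral_const, Measure.real, Measure.addHaar_closedBall _ _ (by linarith),
                ENNReal.toReal_mul, ENNReal.toReal_ofReal (by positivity), hK, Measure.real,
                finrank_euclideanSpace_fin, smul_eq_mul]
              ring
      have h2 : 0 ≤ 4 * F * exp (c * t) := by positivity
      simp only [pow_zero, Nat.factorial_zero, Nat.cast_one, div_one, one_mul]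
      linarith
    | succ j ih =>
      intro R hR t ht
      have h1 := d.mass_step hf hwf ht₁ hR (t := t)
        (p := fun t => 4 * F * exp (c * t) +
          (c * t) ^ j / j.factorial * (K * (2 ^ j * (2 * R)) ^ N))
        (Pf := fun t => 4 * F * (exp (c * t) / c) +
          c ^ j * (t ^ (j + 1) / (j + 1)) / j.factorial * (K * (2 ^ j * (2 * R)) ^ N))
        (fun s hs => ih (2 * R) (by linarith) s ⟨hs.1.le, hs.2.le⟩) ?_ ht
      · refine h1.trans (le_of_eq ?_)
        rw [← hc, ← hF, Nat.factorial_succ]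
        push_cast
        have : (j.factorial : ℝ) ≠ 0 := by positivity
        rw [mul_zero, exp_zero, zero_pow (by omega)]
        field_simp
        ring
      · intro s
        have e1 : HasDerivAt (fun t => exp (c * t)) (exp (c * s) * (c * 1)) s :=
          ((hasDerivAt_id' s).const_mul c).exp
        have e2 := hasDerivAt_pow (j + 1) s
        refine (((e1.div_const c).const_mul (4 * F)).add
          ((((e2.div_const ((j : ℝ) + 1)).const_mul (c ^ j)).div_const _).mul_const _)).congr_deriv ?_
        have : (j.factorial : ℝ) ≠ 0 := by positivity
        push_cast
        clear_value c K F
        rw [mul_pow c s]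
        field_simp
  refine ⟨4 * F * exp (c * t₁), fun R hR t ht => ?_⟩
  have hlim : Tendsto (fun j : ℕ => 4 * F * exp (c * t) +
      (c * t * 2 ^ N) ^ j / j.factorial * (K * R ^ N)) atTop
      (𝓝 (4 * F * exp (c * t) + 0 * (K * R ^ N))) :=
    ((FloorSemiring.tendsto_pow_div_factorial_atTop _).mul_const _).const_add _
  have h1 : mass w R t ≤ 4 * F * exp (c * t) + 0 * (K * R ^ N) := by
    refine ge_of_tendsto hlim (Eventually.of_forall fun j => ?_)
    refine (main j R hR t ht).trans (le_of_eq ?_)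
    rw [mul_pow (2 ^ j), mul_pow (c * t) (2 ^ N), ← pow_mul, ← pow_mul, mul_comm j N]
    ring
  have h2 : exp (c * t) ≤ exp (c * t₁) := exp_le_exp.2 (mul_le_mul_of_nonneg_left ht.2 hc0.le)
  have h3 := mul_le_mul_of_nonneg_left h2 (by positivity : 0 ≤ 4 * F)
  linarith

end DiffPair

/-! ### The weight and its differential inequalities -/

/-- The denominator `E = 1 + ℓ + b (1 + s)²` of the weight. -/
def gE (b s l : ℝ) : ℝ := 1 + l + b * (1 + s) ^ 2

/-- The weight `E^{-1/4} (1 + ℓ)^{3/16}`, a function of the logarithmic radius `s` and the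
logarithmic remaining time `ℓ`. It is a supersolution of the dual equation in these variables, is
of order one at `ℓ = 0` for bounded `s`, and is at most `(1 + ℓ)^{-1/16}`. -/
def gf (b s l : ℝ) : ℝ := gE b s l ^ (-(1 / 4) : ℝ) * (1 + l) ^ (3 / 16 : ℝ)

/-- The derivative of the weight in `s`. -/
def gs (b s l : ℝ) : ℝ := -(b * (1 + s) / (2 * gE b s l)) * gf b s l

/-- The second derivative of the weight in `s`. -/
def gss (b s l : ℝ) : ℝ :=
  -(b / (2 * gE b s l)) * (1 - 5 / 2 * (b * (1 + s) ^ 2 / gE b s l)) * gf b s l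

/-- The derivative of the weight in `ℓ`. -/
def gl (b s l : ℝ) : ℝ :=
  1 / (1 + l) * (-(1 / 16) + 1 / 4 * (b * (1 + s) ^ 2 / gE b s l)) * gf b s l

section weight

variable {b s l : ℝ}

lemma gE_pos (hb : 0 < b) (hl : -1 < l) : 0 < gE b s l := by
  unfold gE
  have : 0 < 1 + l := by linarith
  positivity

lemma gf_pos (hb : 0 < b) (hl : -1 < l) : 0 < gf b s l :=
  mul_pos (rpow_pos_of_pos (gE_pos hb hl) _) (rpow_pos_of_pos (by linarith) _)

lemma gf_hasDerivAt (hb : 0 < b) {S L : ℝ → ℝ} {S' L' t : ℝ} (hL0 : -1 < L t)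
    (hS : HasDerivAt S S' t) (hL : HasDerivAt L L' t) :
    HasDerivAt (fun t => gf b (S t) (L t)) (gs b (S t) (L t) * S' + gl b (S t) (L t) * L') t := by
  have hE := gE_pos (s := S t) hb hL0
  have h1 : 0 < 1 + L t := by linarith
  have d1 : HasDerivAt (fun t => gE b (S t) (L t)) (L' + b * (2 * (1 + S t) * S')) t :=
    ((hL.const_add 1).add (((hS.const_add 1).fun_pow 2).const_mul b)).congr_deriv (by
      push_cast; ring)
  have d2 := (d1.rpow_const (p := -(1 / 4)) (Or.inl hE.ne')).mul
    ((hL.const_add 1).rpow_const (p := 3 / 16) (Or.inl h1.ne'))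
  refine d2.congr_deriv ?_
  have e : b * (1 + S t) ^ 2 = gE b (S t) (L t) - (1 + L t) := by unfold gE; ring
  unfold gs gl gf
  rw [e, rpow_sub_one hE.ne', rpow_sub_one h1.ne']
  field_simp
  ring

lemma gf_hasDerivAt_s (hb : 0 < b) (hl : -1 < l) :
    HasDerivAt (fun s => gf b s l) (gs b s l) s :=
  (gf_hasDerivAt hb (L := fun _ => l) hl (hasDerivAt_id' s) (hasDerivAt_const _ _)).congr_deriv
    (by ring)

lemma gs_hasDerivAt (hb : 0 < b) (hl : -1 < l) :
    HasDerivAt (fun s => gs b s l) (gss b s l) s := by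
  have hE := gE_pos (s := s) hb hl
  have d0 : HasDerivAt (fun s : ℝ => 1 + s) 1 s := (hasDerivAt_id' s).const_add 1
  have d1 : HasDerivAt (fun s => gE b s l) (b * (2 * (1 + s))) s :=
    (((d0.fun_pow 2).const_mul b).const_add (1 + l)).congr_deriv (by push_cast; ring)
  have d2 := (((d0.const_mul b).div (d1.const_mul 2) (by positivity)).neg).mul
    (gf_hasDerivAt_s (s := s) hb hl)
  refine d2.congr_deriv ?_
  simp only [Pi.neg_apply, Pi.div_apply]
  unfold gss gs
  field_simp
  ring

lemma gf_le (hb : 0 < b) (hl : -1 < l) : gf b s l ≤ (1 + l) ^ (-(1 / 16) : ℝ) := by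
  have h1 : 0 < 1 + l := by linarith
  have h2 : gE b s l ^ (-(1 / 4) : ℝ) ≤ (1 + l) ^ (-(1 / 4) : ℝ) :=
    rpow_le_rpow_of_nonpos h1 (by unfold gE; nlinarith [sq_nonneg (1 + s)]) (by norm_num)
  have h3 := mul_le_mul_of_nonneg_right h2 (rpow_pos_of_pos h1 (3 / 16)).le
  rw [← rpow_add h1] at h3
  norm_num at h3 ⊢
  unfold gf
  norm_num
  exact h3

lemma gf_le_one (hb : 0 < b) (hl : 0 ≤ l) : gf b s l ≤ 1 :=
  (gf_le hb (by linarith)).trans (rpow_le_one_of_one_le_of_nonpos (by linarith) (by norm_num))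

/-- The ratio `ξ = b (1 + s)² / E`, which lies in `[0, 1]`, and its complement `(1 + ℓ) / E`. -/
lemma xi_facts (hb : 0 < b) (hl : 0 ≤ l) : ∃ ξ, ξ = b * (1 + s) ^ 2 / gE b s l ∧ 0 ≤ ξ ∧ ξ ≤ 1 ∧
    1 / gE b s l = (1 - ξ) / (1 + l) := by
  have hE := gE_pos (s := s) (l := l) hb (by linarith)
  have h1 : 0 < 1 + l := by linarith
  refine ⟨_, rfl, by positivity, (div_le_one hE).2 (by unfold gE; linarith), ?_⟩
  have e : b * (1 + s) ^ 2 = gE b s l - (1 + l) := by unfold gE; ring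
  rw [e]
  field_simp
  ring

lemma gs_nonpos (hb : 0 < b) (hl : 0 ≤ l) (hs : 0 ≤ s) : gs b s l ≤ 0 := by
  have hE := gE_pos (s := s) (l := l) hb (by linarith)
  have hg := gf_pos (s := s) (l := l) hb (by linarith)
  have : 0 ≤ b * (1 + s) / (2 * gE b s l) * gf b s l := by positivity
  unfold gs; linarith

lemma gs_ge (hb : 0 < b) (hl : 0 ≤ l) (hs : 0 ≤ s) : -(1 / 2) ≤ gs b s l := by
  have hE := gE_pos (s := s) (l := l) hb (by linarith)
  have hg := gf_pos (s := s) (l := l) hb (by linarith)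
  have hg1 := gf_le_one (s := s) hb hl
  have h1 : b * (1 + s) / (2 * gE b s l) ≤ 1 / 2 := by
    rw [div_le_div_iff₀ (by positivity) (by norm_num)]
    unfold gE
    nlinarith [mul_nonneg hb.le hs, mul_nonneg (mul_nonneg hb.le hs) hs]
  have h2 := mul_le_mul h1 hg1 hg.le (by norm_num)
  unfold gs; linarith

/-- The inequality for the weight that governs large radii: in `weight_ineq` it enters with the
factor `θ = |x|² / (D + |x|²)`. The choice of `b` is made for it. -/
lemma gss_le_gl {c : ℝ} (hc : 0 < c) (hb : b = 1 / (8 * c)) (hl : 0 ≤ l) :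
    4 * c * gss b s l ≤ gl b s l := by
  have hb0 : 0 < b := by rw [hb]; positivity
  have hg := gf_pos (s := s) (l := l) hb0 (by linarith)
  obtain ⟨ξ, hξ, h0, h1, hE⟩ := xi_facts (s := s) hb0 hl
  have hl1 : 0 < 1 + l := by linarith
  have e1 : 4 * c * gss b s l = gf b s l / (1 + l) * (-(1 / 4) * (1 - ξ) * (1 - 5 / 2 * ξ)) := by
    have : 4 * c * gss b s l = -(2 * (c * b)) * (1 / gE b s l) *
        (1 - 5 / 2 * (b * (1 + s) ^ 2 / gE b s l)) * gf b s l := by unfold gss; ring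
    rw [this, ← hξ, hE, show c * b = 1 / 8 by rw [hb]; field_simp]
    ring
  have e2 : gl b s l = gf b s l / (1 + l) * (-(1 / 16) + 1 / 4 * ξ) := by
    unfold gl; rw [← hξ]; ring
  rw [e1, e2]
  refine mul_le_mul_of_nonneg_left ?_ (by positivity)
  nlinarith [sq_nonneg (ξ - 1 / 2)]

/-- The inequality for the weight that governs small radii: in `weight_ineq` it enters with the
factor `1 - θ = D / (D + |x|²)`. -/
lemma gs_le_gl {c N : ℝ} (hc : 0 < c) (hb : b = 1 / (8 * c)) (hl : 0 ≤ l) (hs : 0 ≤ s)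
    (hN : 5 ≤ N) : 2 * N * c * gs b s l ≤ gl b s l := by
  have hb0 : 0 < b := by rw [hb]; positivity
  have hg := gf_pos (s := s) (l := l) hb0 (by linarith)
  obtain ⟨ξ, hξ, h0, h1, hE⟩ := xi_facts (s := s) hb0 hl
  have hl1 : 0 < 1 + l := by linarith
  have e1 : 2 * N * c * gs b s l = gf b s l / (1 + l) * (-(N / 8) * (1 + s) * (1 - ξ)) := by
    have : 2 * N * c * gs b s l = -(N * (c * b)) * (1 + s) * (1 / gE b s l) * gf b s l := by
      unfold gs; ring
    rw [this, hE, show c * b = 1 / 8 by rw [hb]; field_simp]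
    ring
  have e2 : gl b s l = gf b s l / (1 + l) * (-(1 / 16) + 1 / 4 * ξ) := by
    unfold gl; rw [← hξ]; ring
  rw [e1, e2]
  refine mul_le_mul_of_nonneg_left ?_ (by positivity)
  have h2 : 5 / 8 * (1 - ξ) ≤ N / 8 * (1 + s) * (1 - ξ) := by
    refine mul_le_mul_of_nonneg_right ?_ (by linarith)
    nlinarith
  linarith

/-- With `s` the logarithmic radius this makes the weight superharmonic in dimension `N ≥ 5`. -/
lemma gss_le (hb : 0 < b) (hl : 0 ≤ l) (hs : 0 ≤ s) {N : ℝ} (hN : 5 ≤ N) :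
    gss b s l ≤ -((N / 2 - 1) * gs b s l) := by
  have hE := gE_pos (s := s) (l := l) hb (by linarith)
  have hg := gf_pos (s := s) (l := l) hb (by linarith)
  obtain ⟨ξ, hξ, h0, h1, -⟩ := xi_facts (s := s) hb hl
  have e1 : gss b s l = b / (2 * gE b s l) * gf b s l * (-1 + 5 / 2 * ξ) := by
    unfold gss; rw [← hξ]; ring
  have e2 : -((N / 2 - 1) * gs b s l) =
      b / (2 * gE b s l) * gf b s l * ((N / 2 - 1) * (1 + s)) := by
    unfold gs; ring
  rw [e1, e2]
  refine mul_le_mul_of_nonneg_left ?_ (by positivity)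
  nlinarith

lemma gf_contOn (hb : 0 < b) :
    ContinuousOn (fun q : ℝ × ℝ => gf b q.1 q.2) (Set.univ ×ˢ Set.Ioi (-1)) := by
  have hE : ContinuousOn (fun q : ℝ × ℝ => gE b q.1 q.2) (Set.univ ×ˢ Set.Ioi (-1)) := by
    unfold gE; fun_prop
  refine ContinuousOn.mul (hE.rpow_const fun q hq => Or.inl (gE_pos hb hq.2).ne') ?_
  refine ContinuousOn.rpow_const (by fun_prop) fun q hq => Or.inl ?_
  have : -1 < q.2 := hq.2
  linarith

lemma gs_contOn (hb : 0 < b) :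
    ContinuousOn (fun q : ℝ × ℝ => gs b q.1 q.2) (Set.univ ×ˢ Set.Ioi (-1)) := by
  have hE : ContinuousOn (fun q : ℝ × ℝ => gE b q.1 q.2) (Set.univ ×ˢ Set.Ioi (-1)) := by
    unfold gE; fun_prop
  refine ContinuousOn.mul (ContinuousOn.neg (ContinuousOn.div (by fun_prop)
    (hE.const_mul 2) fun q hq => ?_)) (gf_contOn hb)
  have := gE_pos (s := q.1) hb hq.2
  positivity

lemma gss_contOn (hb : 0 < b) :
    ContinuousOn (fun q : ℝ × ℝ => gss b q.1 q.2) (Set.univ ×ˢ Set.Ioi (-1)) := by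
  have hE : ContinuousOn (fun q : ℝ × ℝ => gE b q.1 q.2) (Set.univ ×ˢ Set.Ioi (-1)) := by
    unfold gE; fun_prop
  refine ContinuousOn.mul (ContinuousOn.mul (ContinuousOn.neg (ContinuousOn.div (by fun_prop)
    (hE.const_mul 2) fun q hq => ?_)) (ContinuousOn.sub (by fun_prop) (ContinuousOn.mul
    (by fun_prop) (ContinuousOn.div (by fun_prop) hE fun q hq => (gE_pos hb hq.2).ne'))))
    (gf_contOn hb)
  have := gE_pos (s := q.1) hb hq.2
  positivity

lemma gl_contOn (hb : 0 < b) :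
    ContinuousOn (fun q : ℝ × ℝ => gl b q.1 q.2) (Set.univ ×ˢ Set.Ioi (-1)) := by
  have hE : ContinuousOn (fun q : ℝ × ℝ => gE b q.1 q.2) (Set.univ ×ˢ Set.Ioi (-1)) := by
    unfold gE; fun_prop
  refine ContinuousOn.mul (ContinuousOn.mul (ContinuousOn.div (by fun_prop) (by fun_prop)
    fun q hq => ?_) (ContinuousOn.add (by fun_prop) (ContinuousOn.mul
    (by fun_prop) (ContinuousOn.div (by fun_prop) hE fun q hq => (gE_pos hb hq.2).ne'))))
    (gf_contOn hb)
  have : -1 < q.2 := hq.2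
  linarith

end weight

/-! ### Decay of the rescaled mass of the difference -/

/-- The logarithmic radius `s = log ((D(t) + ρ) / D(t))`, where `ρ = |x|²`. -/
def sV (N : ℕ) (m T k ρ t : ℝ) : ℝ := log (Dd N m T k t + ρ) - log (Dd N m T k t)

/-- The logarithmic time `ℓ = log ((T - t) / (T - t₁))` remaining until `t₁`. -/
def lV (T t₁ t : ℝ) : ℝ := log (T - t) - log (T - t₁)

/-- The logarithmic cutoff `(1 - log (1 + ρ) / L)₊ⁿ`. -/
def zV (n : ℕ) (L ρ : ℝ) : ℝ := cutPow n (log (1 + ρ) / L)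

lemma sV_nonneg {N : ℕ} {m T k ρ t : ℝ} (h : Adm N m k) (ht : t < T) (hρ : 0 ≤ ρ) :
    0 ≤ sV N m T k ρ t :=
  sub_nonneg.2 (log_le_log (h.D_pos ht) (by linarith))

lemma sV_hasDerivAt_rho {N : ℕ} {m T k ρ t : ℝ} (hρ : -Dd N m T k t < ρ) :
    HasDerivAt (fun ρ => sV N m T k ρ t) (1 / (Dd N m T k t + ρ)) ρ :=
  (((hasDerivAt_id' ρ).const_add (Dd N m T k t)).log (by linarith)).sub_const _

lemma sV_hasDerivAt_t {N : ℕ} {m T k ρ t : ℝ} (h : Adm N m k) (ht : t < T) (hρ : 0 ≤ ρ) :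
    HasDerivAt (fun t => sV N m T k ρ t)
      (-(2 * aC N m / (T - t) * (ρ / (Dd N m T k t + ρ)))) t := by
  have hD := h.D_pos ht
  have h1 : 0 < T - t := by linarith
  have d := h.D_hasDerivAt ht
  refine (((d.add_const ρ).log (by linarith)).sub (d.log hD.ne')).congr_deriv ?_
  have : Dd N m T k t + ρ ≠ 0 := by linarith
  field_simp
  ring

lemma lV_nonneg {T t₁ t : ℝ} (ht : t ≤ t₁) (ht₁ : t₁ < T) : 0 ≤ lV T t₁ t :=
  sub_nonneg.2 (log_le_log (by linarith) (by linarith))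

lemma lV_hasDerivAt {T t₁ t : ℝ} (ht : t < T) : HasDerivAt (lV T t₁) (-(1 / (T - t))) t :=
  ((((hasDerivAt_id' t).const_sub T).log (by linarith)).sub_const _).congr_deriv (by ring)

lemma sV_contOn {N : ℕ} {m T k t₁ : ℝ} (h : Adm N m k) (ht₁ : t₁ < T) :
    ContinuousOn (fun q : ℝ × ℝ => sV N m T k q.1 q.2) (Set.Ici 0 ×ˢ Set.Icc 0 t₁) := by
  have hD : ContinuousOn (fun q : ℝ × ℝ => Dd N m T k q.2) (Set.Ici 0 ×ˢ Set.Icc 0 t₁) :=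
    h.D_cont.comp continuousOn_snd fun q hq => hq.2.2.trans_lt ht₁
  have hp : ∀ q ∈ (Set.Ici 0 ×ˢ Set.Icc 0 t₁ : Set (ℝ × ℝ)), 0 < Dd N m T k q.2 := fun q hq =>
    h.D_pos (hq.2.2.trans_lt ht₁)
  refine ContinuousOn.sub (ContinuousOn.log (hD.add continuousOn_fst) fun q hq => ?_)
    (hD.log fun q hq => (hp q hq).ne')
  have h1 : (0:ℝ) ≤ q.1 := hq.1
  have := hp q hq
  positivity

lemma lV_contOn {T t₁ : ℝ} (ht₁ : t₁ < T) :
    ContinuousOn (fun q : ℝ × ℝ => lV T t₁ q.2) (Set.Ici 0 ×ˢ Set.Icc 0 t₁) := by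
  refine ContinuousOn.sub (ContinuousOn.log (by fun_prop) fun q hq => ?_) continuousOn_const
  have : q.2 ≤ t₁ := hq.2.2
  linarith

lemma zV_hasDerivAt (n : ℕ) {L ρ : ℝ} (hρ : -1 < ρ) :
    HasDerivAt (zV (n + 2) L) (-(n + 2) / (L * (1 + ρ)) * zV (n + 1) L ρ) ρ := by
  have h1 : HasDerivAt (fun ρ => log (1 + ρ) / L) (1 / (1 + ρ) / L) ρ :=
    (((hasDerivAt_id' ρ).const_add 1).log (by linarith)).div_const L
  refine ((hasDerivAt_cutPow n _).comp ρ h1).congr_deriv ?_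
  unfold zV
  rw [div_div, mul_comm (1 + ρ) L]
  ring

lemma zV_contOn (n : ℕ) (L : ℝ) : ContinuousOn (zV n L) (Set.Ioi (-1)) := by
  refine (continuous_cutPow n).comp_continuousOn (ContinuousOn.div_const
    (ContinuousOn.log (by fun_prop) fun ρ hρ => ?_) L)
  have : -1 < ρ := hρ
  linarith

lemma zV_nonneg (n : ℕ) (L ρ : ℝ) : 0 ≤ zV n L ρ := cutPow_nonneg _ _

lemma zV_le_one (n : ℕ) {L ρ : ℝ} (hL : 0 < L) (hρ : 0 ≤ ρ) : zV n L ρ ≤ 1 :=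
  cutPow_le_one n (div_nonneg (log_nonneg (by linarith)) hL.le)

/-- The pointwise inequality saying that the weight is a supersolution of the dual equation for
every admissible ratio `v / w`. -/
lemma weight_ineq {N c a τ θ e g1 g2 g3 w v : ℝ} (hτ : 0 < τ) (hθ : 0 ≤ θ) (hθ1 : θ ≤ 1)
    (he : 0 < e) (hN : 5 ≤ N) (ha : a ≤ c * (N - 2)) (h1 : g1 ≤ 0) (h2 : 4 * c * g2 ≤ g3)
    (h3 : 2 * N * c * g1 ≤ g3) (h4 : g2 ≤ -((N / 2 - 1) * g1)) (hw : 0 ≤ w)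
    (hv : c * e / τ * w ≤ v) :
    (g1 * -(2 * a / τ * θ) + g3 * -(1 / τ)) * w + (4 * θ * (g2 - g1) + 2 * N * g1) / e * v ≤ 0 := by
  have hneg : 4 * θ * (g2 - g1) + 2 * N * g1 ≤ 0 := by
    nlinarith [mul_le_mul_of_nonneg_left h4 hθ, mul_nonneg (sub_nonneg.2 hθ1) (neg_nonneg.2 h1)]
  have i1 := mul_le_mul_of_nonpos_left hv (div_nonpos_of_nonpos_of_nonneg hneg he.le)
  have i2 : (4 * θ * (g2 - g1) + 2 * N * g1) / e * (c * e / τ * w) =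
      (4 * θ * (g2 - g1) + 2 * N * g1) * c / τ * w := by field_simp
  have i3 : (g1 * -(2 * a / τ * θ) + g3 * -(1 / τ)) * w +
      (4 * θ * (g2 - g1) + 2 * N * g1) * c / τ * w =
      (-(2 * a * θ * g1) - g3 + (4 * θ * (g2 - g1) + 2 * N * g1) * c) * (w / τ) := by
    field_simp
    ring
  have i4 : -(2 * a * θ * g1) - g3 + (4 * θ * (g2 - g1) + 2 * N * g1) * c ≤ 0 := by
    have j1 := mul_le_mul_of_nonneg_left ha (mul_nonneg hθ (neg_nonneg.2 h1))
    have j2 := mul_le_mul_of_nonneg_left h2 hθ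
    have j3 := mul_le_mul_of_nonneg_left h3 (sub_nonneg.2 hθ1)
    nlinarith
  have i5 := mul_nonpos_of_nonpos_of_nonneg i4 (div_nonneg hw hτ.le)
  linarith

/-- The terms in which the logarithmic cutoff is differentiated are small for large `L`. -/
lemma cutoff_error {N L ρ e g0 g1 z2 z3 : ℝ} (hN : 0 ≤ N) (hL : 1 ≤ L) (hρ : 0 ≤ ρ) (he : ρ ≤ e)
    (he0 : 0 < e) (h0 : 0 ≤ g0) (h0' : g0 ≤ 1) (h1 : g1 ≤ 0) (h1' : -(1 / 2) ≤ g1)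
    (hz2 : 0 ≤ z2) (hz2' : z2 ≤ 1) (hz3 : 0 ≤ z3) (hz3' : z3 ≤ 1) :
    4 * ρ * ((4 / (L * (1 + ρ) ^ 2) * z3 + 12 / (L ^ 2 * (1 + ρ) ^ 2) * z2) * g0 +
      2 * (-4 / (L * (1 + ρ)) * z3) * (g1 * (1 / e))) +
      2 * N * (-4 / (L * (1 + ρ)) * z3 * g0) ≤ 80 / (L * (1 + ρ)) := by
  have hL0 : 0 < L := by linarith
  have e1 : 4 * ρ * ((4 / (L * (1 + ρ) ^ 2) * z3 + 12 / (L ^ 2 * (1 + ρ) ^ 2) * z2) * g0 +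
      2 * (-4 / (L * (1 + ρ)) * z3) * (g1 * (1 / e))) +
      2 * N * (-4 / (L * (1 + ρ)) * z3 * g0) = 1 / (L * (1 + ρ)) *
      (ρ / (1 + ρ) * (16 * (z3 * g0) + 48 * (1 / L) * (z2 * g0)) + 32 * (ρ / e) * (z3 * -g1) -
        8 * N * (z3 * g0)) := by
    field_simp
    ring
  have e2 : 80 / (L * (1 + ρ)) = 1 / (L * (1 + ρ)) * 80 := by ring
  rw [e1, e2]
  refine mul_le_mul_of_nonneg_left ?_ (by positivity)
  have i1 : ρ / (1 + ρ) ≤ 1 := (div_le_one (by linarith)).2 (by linarith)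
  have i1' : 0 ≤ ρ / (1 + ρ) := by positivity
  have i2 : ρ / e ≤ 1 := (div_le_one he0).2 he
  have i3 : z3 * g0 ≤ 1 * 1 := mul_le_mul hz3' h0' h0 one_pos.le
  have i4 : z2 * g0 ≤ 1 * 1 := mul_le_mul hz2' h0' h0 one_pos.le
  have i5 : z3 * -g1 ≤ 1 * (1 / 2) := mul_le_mul hz3' (by linarith) (by linarith) one_pos.le
  have i6 : 1 / L ≤ 1 := (div_le_one hL0).2 hL
  have i7 : 1 / L * (z2 * g0) ≤ 1 * (1 * 1) := mul_le_mul i6 i4 (by positivity) one_pos.le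
  have i8 : ρ / e * (z3 * -g1) ≤ 1 * (1 * (1 / 2)) :=
    mul_le_mul i2 i5 (mul_nonneg hz3 (by linarith)) one_pos.le
  have i9 : 0 ≤ N * (z3 * g0) := by positivity
  have i10 : ρ / (1 + ρ) * (16 * (z3 * g0) + 48 * (1 / L) * (z2 * g0)) ≤ 1 * 64 :=
    mul_le_mul i1 (by linarith) (by positivity) one_pos.le
  linarith

namespace DiffPair

variable {N : ℕ} {m T k : ℝ} {w v : Euc N → ℝ → ℝ}

set_option maxHeartbeats 1600000 in
/-- The weighted mass at time `t₁` is controlled by the initial mass, up to an error that vanishes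
as the logarithmic cutoff is removed. -/
lemma weighted (d : DiffPair N m T k w v) {f : Euc N → ℝ} (hf : Integrable f)
    (hwf : ∀ x, w x 0 ≤ f x) {t₁ : ℝ} (ht₁ : t₁ ∈ Set.Ico 0 T) {b : ℝ}
    (hb : b = 1 / (8 * (m / Cst N m))) {S : ℝ}
    (hS : ∀ R ≥ 1, ∀ t ∈ Set.Icc 0 t₁, mass w R t ≤ S) {L : ℝ} (hL : 1 ≤ L) :
    ∫ x, zV 4 L (‖x‖ ^ 2) * gf b (sV N m T k (‖x‖ ^ 2) t₁) 0 * w x t₁ ≤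
      (1 + lV T t₁ 0) ^ (-(1 / 16) : ℝ) * (∫ x, f x) + 80 * growth N m T k t₁ / L * (S * t₁) := by
  have hG := growth_pos d.adm ht₁.2
  have hI : ∀ {s}, s ∈ Set.Icc 0 t₁ → s ∈ Set.Ico 0 T := fun hs => ⟨hs.1, hs.2.trans_lt ht₁.2⟩
  have hc : 0 < m / Cst N m := div_pos d.adm.hm0 d.adm.C_pos
  have hb0 : 0 < b := by rw [hb]; positivity
  have hL0 : 0 < L := by linarith
  have hT0 : 0 < T := ht₁.1.trans_lt ht₁.2
  have hN := d.adm.hN'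
  have hl : ∀ {s}, s ≤ t₁ → -1 < lV T t₁ s := fun hs => by linarith [lV_nonneg hs ht₁.2]
  have hsupp : ∀ ρ > exp (L / 2) ^ 2, zV 4 L ρ = 0 := fun ρ hρ => by
    refine cutPow_eq_zero (by norm_num) ((one_le_div hL0).2 ?_)
    rw [← exp_nat_mul] at hρ
    have e : ((2:ℕ):ℝ) * (L / 2) = L := by push_cast; ring
    rw [e] at hρ
    exact (le_log_iff_exp_le (by linarith [exp_pos L])).2 (by linarith)
  have hR1 : 1 ≤ exp (L / 2) := one_le_exp (by linarith)
  have hmaps : ∀ {A : Set (ℝ × ℝ)}, A ⊆ Set.Ici 0 ×ˢ Set.Icc 0 t₁ → ∀ {g : ℝ → ℝ → ℝ},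
      ContinuousOn (fun q : ℝ × ℝ => g q.1 q.2) (Set.univ ×ˢ Set.Ioi (-1)) →
      ContinuousOn (fun q : ℝ × ℝ => g (sV N m T k q.1 q.2) (lV T t₁ q.2)) A := by
    intro A hA g hg
    have h1 : ContinuousOn (fun q : ℝ × ℝ => (sV N m T k q.1 q.2, lV T t₁ q.2)) A :=
      ((sV_contOn d.adm ht₁.2).mono hA).prodMk ((lV_contOn ht₁.2).mono hA)
    exact hg.comp h1 fun q hq => ⟨trivial, hl (hA hq).2.2⟩
  have hz : ∀ {A : Set (ℝ × ℝ)}, A ⊆ Set.Ici 0 ×ˢ Set.Icc 0 t₁ →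
      ContinuousOn (fun q : ℝ × ℝ => zV 4 L q.1) A := fun {A} hA =>
    (zV_contOn 4 L).comp continuousOn_fst fun q hq => by
      have : (0:ℝ) ≤ q.1 := (hA hq).1
      exact Set.mem_Ioi.2 (by linarith)
  have hsub : (Set.Ici 0 ×ˢ Set.Ioo 0 t₁ : Set (ℝ × ℝ)) ⊆ Set.Ici 0 ×ˢ Set.Icc 0 t₁ :=
    Set.prod_mono le_rfl Set.Ioo_subset_Icc_self
  have hΦc : ContinuousOn (fun q : ℝ × ℝ => zV 4 L q.1 * gf b (sV N m T k q.1 q.2) (lV T t₁ q.2))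
      (Set.Ici 0 ×ˢ Set.Icc 0 t₁) := (hz le_rfl).mul (hmaps le_rfl (gf_contOn hb0))
  have h1 := d.key
    (Φ := fun ρ t => zV 4 L ρ * gf b (sV N m T k ρ t) (lV T t₁ t))
    (Φ1 := fun ρ t => (-4 / (L * (1 + ρ)) * zV 3 L ρ) * gf b (sV N m T k ρ t) (lV T t₁ t) +
      zV 4 L ρ * (gs b (sV N m T k ρ t) (lV T t₁ t) * (1 / (Dd N m T k t + ρ))))
    (Φ2 := fun ρ t =>
      (4 / (L * (1 + ρ) ^ 2) * zV 3 L ρ + 12 / (L ^ 2 * (1 + ρ) ^ 2) * zV 2 L ρ) *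
        gf b (sV N m T k ρ t) (lV T t₁ t) +
      2 * (-4 / (L * (1 + ρ)) * zV 3 L ρ) *
        (gs b (sV N m T k ρ t) (lV T t₁ t) * (1 / (Dd N m T k t + ρ))) +
      zV 4 L ρ * ((gss b (sV N m T k ρ t) (lV T t₁ t) - gs b (sV N m T k ρ t) (lV T t₁ t)) *
        (1 / (Dd N m T k t + ρ) ^ 2)))
    (Φt := fun ρ t => zV 4 L ρ *
      (gs b (sV N m T k ρ t) (lV T t₁ t) *
        (-(2 * aC N m / (T - t) * (ρ / (Dd N m T k t + ρ)))) +
       gl b (sV N m T k ρ t) (lV T t₁ t) * (-(1 / (T - t)))))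
    (R := exp (L / 2)) (c := 80 * growth N m T k t₁ / L) (t₁ := t₁) (p := fun _ => S)
    (Pf := fun t => S * t) (t := t₁)
    (exp_pos _) (by positivity) ht₁ ?_ ?_ hΦc ?_ ?_ ?_
    (fun t ht => hS _ hR1 t ⟨ht.1.le, ht.2.le⟩) (by fun_prop)
    (fun t _ => ((hasDerivAt_id' t).const_mul S).congr_deriv (by ring)) ⟨ht₁.1, le_rfl⟩
  -- at time `0` the weight is at most `(1 + ℓ)^{-1/16}`; at time `t₁` one has `ℓ = 0`
  · have h0 : (0:ℝ) ∈ Set.Icc 0 t₁ := ⟨le_rfl, ht₁.1⟩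
    have h2 : ∫ x : Euc N, zV 4 L (‖x‖ ^ 2) * gf b (sV N m T k (‖x‖ ^ 2) 0) (lV T t₁ 0) * w x 0 ≤
        ∫ x, (1 + lV T t₁ 0) ^ (-(1 / 16) : ℝ) * f x := by
      refine integral_mono (Continuous.integrable_of_hasCompactSupport ?_
        (hasCompactSupport_of_normSq (R := exp (L / 2) ^ 2) fun x hx => by
          rw [hsupp _ hx, zero_mul, zero_mul])) (hf.const_mul _) fun x => ?_
      · refine Continuous.mul ?_ (d.w_cont_at (hI h0))
        have : Continuous fun x : Euc N => ((‖x‖ ^ 2, 0) : ℝ × ℝ) := by fun_prop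
        have hc0 := hΦc.comp_continuous this fun x => ⟨Set.mem_Ici.2 (sq_nonneg _), h0⟩
        simpa only [Function.comp_def] using hc0
      · have i1 := zV_le_one 4 hL0 (sq_nonneg ‖x‖)
        have i2 := d.w_nonneg 0 (hI h0) x
        have i3 := gf_le (s := sV N m T k (‖x‖ ^ 2) 0) hb0 (hl ht₁.1)
        have i4 := gf_pos (s := sV N m T k (‖x‖ ^ 2) 0) hb0 (hl ht₁.1)
        have i5 := mul_le_mul i1 i3 i4.le one_pos.le
        rw [one_mul] at i5
        have i6 : 0 < 1 + lV T t₁ 0 := by linarith [hl ht₁.1]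
        exact mul_le_mul i5 (hwf x) i2 (rpow_nonneg i6.le _)
    rw [integral_const_mul] at h2
    have e : lV T t₁ t₁ = 0 := sub_self _
    simp only [e, mul_zero, sub_zero] at h1
    linarith
  · intro t ht
    have htT : t < T := ht.2.trans ht₁.2
    have hD := d.adm.D_pos htT
    have hlt := hl ht.2.le
    refine ⟨min (1 / 2) (Dd N m T k t / 2), lt_min (by norm_num) (by linarith), ?_, ?_, ?_⟩
    all_goals
      have hδ1 := min_le_left (1 / 2) (Dd N m T k t / 2)
      have hδ2 := min_le_right (1 / 2) (Dd N m T k t / 2)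
    · intro ρ hρ
      have dg := (gf_hasDerivAt_s (s := sV N m T k ρ t) hb0 hlt).comp ρ
        (sV_hasDerivAt_rho (N := N) (m := m) (T := T) (k := k) (t := t) (by linarith))
      exact ((zV_hasDerivAt 2 (L := L) (by linarith)).mul dg).congr_deriv (by norm_num)
    · intro ρ hρ
      have hρ1 : 0 < 1 + ρ := by linarith
      have hρD : 0 < Dd N m T k t + ρ := by linarith
      have ds := sV_hasDerivAt_rho (N := N) (m := m) (T := T) (k := k) (t := t) (ρ := ρ)
        (by linarith)
      have dg := (gf_hasDerivAt_s (s := sV N m T k ρ t) hb0 hlt).comp ρ ds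
      have dgs := (gs_hasDerivAt (s := sV N m T k ρ t) hb0 hlt).comp ρ ds
      have d1 : HasDerivAt (fun ρ => 1 / (Dd N m T k t + ρ)) (-(1 / (Dd N m T k t + ρ) ^ 2)) ρ := by
        have := ((hasDerivAt_id' ρ).const_add (Dd N m T k t)).inv hρD.ne'
        refine (this.congr_of_eventuallyEq (Eventually.of_forall fun y => ?_)).congr_deriv ?_
        · simp
        · ring
      have d2 : HasDerivAt (fun ρ => -4 / (L * (1 + ρ))) (4 / (L * (1 + ρ) ^ 2)) ρ := by
        have := (hasDerivAt_const ρ (-4 : ℝ)).div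
          (((hasDerivAt_id' ρ).const_add 1).const_mul L) (by positivity)
        refine this.congr_deriv ?_
        field_simp
        ring
      refine (((d2.mul (zV_hasDerivAt 1 (L := L) (by linarith))).mul dg).add
        ((zV_hasDerivAt 2 (L := L) (by linarith)).mul (dgs.mul d1))).congr_deriv ?_
      simp only [Function.comp_apply, Pi.mul_apply]
      norm_num
      field_simp
      ring
    · set δ := min (1 / 2) (Dd N m T k t / 2)
      have hs : ContinuousOn (fun ρ => sV N m T k ρ t) (Set.Ioi (-δ)) := fun ρ hρ =>
        (sV_hasDerivAt_rho (N := N) (m := m) (T := T) (k := k) (t := t) (by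
          have : -δ < ρ := hρ
          linarith)).continuousAt.continuousWithinAt
      have hp : ContinuousOn (fun ρ => ((sV N m T k ρ t, lV T t₁ t) : ℝ × ℝ)) (Set.Ioi (-δ)) :=
        hs.prodMk continuousOn_const
      have hgf := (gf_contOn hb0).comp hp fun ρ hρ => ⟨trivial, hlt⟩
      have hgs := (gs_contOn hb0).comp hp fun ρ hρ => ⟨trivial, hlt⟩
      have hgss := (gss_contOn hb0).comp hp fun ρ hρ => ⟨trivial, hlt⟩
      have hzz : ∀ n, ContinuousOn (zV n L) (Set.Ioi (-δ)) := fun n =>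
        (zV_contOn n L).mono (Set.Ioi_subset_Ioi (by linarith))
      have n1 : ∀ ρ ∈ Set.Ioi (-δ), 1 + ρ ≠ 0 := fun ρ hρ => by
        have : -δ < ρ := hρ
        linarith
      have n2 : ∀ ρ ∈ Set.Ioi (-δ), Dd N m T k t + ρ ≠ 0 := fun ρ hρ => by
        have : -δ < ρ := hρ
        linarith
      have c1 : ContinuousOn (fun ρ => 4 / (L * (1 + ρ) ^ 2)) (Set.Ioi (-δ)) :=
        ContinuousOn.div (by fun_prop) (by fun_prop) fun ρ hρ =>
          mul_ne_zero hL0.ne' (pow_ne_zero _ (n1 ρ hρ))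
      have c2 : ContinuousOn (fun ρ => 12 / (L ^ 2 * (1 + ρ) ^ 2)) (Set.Ioi (-δ)) :=
        ContinuousOn.div (by fun_prop) (by fun_prop) fun ρ hρ =>
          mul_ne_zero (pow_ne_zero _ hL0.ne') (pow_ne_zero _ (n1 ρ hρ))
      have c3 : ContinuousOn (fun ρ => -4 / (L * (1 + ρ))) (Set.Ioi (-δ)) :=
        ContinuousOn.div (by fun_prop) (by fun_prop) fun ρ hρ =>
          mul_ne_zero hL0.ne' (n1 ρ hρ)
      have c4 : ContinuousOn (fun ρ => 1 / (Dd N m T k t + ρ)) (Set.Ioi (-δ)) :=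
        ContinuousOn.div (by fun_prop) (by fun_prop) n2
      have c5 : ContinuousOn (fun ρ => 1 / (Dd N m T k t + ρ) ^ 2) (Set.Ioi (-δ)) :=
        ContinuousOn.div (by fun_prop) (by fun_prop) fun ρ hρ => pow_ne_zero _ (n2 ρ hρ)
      exact ((((c1.mul (hzz 3)).add (c2.mul (hzz 2))).mul hgf).add
        ((continuousOn_const.mul (c3.mul (hzz 3))).mul (hgs.mul c4))).add
        ((hzz 4).mul ((hgss.sub hgs).mul c5))
  · intro t ht ρ hρ
    have htT : t < T := ht.2.trans ht₁.2
    exact (gf_hasDerivAt hb0 (S := fun t => sV N m T k ρ t) (L := lV T t₁) (hl ht.2.le)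
      (sV_hasDerivAt_t d.adm htT hρ) (lV_hasDerivAt htT)).const_mul _
  · have hD : ContinuousOn (fun q : ℝ × ℝ => Dd N m T k q.2) (Set.Ici 0 ×ˢ Set.Ioo 0 t₁) :=
      d.adm.D_cont.comp continuousOn_snd fun q hq => hq.2.2.trans ht₁.2
    have hn : ∀ q ∈ (Set.Ici 0 ×ˢ Set.Ioo 0 t₁ : Set (ℝ × ℝ)), T - q.2 ≠ 0 := fun q hq => by
      have : q.2 < t₁ := hq.2.2
      linarith [ht₁.2]
    have hn2 : ∀ q ∈ (Set.Ici 0 ×ˢ Set.Ioo 0 t₁ : Set (ℝ × ℝ)), Dd N m T k q.2 + q.1 ≠ 0 :=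
      fun q hq => by
        have h1 := d.adm.D_pos (hq.2.2.trans ht₁.2)
        have h2 : (0:ℝ) ≤ q.1 := hq.1
        positivity
    refine (hz hsub).mul (((hmaps hsub (gs_contOn hb0)).mul ?_).add
      ((hmaps hsub (gl_contOn hb0)).mul ?_))
    · exact ((ContinuousOn.div continuousOn_const (by fun_prop) hn).mul
        (ContinuousOn.div continuousOn_fst (hD.add continuousOn_fst) hn2)).neg
    · exact (ContinuousOn.div continuousOn_const (by fun_prop) hn).neg
  · intro t ρ hρ
    simp only [hsupp ρ hρ, zero_mul]
  -- the pointwise inequality: `weight_ineq` handles the weight, `cutoff_error` the cutoff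
  · intro t ht x _
    have htT : t < T := ht.2.trans ht₁.2
    have ht' : t ∈ Set.Icc 0 t₁ := ⟨ht.1.le, ht.2.le⟩
    have hv0 := d.v_nonneg (hI ht') x
    have hv := d.v_le ht' ht₁.2 x
    have hvl := d.v_lower t (hI ht') x
    have hw := d.w_nonneg t (hI ht') x
    have hD := d.adm.D_pos htT
    have hCp := d.adm.C_pos
    have hca := d.adm.c_ge
    have hτ : 0 < T - t := by linarith
    have hl0 := lV_nonneg ht.2.le ht₁.2
    have hρ : 0 ≤ ‖x‖ ^ 2 := sq_nonneg _
    have hs0 := sV_nonneg d.adm htT hρ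
    have z2 := zV_le_one 2 hL0 hρ
    have z3 := zV_le_one 3 hL0 hρ
    have y2 := zV_nonneg 2 L (‖x‖ ^ 2)
    have y3 := zV_nonneg 3 L (‖x‖ ^ 2)
    have y4 := zV_nonneg 4 L (‖x‖ ^ 2)
    have g0 := gf_pos (s := sV N m T k (‖x‖ ^ 2) t) hb0 (hl ht.2.le)
    have g0' := gf_le_one (s := sV N m T k (‖x‖ ^ 2) t) hb0 hl0
    have g1 := gs_nonpos hb0 hl0 hs0
    have g1' := gs_ge hb0 hl0 hs0
    have g2 := gss_le_gl (s := sV N m T k (‖x‖ ^ 2) t) hc hb hl0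
    have g3 := gs_le_gl hc hb hl0 hs0 hN
    have g4 := gss_le hb0 hl0 hs0 hN
    generalize ‖x‖ ^ 2 = ρ at *
    generalize gf b (sV N m T k ρ t) (lV T t₁ t) = G0 at *
    generalize gs b (sV N m T k ρ t) (lV T t₁ t) = G1 at *
    generalize gss b (sV N m T k ρ t) (lV T t₁ t) = G2 at *
    generalize gl b (sV N m T k ρ t) (lV T t₁ t) = G3 at *
    have he : 0 < Dd N m T k t + ρ := by linarith
    have hvl' : m / Cst N m * (Dd N m T k t + ρ) / (T - t) * w x t ≤ v x t := by
      have e : m / Cst N m * (Dd N m T k t + ρ) / (T - t) * w x t =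
          m * w x t / (Pp N m T k ρ t) := by
        unfold Pp; field_simp
      rw [e, div_le_iff₀ (by unfold Pp; positivity)]
      linarith
    have main := weight_ineq (a := aC N m) hτ (div_nonneg hρ he.le)
      ((div_le_one he).2 (by linarith)) he hN hca g1 g2 g3 g4 hw hvl'
    have hρe : ρ ≤ Dd N m T k t + ρ := by linarith
    generalize Dd N m T k t + ρ = e at *
    have main' := mul_nonpos_of_nonneg_of_nonpos y4 main
    -- the terms in which the cutoff is differentiated
    have err : (4 * ρ * ((4 / (L * (1 + ρ) ^ 2) * zV 3 L ρ + 12 / (L ^ 2 * (1 + ρ) ^ 2) *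
        zV 2 L ρ) * G0 + 2 * (-4 / (L * (1 + ρ)) * zV 3 L ρ) * (G1 * (1 / e))) +
        2 * N * (-4 / (L * (1 + ρ)) * zV 3 L ρ * G0)) ≤ 80 / (L * (1 + ρ)) :=
      cutoff_error (by linarith) hL hρ (by linarith) he g0.le g0' g1 g1' y2 z2 y3 z3
    have err' := mul_le_mul_of_nonneg_right err hv0
    have e2 : 80 / (L * (1 + ρ)) * v x t ≤ 80 * growth N m T k t₁ / L * w x t := by
      have := mul_le_mul_of_nonneg_left hv (by positivity : 0 ≤ 80 / (L * (1 + ρ)))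
      refine this.trans (le_of_eq ?_)
      field_simp
    refine le_trans (le_of_eq ?_) ((add_le_add main' (err'.trans e2)).trans (le_of_eq (zero_add _)))
    field_simp
    ring

/-- Decay of the mass in balls of the self-similar size. -/
lemma decay (d : DiffPair N m T k w v) {f : Euc N → ℝ} (hf : Integrable f)
    (hwf : ∀ x, w x 0 ≤ f x) {t : ℝ} (ht : t ∈ Set.Ico 0 T) {R : ℝ} (hR : 0 ≤ R) :
    mass w (R * (T - t) ^ (-aC N m)) t ≤
      gE (1 / (8 * (m / Cst N m))) (log (1 + R ^ 2 / k)) 0 ^ (1 / 4 : ℝ) *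
        ((1 + lV T t 0) ^ (-(1 / 16) : ℝ) * (∫ x, f x)) := by
  have hc : 0 < m / Cst N m := div_pos d.adm.hm0 d.adm.C_pos
  have hk := d.adm.hk
  obtain ⟨b, hb⟩ : ∃ b, b = 1 / (8 * (m / Cst N m)) := ⟨_, rfl⟩
  rw [← hb]
  have hb0 : 0 < b := by rw [hb]; positivity
  have hD := d.adm.D_pos ht.2
  set r := R * (T - t) ^ (-aC N m) with hr
  have hτ : 0 < T - t := by linarith [ht.2]
  have hr0 : 0 ≤ r := by positivity
  set s₀ := log (1 + R ^ 2 / k) with hs₀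
  have hs₀0 : 0 ≤ s₀ := log_nonneg (le_add_of_nonneg_right (by positivity))
  have hE₀ := gE_pos (s := s₀) (l := 0) hb0 (by norm_num)
  obtain ⟨S, hS⟩ := d.mass_bound hf hwf ht
  have hrD : r ^ 2 = R ^ 2 / k * Dd N m T k t := by
    have e : (T - t) ^ (2 * gammaC N m) = ((T - t) ^ (-aC N m)) ^ 2 := by
      rw [d.adm.gamma_eq, ← rpow_natCast, ← rpow_mul hτ.le]; congr 1; push_cast; ring
    rw [hr, Dd, e]; field_simp
  have hlow : ∀ x ∈ Metric.closedBall (0 : Euc N) r,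
      gE b s₀ 0 ^ (-(1 / 4) : ℝ) ≤ gf b (sV N m T k (‖x‖ ^ 2) t) 0 := by
    intro x hx
    rw [Metric.mem_closedBall, dist_zero_right] at hx
    have hx2 : ‖x‖ ^ 2 ≤ r ^ 2 := pow_le_pow_left₀ (norm_nonneg x) hx 2
    have hs := sV_nonneg d.adm ht.2 (sq_nonneg ‖x‖)
    have hle : sV N m T k (‖x‖ ^ 2) t ≤ s₀ := by
      unfold sV
      rw [← log_div (by positivity) hD.ne']
      refine log_le_log (by positivity) ?_
      rw [div_le_iff₀ hD]
      linarith
    unfold gf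
    rw [add_zero, one_rpow, mul_one]
    refine rpow_le_rpow_of_nonpos (gE_pos hb0 (by norm_num)) ?_ (by norm_num)
    unfold gE
    gcongr
  have hcont : ∀ L, Continuous fun x : Euc N =>
      zV 4 L (‖x‖ ^ 2) * gf b (sV N m T k (‖x‖ ^ 2) t) 0 * w x t := by
    intro L
    have hn : Continuous fun x : Euc N => ‖x‖ ^ 2 := by fun_prop
    have c1 := (zV_contOn 4 L).comp_continuous hn fun x =>
      Set.mem_Ioi.2 (by linarith [sq_nonneg ‖x‖])
    have c2 : ContinuousOn (fun ρ => sV N m T k ρ t) (Set.Ici 0) := fun ρ hρ =>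
      (sV_hasDerivAt_rho (N := N) (m := m) (T := T) (k := k) (t := t) (by
        have : 0 ≤ ρ := hρ
        linarith)).continuousAt.continuousWithinAt
    have c3 := c2.comp_continuous hn fun x => Set.mem_Ici.2 (sq_nonneg ‖x‖)
    have c4 := (gf_contOn hb0).comp_continuous
      (c3.prodMk (continuous_const (y := (0:ℝ)))) fun x => ⟨trivial, Set.mem_Ioi.2 (by norm_num)⟩
    simp only [Function.comp_def] at c1 c4
    exact (c1.mul c4).mul (d.w_cont_at ht)
  have hstep : ∀ L ≥ 1, zV 4 L (r ^ 2) * (gE b s₀ 0 ^ (-(1 / 4) : ℝ) * mass w r t) ≤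
      (1 + lV T t 0) ^ (-(1 / 16) : ℝ) * (∫ x, f x) + 80 * growth N m T k t / L * (S * t) := by
    intro L hL
    refine le_trans ?_ (d.weighted hf hwf ht hb hS hL)
    have hL0 : 0 < L := by linarith
    have hint := (hcont L).integrable_of_hasCompactSupport (μ := volume)
      (hasCompactSupport_of_normSq (R := exp L) fun x hx => by
        have : zV 4 L (‖x‖ ^ 2) = 0 := cutPow_eq_zero (by norm_num) ((one_le_div hL0).2
          ((le_log_iff_exp_le (by positivity)).2 (by linarith)))
        rw [this, zero_mul, zero_mul])
    have hg : ∀ x : Euc N, 0 ≤ gf b (sV N m T k (‖x‖ ^ 2) t) 0 := fun x =>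
      (gf_pos hb0 (by norm_num)).le
    refine le_trans ?_ (setIntegral_le_integral (s := Metric.closedBall 0 r) hint
      (ae_of_all _ fun x => mul_nonneg (mul_nonneg (zV_nonneg _ _ _) (hg x)) (d.w_nonneg t ht x)))
    rw [← mul_assoc, mass, ← integral_const_mul]
    refine setIntegral_mono_on ((d.intOn ht 0 r).const_mul _) hint.integrableOn
      measurableSet_closedBall fun x hx => ?_
    refine mul_le_mul_of_nonneg_right (mul_le_mul ?_ (hlow x hx) (rpow_nonneg hE₀.le _)
      (zV_nonneg _ _ _)) (d.w_nonneg t ht x)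
    rw [Metric.mem_closedBall, dist_zero_right] at hx
    unfold zV cutPow
    gcongr
  have hlim1 : Tendsto (fun L => zV 4 L (r ^ 2) * (gE b s₀ 0 ^ (-(1 / 4) : ℝ) * mass w r t)) atTop
      (𝓝 (1 * (gE b s₀ 0 ^ (-(1 / 4) : ℝ) * mass w r t))) := by
    refine Tendsto.mul_const _ ?_
    have h1 : Tendsto (fun L => log (1 + r ^ 2) / L) atTop (𝓝 0) :=
      tendsto_const_nhds.div_atTop tendsto_id
    have h2 := ((continuous_cutPow 4).tendsto 0).comp h1
    rw [cutPow_of_le (by norm_num)] at h2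
    norm_num at h2
    exact h2
  have hlim2 : Tendsto (fun L => (1 + lV T t 0) ^ (-(1 / 16) : ℝ) * (∫ x, f x) +
      80 * growth N m T k t / L * (S * t)) atTop
      (𝓝 ((1 + lV T t 0) ^ (-(1 / 16) : ℝ) * (∫ x, f x) + 0 * (S * t))) :=
    ((tendsto_const_nhds.div_atTop tendsto_id).mul_const _).const_add _
  have hfin := le_of_tendsto_of_tendsto hlim1 hlim2 (eventually_ge_atTop 1 |>.mono hstep)
  rw [one_mul, zero_mul, add_zero] at hfin
  have hfin' := mul_le_mul_of_nonneg_left hfin (rpow_nonneg hE₀.le (1 / 4 : ℝ))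
  rw [← mul_assoc, ← rpow_add hE₀] at hfin'
  norm_num at hfin' ⊢
  exact hfin'

end DiffPair

/-! ### From mass decay to pointwise decay -/

/-- The integral of the cutoff `(1 - |z|²)₊ⁿ` over `ℝᴺ`. -/
def ballI (N n : ℕ) : ℝ := ∫ z : Euc N, cutPow n (‖z‖ ^ 2)

lemma ballI_cont (N n : ℕ) : Continuous fun z : Euc N => cutPow n (‖z‖ ^ 2) :=
  (continuous_cutPow n).comp (by fun_prop)

lemma ballI_pos (N n : ℕ) (hn : n ≠ 0) : 0 < ballI N n := by
  refine (ballI_cont N n).integral_pos_of_hasCompactSupport_nonneg_nonzero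
    (hasCompactSupport_of_normSq (R := 1) fun x hx => cutPow_eq_zero hn hx.le)
    (fun x => cutPow_nonneg _ _) (x := 0) ?_
  rw [norm_zero, cutPow_of_le (by norm_num)]
  norm_num

namespace DiffPair

variable {N : ℕ} {m T k : ℝ} {w v : Euc N → ℝ → ℝ}

/-- An average of `v` over a ball of radius `μ` is controlled by the mass of `w` in a larger
centred ball. -/
lemma average_le (d : DiffPair N m T k w v) {t : ℝ} (ht : t ∈ Set.Ioo 0 T) {Λ M μ : ℝ} (hμ : 0 < μ)
    (hM : 0 ≤ M) (hv : ∀ x, ‖x‖ ≤ Λ → v x t ≤ M * w x t) {x₀ : Euc N} (hx₀ : ‖x₀‖ + μ ≤ Λ) :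
    ∫ z : Euc N, cutPow 3 (‖z‖ ^ 2) * v (x₀ + μ • z) t ≤ M * ((μ ^ N)⁻¹ * mass w Λ t) := by
  have htI : t ∈ Set.Ico 0 T := ⟨ht.1.le, ht.2⟩
  set g : Euc N → ℝ := (Metric.closedBall 0 Λ).indicator fun x => M * w x t with hg
  have hgi : Integrable g :=
    IntegrableOn.integrable_indicator ((d.intOn htI 0 Λ).const_mul M) measurableSet_closedBall
  have hg1 : Integrable fun x => g (x₀ + x) := hgi.comp_add_left x₀
  have hg2 : Integrable fun z => g (x₀ + μ • z) := hg1.comp_smul hμ.ne'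
  have e1 : ∫ z, g (x₀ + μ • z) = M * ((μ ^ N)⁻¹ * mass w Λ t) := by
    rw [Measure.integral_comp_smul volume (fun x => g (x₀ + x)) μ, integral_add_left_eq_self g x₀,
      hg, integral_indicator measurableSet_closedBall, integral_const_mul, finrank_euclideanSpace_fin,
      abs_of_pos (by positivity), smul_eq_mul, mass]
    ring
  rw [← e1]
  have hgn : ∀ x, 0 ≤ g x := fun x =>
    Set.indicator_nonneg (fun x _ => mul_nonneg hM (d.w_nonneg t htI x)) x
  refine integral_mono (Continuous.integrable_of_hasCompactSupport ?_
    (hasCompactSupport_of_normSq (R := 1) fun x hx => by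
      rw [cutPow_eq_zero (by norm_num) hx.le, zero_mul])) hg2 fun z => ?_
  · have : Continuous fun z : Euc N => x₀ + μ • z := by fun_prop
    exact (ballI_cont N 3).mul ((d.v_smooth t ht).continuous.comp this)
  · rcases le_or_gt 1 (‖z‖ ^ 2) with hz | hz
    · simp only [cutPow_eq_zero (n := 3) (by norm_num) hz, zero_mul]
      exact hgn _
    · have hz1 : ‖z‖ ≤ 1 := by nlinarith [norm_nonneg z]
      have hx : ‖x₀ + μ • z‖ ≤ Λ := by
        refine (norm_add_le _ _).trans (le_trans ?_ hx₀)
        rw [norm_smul, Real.norm_of_nonneg hμ.le]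
        nlinarith
      have hmem : x₀ + μ • z ∈ Metric.closedBall (0 : Euc N) Λ := by
        rwa [Metric.mem_closedBall, dist_zero_right]
      simp only [hg, Set.indicator_of_mem hmem]
      have h1 := cutPow_le_one 3 (sq_nonneg ‖z‖)
      have h2 := d.v_nonneg htI (x₀ + μ • z)
      nlinarith [hv _ hx]

/-- If `Δv` is bounded below at the self-similar rate, the rescaled difference at a point is
controlled by the mass at the self-similar scale. -/
lemma pointwise (d : DiffPair N m T k w v) {t : ℝ} (ht : t ∈ Set.Ioo 0 T) {K : ℝ}
    (hK : ∀ x, -(K * ((T - t) ^ betaC N m / (T - t))) ≤ lapl (fun y => v y t) x)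
    {R r : ℝ} (hr : 0 < r) (hr1 : r ≤ 1) {y : Euc N} (hy : ‖y‖ ≤ R) :
    w ((T - t) ^ (-aC N m) • y) t ≤ (T - t) ^ betaC N m *
      ((k + (R + 1) ^ 2) / (k * m * ballI N 3) *
          ((r ^ N)⁻¹ * mass w ((R + 1) * (T - t) ^ (-aC N m)) t) +
        Cst N m * K * ballI N 4 / (16 * k * m * ballI N 3) * r ^ 2) := by
  have htI : t ∈ Set.Ico 0 T := ⟨ht.1.le, ht.2⟩
  have hτ : 0 < T - t := by linarith [ht.2]
  have hI3 := ballI_pos N 3 (by norm_num)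
  have hk := d.adm.hk
  have hm := d.adm.hm0
  have hC := d.adm.C_pos
  have hR : 0 ≤ R := (norm_nonneg y).trans hy
  set lam := (T - t) ^ (-aC N m) with hlam
  have hlam0 : 0 < lam := rpow_pos_of_pos hτ _
  have hD : Dd N m T k t = k * lam ^ 2 := by
    unfold Dd
    rw [hlam, d.adm.gamma_eq, ← rpow_natCast, ← rpow_mul hτ.le]; congr 2; push_cast; ring
  have hβ : (T - t) ^ betaC N m = (lam ^ N)⁻¹ := by
    rw [hlam, ← rpow_natCast, ← rpow_mul hτ.le, ← rpow_neg hτ.le, d.adm.beta_eq]; congr 1; ring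
  have h1 := mean_value (d.v_smooth t ht) hK (lam • y) (μ := r * lam) (by positivity)
  have hxn : ‖lam • y‖ ≤ R * lam := by
    rw [norm_smul, Real.norm_of_nonneg hlam0.le, mul_comm]
    exact mul_le_mul_of_nonneg_right hy hlam0.le
  have h2 := d.average_le ht (Λ := (R + 1) * lam) (μ := r * lam)
    (M := (k + (R + 1) ^ 2) * lam ^ 2 / (Cst N m * (T - t))) (by positivity) (by positivity)
    (fun x hx => by
      refine (d.v_eq htI x).trans (mul_le_mul_of_nonneg_right ?_ (d.w_nonneg t htI x))
      have : ‖x‖ ^ 2 ≤ ((R + 1) * lam) ^ 2 := pow_le_pow_left₀ (norm_nonneg x) hx 2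
      rw [hD]
      gcongr
      linarith) (x₀ := lam • y) (by nlinarith)
  have h3 := d.v_lower t htI (lam • y)
  have h4 : Pp N m T k (‖lam • y‖ ^ 2) t * v (lam • y) t ≤
      Cst N m * (T - t) / (k * lam ^ 2) * v (lam • y) t := by
    refine mul_le_mul_of_nonneg_right ?_ (d.v_nonneg htI _)
    unfold Pp
    rw [hD]
    gcongr
    linarith [sq_nonneg ‖lam • y‖]
  change v (lam • y) t * ballI N 3 ≤ _ + _ * ballI N 4 at h1
  have h5 : v (lam • y) t ≤ ((k + (R + 1) ^ 2) * lam ^ 2 / (Cst N m * (T - t)) *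
      (((r * lam) ^ N)⁻¹ * mass w ((R + 1) * lam) t) +
      (r * lam) ^ 2 * (K * ((T - t) ^ betaC N m / (T - t))) / 16 * ballI N 4) / ballI N 3 := by
    rw [le_div_iff₀ hI3]
    linarith
  have h6 : w (lam • y) t ≤ Cst N m * (T - t) / (k * lam ^ 2) * v (lam • y) t / m := by
    rw [le_div_iff₀ hm]
    linarith
  have h7 := mul_le_mul_of_nonneg_left h5 (by positivity : 0 ≤ Cst N m * (T - t) / (k * lam ^ 2))
  refine (h6.trans (div_le_div_of_nonneg_right h7 hm.le)).trans (le_of_eq ?_)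
  rw [hβ, mul_pow r lam N]
  clear_value lam
  field_simp

end DiffPair

/-! ### Convergence -/

lemma tendsto_decay (T : ℝ) (c : ℝ) :
    Tendsto (fun t => c * (1 + lV T t 0) ^ (-(1 / 16) : ℝ)) (𝓝[<] T) (𝓝 0) := by
  have h1 : Tendsto (fun t => T - t) (𝓝[<] T) (𝓝[>] 0) := by
    refine tendsto_nhdsWithin_iff.2 ⟨?_, ?_⟩
    · have : Tendsto (fun t => T - t) (𝓝 T) (𝓝 (T - T)) := by
        exact (continuous_const.sub continuous_id).tendsto T
      rw [sub_self] at this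
      exact this.mono_left nhdsWithin_le_nhds
    · filter_upwards [self_mem_nhdsWithin] with t ht
      exact Set.mem_Ioi.2 (sub_pos.2 ht)
  have h2 : Tendsto (fun t => 1 + lV T t 0) (𝓝[<] T) atTop := by
    unfold lV
    refine tendsto_atTop_add_const_left _ _ ?_
    simp only [sub_eq_add_neg]
    refine tendsto_atTop_add_const_left _ _ ?_
    have := tendsto_neg_atBot_atTop.comp (tendsto_log_nhdsGT_zero.comp h1)
    simpa only [Function.comp_def, sub_eq_add_neg] using this
  have h3 := ((tendsto_rpow_neg_atTop (y := 1 / 16) (by norm_num)).comp h2).const_mul c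
  rw [mul_zero] at h3
  exact h3

/-- The Aronson–Bénilan inequality bounds `Δ(Bᵐ - uᵐ)` from below at the self-similar rate. -/
lemma lapl_lower {N : ℕ} {m T k : ℝ} (h : Adm N m k) {u : Euc N → ℝ → ℝ} {u₀ : Euc N → ℝ}
    (hs : IsFDESol N m T u u₀) (hupper : ∀ x, u₀ x ≤ Bb N m T k x 0)
    (hAB : ∀ x : Euc N, ∀ t ∈ Set.Ioo (0:ℝ) T, deriv (fun s => u x s) t ≤ u x t / ((1 - m) * t))
    {t : ℝ} (ht : t ∈ Set.Ioo 0 T) (ht2 : T / 2 ≤ t) (x : Euc N) :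
    -((betaC N m + 1 / (1 - m)) * (Cst N m / k) ^ (1 / (1 - m)) *
      ((T - t) ^ betaC N m / (T - t))) ≤
      lapl (fun y => Bb N m T k y t ^ m - u y t ^ m) x := by
  have hτ : 0 < T - t := by linarith [ht.2]
  have hm1 := h.one_sub_pos
  have hβ : 0 ≤ betaC N m := by rw [h.beta_eq]; have := h.a_pos; positivity
  have hd := (diffPair_of_sol h hs hupper).w_der t ht x
  have hu := hs.hasDerivAt ht x
  have e := hd.unique ((h.B_hasDerivAt ht.2 x).sub hu)
  have hAB' := hAB x t ht
  rw [hu.deriv] at hAB'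
  have hle := comparison h hs hupper ⟨ht.1.le, ht.2⟩ x
  have hB := h.B_pos ht.2 x
  have h1 : u x t / ((1 - m) * t) ≤ Bb N m T k x t / ((1 - m) * (T - t)) :=
    div_le_div₀ hB.le hle (by positivity) (mul_le_mul_of_nonneg_left (by linarith) hm1.le)
  have h2 := h.Bt_ge ht.2 x
  have h3 := mul_le_mul_of_nonneg_left (h.B_le ht.2 x)
    (by positivity : 0 ≤ (betaC N m + 1 / (1 - m)) / (T - t))
  have e1 : (betaC N m + 1 / (1 - m)) / (T - t) * Bb N m T k x t =
      betaC N m * Bb N m T k x t / (T - t) + Bb N m T k x t / ((1 - m) * (T - t)) := by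
    field_simp
  have e2 : (betaC N m + 1 / (1 - m)) / (T - t) *
      ((Cst N m / k) ^ (1 / (1 - m)) * (T - t) ^ betaC N m) =
      (betaC N m + 1 / (1 - m)) * (Cst N m / k) ^ (1 / (1 - m)) *
      ((T - t) ^ betaC N m / (T - t)) := by ring
  rw [e1, e2] at h3
  rw [e]
  linarith

/-- The rescaled profile tends to zero at infinity. -/
lemma BbTil_small {N : ℕ} {m k : ℝ} (h : Adm N m k) {ε : ℝ} (hε : 0 < ε) :
    ∃ R ≥ 0, ∀ y : Euc N, R ≤ ‖y‖ → BbTil N m k y < ε := by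
  have hp : 0 < 1 / (1 - m) := one_div_pos.2 h.one_sub_pos
  have hC := h.C_pos
  have hk := h.hk
  have h1 : Tendsto (fun R : ℝ => Cst N m / (k + R ^ 2)) atTop (𝓝 0) :=
    tendsto_const_nhds.div_atTop (tendsto_atTop_add_const_left _ _ (tendsto_pow_atTop two_ne_zero))
  have h2 := h1.rpow_const (p := 1 / (1 - m)) (Or.inr hp.le)
  rw [zero_rpow hp.ne'] at h2
  obtain ⟨R, hR⟩ := ((h2.eventually (gt_mem_nhds hε)).and (eventually_ge_atTop 0)).exists
  refine ⟨R, hR.2, fun y hy => lt_of_le_of_lt ?_ hR.1⟩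
  have := hR.2
  unfold BbTil
  gcongr

/-- Uniform closeness of the rescaled solution to the rescaled profile as `t → T⁻`. -/
lemma close {N : ℕ} {m T k : ℝ} (h : Adm N m k) (hT : 0 < T) {u : Euc N → ℝ → ℝ}
    {u₀ f : Euc N → ℝ}
    (hs : IsFDESol N m T u u₀) (hupper : ∀ x, u₀ x ≤ Bb N m T k x 0) (hf : Integrable f)
    (hdiff : ∀ x, |u₀ x - Bb N m T k x 0| ≤ f x)
    (hAB : ∀ x : Euc N, ∀ t ∈ Set.Ioo (0:ℝ) T, deriv (fun s => u x s) t ≤ u x t / ((1 - m) * t))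
    {ε : ℝ} (hε : 0 < ε) :
    ∀ᶠ t in 𝓝[<] T, ∀ y : Euc N, |BbTil N m k y -
      ((T - t) ^ betaC N m)⁻¹ * u ((T - t) ^ (-aC N m) • y) t| < ε := by
  have d := diffPair_of_sol h hs hupper
  have hwf : ∀ x, Bb N m T k x 0 - u x 0 ≤ f x := fun x => by
    rw [hs.2.2.2.1 x]
    have := (abs_le.1 (hdiff x)).1
    linarith
  obtain ⟨R, hR0, hR⟩ := BbTil_small h hε
  have hI3 := ballI_pos N 3 (by norm_num)
  have hI4 := ballI_pos N 4 (by norm_num)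
  have hk := h.hk
  have hm := h.hm0
  have hm1 := h.one_sub_pos
  have hC := h.C_pos
  have hβ : 0 ≤ betaC N m := by rw [h.beta_eq]; have := h.a_pos; positivity
  set K := (betaC N m + 1 / (1 - m)) * (Cst N m / k) ^ (1 / (1 - m)) with hK
  have hK0 : 0 ≤ K := by positivity
  set A := (k + (R + 1) ^ 2) / (k * m * ballI N 3) with hA
  have hA0 : 0 ≤ A := by positivity
  set A' := Cst N m * K * ballI N 4 / (16 * k * m * ballI N 3) with hA'
  have hA'0 : 0 ≤ A' := by positivity
  -- the averaging radius is chosen first, then the time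
  obtain ⟨r, hr0, hr1, hr⟩ : ∃ r : ℝ, 0 < r ∧ r ≤ 1 ∧ A' * r ^ 2 < ε / 2 := by
    have hc : Tendsto (fun r : ℝ => A' * r ^ 2) (𝓝[>] 0) (𝓝 (A' * 0 ^ 2)) :=
      ((by fun_prop : Continuous fun r : ℝ => A' * r ^ 2).tendsto 0).mono_left nhdsWithin_le_nhds
    have e1 := hc.eventually (gt_mem_nhds (by simpa using half_pos hε : A' * 0 ^ 2 < ε / 2))
    obtain ⟨r, h1, h2⟩ := (e1.and (Ioc_mem_nhdsGT one_pos)).exists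
    exact ⟨r, h2.1, h2.2, h1⟩
  have hdec := (tendsto_decay T (A * ((r ^ N)⁻¹ *
    (gE (1 / (8 * (m / Cst N m))) (log (1 + (R + 1) ^ 2 / k)) 0 ^ (1 / 4 : ℝ) *
      ∫ x, f x)))).eventually (gt_mem_nhds (half_pos hε))
  have hhalf : ∀ᶠ t in 𝓝[<] T, t ∈ Set.Ioo (T / 2) T := Ioo_mem_nhdsLT (by linarith)
  filter_upwards [hdec, hhalf] with t h1 h2 y
  have ht : t ∈ Set.Ioo 0 T := ⟨by linarith [h2.1], h2.2⟩
  have hτ : 0 < T - t := by linarith [ht.2]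
  have hτβ : 0 < (T - t) ^ betaC N m := rpow_pos_of_pos hτ _
  have hBr := h.B_rescale ht.2 y
  set x := (T - t) ^ (-aC N m) • y with hx
  have e : BbTil N m k y - ((T - t) ^ betaC N m)⁻¹ * u x t =
      ((T - t) ^ betaC N m)⁻¹ * (Bb N m T k x t - u x t) := by
    rw [mul_sub, hBr, inv_mul_cancel_left₀ hτβ.ne']
  have hw : 0 ≤ Bb N m T k x t - u x t := d.w_nonneg t ⟨ht.1.le, ht.2⟩ x
  rw [e, abs_of_nonneg (by positivity)]
  rcases le_total R ‖y‖ with hy | hy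
  · rw [← e]
    have := hs.pos ht x
    have : 0 < ((T - t) ^ betaC N m)⁻¹ * u x t := by positivity
    linarith [hR y hy]
  · have p1 := d.pointwise ht (K := K) (lapl_lower h hs hupper hAB ht h2.1.le) hr0 hr1 hy
    have p2 := d.decay hf hwf ⟨ht.1.le, ht.2⟩ (R := R + 1) (by linarith)
    rw [← hx, ← hA, ← hA'] at p1
    rw [inv_mul_lt_iff₀ hτβ]
    refine p1.trans_lt (mul_lt_mul_of_pos_left ?_ hτβ)
    have p3 := mul_le_mul_of_nonneg_left p2 (by positivity : 0 ≤ A * (r ^ N)⁻¹)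
    linarith

/-- Appendix theorem: for N > 4, 0 < m ≤ (N-4)/(N-2), a solution with
u₀ ≤ B(·,0) and |u₀ - B(·,0)| ≤ f for a positive radial L¹ function f, satisfying the
Aronson–Bénilan inequality, converges after rescaling uniformly on ℝ^N to the rescaled
Barenblatt profile B̃_k; in particular u vanishes at the same time T as B. -/
theorem appendix_profile (N : ℕ) (hN : 4 < N) (m T k : ℝ)
    (hm0 : 0 < m) (hmu : m ≤ ((N : ℝ) - 4) / ((N : ℝ) - 2))
    (hT : 0 < T) (hk : 0 < k)
    (u : Euc N → ℝ → ℝ) (u₀ : Euc N → ℝ) (f : Euc N → ℝ)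
    (hsol : IsFDESol N m T u u₀)
    (hf : Integrable f volume) (hfpos : ∀ x, 0 < f x) (hfrad : IsRadial f)
    (hupper : ∀ x, u₀ x ≤ Bb N m T k x 0)
    (hdiff : ∀ x, |u₀ x - Bb N m T k x 0| ≤ f x)
    (hAB : ∀ x : Euc N, ∀ t ∈ Set.Ioo (0:ℝ) T,
      deriv (fun s => u x s) t ≤ u x t / ((1 - m) * t)) :
    TendstoUniformly (fun τ (x : Euc N) => rescaleSol N m T u x τ)
      (BbTil N m k) atTop ∧
    (∀ x : Euc N, Tendsto (fun t => u x t) (nhdsWithin T (Set.Iio T)) (nhds 0)) := by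
  have h : Adm N m k := ⟨hN, hm0, hmu, hk⟩
  refine ⟨Metric.tendstoUniformly_iff.2 fun ε hε => ?_, fun x => ?_⟩
  · have hlim : Tendsto (fun τ => T - exp (-τ)) atTop (𝓝[<] T) := by
      refine tendsto_nhdsWithin_iff.2 ⟨?_, Eventually.of_forall fun τ =>
        Set.mem_Iio.2 (by linarith [exp_pos (-τ)])⟩
      have := (tendsto_exp_neg_atTop_nhds_zero).const_sub T
      rwa [sub_zero] at this
    filter_upwards [hlim.eventually (close h hT hsol hupper hf hdiff hAB hε)] with τ hτ y
    have := hτ y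
    rw [Real.dist_eq]
    have e1 : (exp (-τ) ^ betaC N m)⁻¹ = exp (betaC N m * τ) := by
      rw [← exp_mul, ← exp_neg]; congr 1; ring
    have e2 : exp (-τ) ^ (-aC N m) = exp (-gammaC N m * τ) := by
      rw [← exp_mul, h.gamma_eq]; congr 1; ring
    rw [sub_sub_cancel, e1, e2] at this
    exact this
  · have hβ : 0 < betaC N m := by
      have := h.a_pos; have := h.hN'; rw [h.beta_eq]; positivity
    have h1 : Tendsto (fun t => (Cst N m / k) ^ (1 / (1 - m)) * (T - t) ^ betaC N m) (𝓝[<] T)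
        (𝓝 0) := by
      have h2 : Tendsto (fun t => T - t) (𝓝 T) (𝓝 (T - T)) :=
        (continuous_const.sub continuous_id).tendsto T
      rw [sub_self] at h2
      have h3 := (h2.rpow_const (p := betaC N m) (Or.inr hβ.le)).const_mul
        ((Cst N m / k) ^ (1 / (1 - m)))
      rw [zero_rpow hβ.ne', mul_zero] at h3
      exact h3.mono_left nhdsWithin_le_nhds
    refine squeeze_zero' ?_ ?_ h1
    all_goals filter_upwards [Ioo_mem_nhdsLT hT] with t ht
    · exact (hsol.pos ht x).le
    · exact (comparison h hsol hupper ⟨ht.1.le, ht.2⟩ x).trans (h.B_le ht.2 x)
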